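/- arXiv:2006.09170 — 9 statements merged into one kernel-verified Lean document; each statement's English description precedes it below -/
import Mathlib

section
/- Positive real lemma: Let A ∈ ℝ^{n×n}, B ∈ ℝ^{n×m}, C ∈ ℝ^{m×n}, D ∈ ℝ^{m×m} be a minimal realization, i.e., the controllability matrix [B, AB, …, A^{n−1}B] has rank n and the observability matrix [Cᵀ, AᵀCᵀ, …, (Aᵀ)^{n−1}Cᵀ]ᵀ has rank n. Then the following are equivalent: (i) every eigenvalue λ ∈ ℂ of A satisfies Re λ ≤ 0, and for every λ ∈ ℂ with Re λ > 0 the matrix G(λ) + G(λ)ᴴ is positive semidefinite, where G(λ) := C(λI−A)⁻¹B + D (real matrices regarded as complex); (ii) there exists a symmetric positive definite P ∈ ℝ^{n×n} with W_{[A,B,C,D]}(P) ≤ 0. Moreover, if these hold, there exist symmetric positive definite matrices P_min and P_max solving W_{[A,B,C,D]}(P) ≤ 0 such that P_min ≤ P ≤ P_max (in the Loewner order) for every symmetric solution P of W_{[A,B,C,D]}(P) ≤ 0. -/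
/-!
The KYP inequality for a symmetric `P` says `sᵀP(As + Bv) ≤ vᵀ(Cs + Dv)` for all `s`, `v`
(`kyp_iff`): `xᵀPx` is a storage function for the supply rate `vᵀy`. Instead of differential
equations, the proof uses implicit-midpoint steps `x' - x = A(x' + x) + Bv` of cost
`vᵀ(C(x' + x) + Dv)`. Along them the dissipation inequality is exact, so the increment of `xᵀPx` is
at most the cost (`Steer.storage_le`), and conversely this property on single steps gives back the
KYP inequality. When `1 - A` is invertible such a step is the recursion with the Cayley transform
`(1 - A)⁻¹(1 + A)`, and controllability makes any state reachable from any other in `n` steps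
(`steer_total`).

*Extremal solutions.* If loops at the origin have nonnegative cost, the infimal cost of steering `x`
to `0` is finite and satisfies the parallelogram law, so it equals `-xᵀPx` for a symmetric `P`. By
the principle of optimality `P` solves the KYP inequality, and by `Steer.storage_le` it lies below
every other symmetric solution (`exists_minimal_storage`). Time reversal
`(A, B, P) ↦ (-A, -B, -P)` gives the maximal solution, whose quadratic form is the infimal cost of
reaching `x` from `0` (`exists_maximal_storage`).

*Definiteness.* The kernel of a solution is `A`-invariant and killed by `C`, hence trivial by
observability. So a positive semidefinite solution is positive definite, and a convexity argument
shows that one positive definite solution forces all symmetric solutions to be positive definite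
(`Diss.posDef_of_posDef`).

*From (ii) to (i).* The complexified dissipation inequality at `v = 0` bounds the eigenvalues, and at
`s = (λ - A)⁻¹Bu` it gives `Re uᴴG(λ)u ≥ Re λ · sᴴPs ≥ 0`.

*From (i) to (ii).* The maximal solution is positive semidefinite once every trajectory leaving the
origin has nonnegative cost (`cost_nonneg`). For `0 < r < 1` the trajectory is modified by a small
free motion so that `r^k x_k` becomes `M`-periodic. A discrete Fourier transform then writes the cost
with weights `r^{2k}` as an average of `Re Uᴴ G(λ) U` over points
`λ = (1 - ζ)/(1 + ζ)`, `|ζ| = r`, of the right half-plane, so it is nonnegative (`periodic_nonneg`).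
The eigenvalue condition makes `r^k` times the `k`-th power of the Cayley transform decay, so the
correction vanishes as `M → ∞`, and finally `r → 1`.
-/

open Matrix
open scoped ComplexOrder

/-- The KYP matrix `W_{[A,B,C,D]}(P)`. -/
noncomputable def KYP {N M : Type*} [Fintype N] [Fintype M]
    (A : Matrix N N ℝ) (B : Matrix N M ℝ) (C : Matrix M N ℝ) (D : Matrix M M ℝ)
    (P : Matrix N N ℝ) : Matrix (N ⊕ M) (N ⊕ M) ℝ :=
  fromBlocks (Aᵀ * P + P * A) (P * B - Cᵀ) (Bᵀ * P - C) (-D - Dᵀ)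

/-- The transfer function `G(λ) = C (λ I - A)⁻¹ B + D`, real matrices regarded as complex. -/
noncomputable def transferFn {n m : ℕ}
    (A : Matrix (Fin n) (Fin n) ℝ) (B : Matrix (Fin n) (Fin m) ℝ)
    (C : Matrix (Fin m) (Fin n) ℝ) (D : Matrix (Fin m) (Fin m) ℝ) (lam : ℂ) :
    Matrix (Fin m) (Fin m) ℂ :=
  C.map Complex.ofReal *
      (lam • (1 : Matrix (Fin n) (Fin n) ℂ) - A.map Complex.ofReal)⁻¹ *
      B.map Complex.ofReal +
    D.map Complex.ofReal

/-! ### The KYP inequality as a dissipation inequality along midpoint trajectories -/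

section Dissipation

/-- The quadratic-form version of the KYP inequality (`kyp_iff`): for symmetric `P` the storage
function `x ↦ xᵀPx` has derivative `2 sᵀP(As + Bv)` along `ẋ = Ax + Bv` at the state `s`, bounded by twice the supplied
power `vᵀ(Cs + Dv)`. -/
def Diss {n m : ℕ} (A : Matrix (Fin n) (Fin n) ℝ) (B : Matrix (Fin n) (Fin m) ℝ)
    (C : Matrix (Fin m) (Fin n) ℝ) (D : Matrix (Fin m) (Fin m) ℝ)
    (P : Matrix (Fin n) (Fin n) ℝ) : Prop :=
  ∀ (s : Fin n → ℝ) (v : Fin m → ℝ),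
    s ⬝ᵥ P *ᵥ (A *ᵥ s + B *ᵥ v) ≤ v ⬝ᵥ (C *ᵥ s + D *ᵥ v)

/-- `Steer A B C D N x z c`: the point `x` can be driven to `z` in `N` implicit-midpoint steps at
total cost `c`. A step from `x` to `x'` with input `v` satisfies `x' - x = A(x' + x) + Bv` and costs
`vᵀ(C(x' + x) + Dv)`; this is the midpoint rule of step size `2` up to rescaling the input.
The step relation is used instead of an explicit recursion so that no inverse of `1 - A` enters and
time reversal is immediate. -/
def Steer {n m : ℕ} (A : Matrix (Fin n) (Fin n) ℝ) (B : Matrix (Fin n) (Fin m) ℝ)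
    (C : Matrix (Fin m) (Fin n) ℝ) (D : Matrix (Fin m) (Fin m) ℝ) :
    ℕ → (Fin n → ℝ) → (Fin n → ℝ) → ℝ → Prop
  | 0, x, z, c => x = z ∧ c = 0
  | N + 1, x, z, c => ∃ (x' : Fin n → ℝ) (v : Fin m → ℝ) (c' : ℝ),
      x' - x = A *ᵥ (x' + x) + B *ᵥ v ∧ Steer A B C D N x' z c' ∧
      c = v ⬝ᵥ (C *ᵥ (x' + x) + D *ᵥ v) + c'

variable {n m : ℕ} {A : Matrix (Fin n) (Fin n) ℝ} {B : Matrix (Fin n) (Fin m) ℝ}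
  {C : Matrix (Fin m) (Fin n) ℝ} {D : Matrix (Fin m) (Fin m) ℝ}

lemma psd_iff {ι : Type*} [Fintype ι] {P : Matrix ι ι ℝ} (hP : Pᵀ = P) :
    P.PosSemidef ↔ ∀ x, 0 ≤ x ⬝ᵥ P *ᵥ x := by
  rw [posSemidef_iff_dotProduct_mulVec]
  simp [IsSymm, hP]

lemma sym_dot {ι : Type*} [Fintype ι] {P : Matrix ι ι ℝ} (hP : Pᵀ = P) (x y : ι → ℝ) :
    x ⬝ᵥ P *ᵥ y = y ⬝ᵥ P *ᵥ x := by
  rw [dotProduct_mulVec, ← mulVec_transpose, hP, dotProduct_comm]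

lemma kyp_iff {P : Matrix (Fin n) (Fin n) ℝ} (hP : Pᵀ = P) :
    (-(KYP A B C D P)).PosSemidef ↔ Diss A B C D P := by
  have hsym : (-(KYP A B C D P))ᵀ = -(KYP A B C D P) := by
    simp only [KYP, transpose_neg, fromBlocks_transpose, transpose_add, transpose_mul,
      transpose_transpose, hP, transpose_sub]
    congr 2
    · abel
    · abel
  rw [psd_iff hsym]
  have key : ∀ (s : Fin n → ℝ) (v : Fin m → ℝ),
      Sum.elim s v ⬝ᵥ (-(KYP A B C D P)) *ᵥ Sum.elim s v =
        2 * (v ⬝ᵥ (C *ᵥ s + D *ᵥ v) - s ⬝ᵥ P *ᵥ (A *ᵥ s + B *ᵥ v)) := by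
    intro s v
    have h1 : s ⬝ᵥ Aᵀ *ᵥ (P *ᵥ s) = s ⬝ᵥ P *ᵥ (A *ᵥ s) := by
      rw [sym_dot hP s, dotProduct_mulVec s, vecMul_transpose]
    have h2 : v ⬝ᵥ Bᵀ *ᵥ (P *ᵥ s) = s ⬝ᵥ P *ᵥ (B *ᵥ v) := by
      rw [sym_dot hP s, dotProduct_mulVec v, vecMul_transpose]
    have h3 : s ⬝ᵥ Cᵀ *ᵥ v = v ⬝ᵥ C *ᵥ s := by
      rw [dotProduct_mulVec s, vecMul_transpose, dotProduct_comm]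
    have h4 : v ⬝ᵥ Dᵀ *ᵥ v = v ⬝ᵥ D *ᵥ v := by
      rw [dotProduct_mulVec v, vecMul_transpose, dotProduct_comm]
    rw [neg_mulVec, KYP, fromBlocks_mulVec, dotProduct_neg, sumElim_dotProduct_sumElim]
    simp only [Sum.elim_comp_inl, Sum.elim_comp_inr, add_mulVec, sub_mulVec, neg_mulVec,
      ← mulVec_mulVec, dotProduct_add, dotProduct_sub, dotProduct_neg, mulVec_add, h1, h2, h3, h4]
    ring
  constructor
  · intro h s v
    have := h (Sum.elim s v)
    rw [key] at this
    linarith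
  · intro h z
    have h1 := h (z ∘ Sum.inl) (z ∘ Sum.inr)
    have h2 := key (z ∘ Sum.inl) (z ∘ Sum.inr)
    rw [Sum.elim_comp_inl_inr] at h2
    rw [h2]
    linarith

/-- The increment of a storage function along a trajectory is at most its cost: since
`x'ᵀPx' - xᵀPx = (x' + x)ᵀP(x' - x)`, each midpoint step obeys the dissipation inequality exactly,
without discretization error. -/
lemma Steer.storage_le {P : Matrix (Fin n) (Fin n) ℝ} (hP : Pᵀ = P) (hd : Diss A B C D P)
    {N : ℕ} : ∀ {x z : Fin n → ℝ} {c : ℝ}, Steer A B C D N x z c →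
      z ⬝ᵥ P *ᵥ z - x ⬝ᵥ P *ᵥ x ≤ c := by
  induction N with
  | zero => rintro x z c ⟨rfl, rfl⟩; simp
  | succ N ih =>
    rintro x z c ⟨x', v, c', hx, hs, rfl⟩
    have h1 := ih hs
    have h2 := hd (x' + x) v
    rw [← hx] at h2
    simp only [mulVec_sub, dotProduct_sub, add_dotProduct] at h2
    rw [sym_dot hP x x'] at h2
    linarith

lemma Steer.step {x z : Fin n → ℝ} {v : Fin m → ℝ} (h : z - x = A *ᵥ (z + x) + B *ᵥ v) :
    Steer A B C D 1 x z (v ⬝ᵥ (C *ᵥ (z + x) + D *ᵥ v)) :=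
  ⟨z, v, 0, h, ⟨rfl, rfl⟩, by simp⟩

lemma Steer.trans {N M : ℕ} : ∀ {x y z : Fin n → ℝ} {c d : ℝ}, Steer A B C D N x y c →
    Steer A B C D M y z d → Steer A B C D (N + M) x z (c + d) := by
  induction N with
  | zero => rintro x y z c d ⟨rfl, rfl⟩ h; simpa using h
  | succ N ih =>
    rintro x y z c d ⟨x', v, c', hx, hs, rfl⟩ h
    rw [Nat.add_right_comm]
    exact ⟨x', v, _, hx, ih hs h, by ring⟩

lemma Steer.zero (N : ℕ) : Steer A B C D N 0 0 0 := by
  induction N with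
  | zero => exact ⟨rfl, rfl⟩
  | succ N ih => exact ⟨0, 0, 0, by simp, ih, by simp⟩

lemma Steer.pad {N M : ℕ} {x : Fin n → ℝ} {c : ℝ} (h : Steer A B C D N x 0 c) :
    Steer A B C D (N + M) x 0 c := by
  simpa using h.trans (Steer.zero M)

/-- Trajectories superpose, and along the pencil `t • (first) + (second)` the cost is a quadratic
polynomial in `t` with leading coefficient `c` and constant term `d`. -/
lemma Steer.comb {N : ℕ} : ∀ {x z y w : Fin n → ℝ} {c d : ℝ}, Steer A B C D N x z c →
    Steer A B C D N y w d →
    ∃ e : ℝ, ∀ t : ℝ, Steer A B C D N (t • x + y) (t • z + w) (t ^ 2 * c + t * e + d) := by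
  induction N with
  | zero =>
    rintro x z y w c d ⟨rfl, rfl⟩ ⟨rfl, rfl⟩
    exact ⟨0, fun t => ⟨rfl, by ring⟩⟩
  | succ N ih =>
    rintro x z y w c d ⟨x', v, c', hx, hs, rfl⟩ ⟨y', u, d', hy, hs', rfl⟩
    obtain ⟨e, he⟩ := ih hs hs'
    refine ⟨v ⬝ᵥ (C *ᵥ (y' + y) + D *ᵥ u) + u ⬝ᵥ (C *ᵥ (x' + x) + D *ᵥ v) + e, fun t =>
      ⟨t • x' + y', t • v + u, _, ?_, he t, ?_⟩⟩
    · have e1 : t • x' + y' - (t • x + y) = t • (x' - x) + (y' - y) := by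
        rw [smul_sub]; abel
      have e2 : t • x' + y' + (t • x + y) = t • (x' + x) + (y' + y) := by
        rw [smul_add]; abel
      rw [e1, e2, hx, hy]
      simp only [mulVec_add, mulVec_smul, smul_add]
      abel
    · have e2 : t • x' + y' + (t • x + y) = t • (x' + x) + (y' + y) := by
        rw [smul_add]; abel
      rw [e2]
      simp only [mulVec_add, mulVec_smul, smul_add, dotProduct_add, add_dotProduct,
        dotProduct_smul, smul_dotProduct, smul_eq_mul]
      ring

lemma Steer.smul {N : ℕ} (t : ℝ) : ∀ {x z : Fin n → ℝ} {c : ℝ}, Steer A B C D N x z c →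
    Steer A B C D N (t • x) (t • z) (t ^ 2 * c) := by
  induction N with
  | zero => rintro x z c ⟨rfl, rfl⟩; exact ⟨rfl, by ring⟩
  | succ N ih =>
    rintro x z c ⟨x', v, c', hx, hs, rfl⟩
    refine ⟨t • x', t • v, _, ?_, ih hs, ?_⟩
    · rw [← smul_sub, ← smul_add, hx, mulVec_smul, mulVec_smul, smul_add]
    · rw [← smul_add]
      simp only [mulVec_smul, ← smul_add, dotProduct_smul, smul_dotProduct, smul_eq_mul]
      ring

/-- Time reversal turns a trajectory of `(A, B, C, D)` into one of `(-A, -B, C, D)` with the same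
cost. -/
lemma Steer.reverse {N : ℕ} : ∀ {x z : Fin n → ℝ} {c : ℝ}, Steer A B C D N x z c →
    Steer (-A) (-B) C D N z x c := by
  induction N with
  | zero => rintro x z c ⟨rfl, rfl⟩; exact ⟨rfl, rfl⟩
  | succ N ih =>
    rintro x z c ⟨x', v, c', hx, hs, rfl⟩
    have h1 : x - x' = (-A) *ᵥ (x + x') + (-B) *ᵥ v := by
      rw [← neg_sub, hx, neg_mulVec, neg_mulVec, neg_add, add_comm x x']
    have := (ih hs).trans (Steer.step (C := C) (D := D) h1)
    rw [add_comm x x', add_comm c'] at this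
    exact this

lemma Diss.neg_iff {P : Matrix (Fin n) (Fin n) ℝ} :
    Diss (-A) (-B) C D P ↔ Diss A B C D (-P) := by
  simp only [Diss, neg_mulVec, mulVec_add, mulVec_neg]

end Dissipation

/-! ### The optimal cost of steering to the origin is a quadratic form -/

section Quadratic

variable {n m : ℕ} {A : Matrix (Fin n) (Fin n) ℝ} {B : Matrix (Fin n) (Fin m) ℝ}
  {C : Matrix (Fin m) (Fin n) ℝ} {D : Matrix (Fin m) (Fin m) ℝ}

/-- Jordan–von Neumann for real-valued functions that may change sign: the parallelogram law makes
the polarization additive, and local boundedness on lines upgrades additivity to linearity. -/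
lemma exists_matrix_of_parallelogram (f : (Fin n → ℝ) → ℝ)
    (hpar : ∀ x y, f (x + y) + f (x - y) = 2 * f x + 2 * f y)
    (hbd : ∀ x y, ∃ K : ℝ, ∀ t : ℝ, |t| ≤ 1 → |f (t • x + y)| ≤ K) :
    ∃ P : Matrix (Fin n) (Fin n) ℝ, Pᵀ = P ∧ ∀ x, x ⬝ᵥ P *ᵥ x = f x := by
  have f0 : f 0 = 0 := by have := hpar 0 0; simp at this; linarith
  have fneg : ∀ x, f (-x) = f x := by
    intro x; have := hpar 0 x; simp [f0] at this; linarith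
  set b : (Fin n → ℝ) → (Fin n → ℝ) → ℝ := fun x y => (f (x + y) - f (x - y)) / 4 with hb
  have bsymm : ∀ x y, b x y = b y x := by
    intro x y
    simp only [hb]
    rw [add_comm x y, ← fneg (x - y), neg_sub]
  have bself : ∀ x, b x x = f x := by
    intro x
    have := hpar x x
    simp only [sub_self, f0] at this
    simp only [hb, sub_self, f0]
    linarith
  have b0 : ∀ y, b 0 y = 0 := by
    intro y; simp [hb, fneg]
  have bmid : ∀ u w y, b (u + w) y + b (u - w) y = 2 * b u y := by
    intro u w y
    have h1 := hpar (u + y) w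
    have h2 := hpar (u - y) w
    have e1 : u + w + y = u + y + w := by abel
    have e2 : u + w - y = u - y + w := by abel
    have e3 : u - w + y = u + y - w := by abel
    have e4 : u - w - y = u - y - w := by abel
    simp only [hb, e1, e2, e3, e4]
    linarith
  have badd : ∀ x x' y, b (x + x') y = b x y + b x' y := by
    intro x x' y
    have h1 := bmid ((1 / 2 : ℝ) • (x + x')) ((1 / 2 : ℝ) • (x - x')) y
    have h2 := bmid ((1 / 2 : ℝ) • (x + x')) ((1 / 2 : ℝ) • (x + x')) y
    have e1 : (1 / 2 : ℝ) • (x + x') + (1 / 2 : ℝ) • (x - x') = x := by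
      ext i; simp; ring
    have e2 : (1 / 2 : ℝ) • (x + x') - (1 / 2 : ℝ) • (x - x') = x' := by
      ext i; simp; ring
    have e3 : (1 / 2 : ℝ) • (x + x') + (1 / 2 : ℝ) • (x + x') = x + x' := by
      ext i; simp; ring
    rw [e1, e2] at h1
    rw [e3, sub_self, b0] at h2
    linarith
  have bsmul : ∀ (t : ℝ) x y, b (t • x) y = t * b x y := by
    intro t x y
    let φ : ℝ →+ ℝ := AddMonoidHom.mk' (fun t => b (t • x) y) (by
      intro s t; simp only [add_smul, badd])
    have hφ : Continuous φ := by
      obtain ⟨K, hK⟩ := hbd x y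
      obtain ⟨L, hL⟩ := hbd x (-y)
      refine φ.continuous_of_isBounded_nhds_zero (Metric.closedBall_mem_nhds 0 one_pos) ?_
      refine isBounded_iff_forall_norm_le.2 ⟨(K + L) / 4, ?_⟩
      rintro _ ⟨s, hs, rfl⟩
      have hs' : |s| ≤ 1 := by simpa using hs
      have h1 := hK s hs'
      have h2 := hL s hs'
      rw [← sub_eq_add_neg] at h2
      change |(f (s • x + y) - f (s • x - y)) / 4| ≤ _
      rw [abs_le] at *
      constructor <;> linarith [h1.1, h1.2, h2.1, h2.2]
    have := (φ.toRealLinearMap hφ).map_smul t 1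
    simpa [φ] using this
  let L : (Fin n → ℝ) →ₗ[ℝ] (Fin n → ℝ) →ₗ[ℝ] ℝ := LinearMap.mk₂ ℝ b badd bsmul
    (fun x y y' => by rw [bsymm, badd, bsymm y, bsymm y'])
    (fun t x y => by rw [bsymm, bsmul, bsymm y, smul_eq_mul])
  refine ⟨LinearMap.toMatrix₂' ℝ L, ?_, fun x => ?_⟩
  · ext i j
    simp only [transpose_apply, LinearMap.toMatrix₂'_apply, L, LinearMap.mk₂_apply]
    exact bsymm _ _
  · rw [← bself x, ← toLinearMap₂'_apply', Matrix.toLinearMap₂'_toMatrix']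
    rfl

/-- If all states are mutually reachable in `N` steps and loops at the origin have nonnegative
cost, then the infimal cost of steering `x` to `0` is `-xᵀPx` for a symmetric solution `P` of the
dissipation inequality. Since every solution satisfies `-xᵀP'x ≤ c` on such trajectories, this `P`
is the smallest one. -/
lemma exists_minimal_storage {N : ℕ} (hst : ∀ x z, ∃ c, Steer A B C D N x z c)
    (hpos : ∀ N c, Steer A B C D N 0 0 c → 0 ≤ c) :
    ∃ P : Matrix (Fin n) (Fin n) ℝ, Pᵀ = P ∧ Diss A B C D P ∧
      ∀ x, IsGLB {c | ∃ M, Steer A B C D M x 0 c} (-(x ⬝ᵥ P *ᵥ x)) := by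
  set S : (Fin n → ℝ) → Set ℝ := fun x => {c | ∃ M, Steer A B C D M x 0 c} with hS
  have hne : ∀ x, (S x).Nonempty := fun x => by
    obtain ⟨c, hc⟩ := hst x 0
    exact ⟨c, N, hc⟩
  have hlow : ∀ {x c d M}, Steer A B C D M 0 x d → c ∈ S x → -d ≤ c := by
    rintro x c d M hd ⟨K, hc⟩
    have := hpos _ _ (hd.trans hc)
    linarith
  have hbdd : ∀ x, BddBelow (S x) := fun x => by
    obtain ⟨d, hd⟩ := hst 0 x
    exact ⟨-d, fun c hc => hlow hd hc⟩
  set I : (Fin n → ℝ) → ℝ := fun x => sInf (S x) with hI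
  have hglb : ∀ x, IsGLB (S x) (I x) := fun x => isGLB_csInf (hne x) (hbdd x)
  -- Superposing two trajectories with signs `±1`: the cross terms `e` cancel in the sum of the
  -- costs, which gives one half of the parallelogram law.
  have hcomb : ∀ {x y c d}, c ∈ S x → d ∈ S y → ∃ e, c + e + d ∈ S (x + y) ∧
      c - e + d ∈ S (y - x) := by
    rintro x y c d ⟨M, hc⟩ ⟨K, hd⟩
    have hc' := hc.pad (M := K)
    have hd' := hd.pad (M := M)
    rw [add_comm K M] at hd'
    obtain ⟨e, he⟩ := hc'.comb hd'
    refine ⟨e, ⟨M + K, ?_⟩, ⟨M + K, ?_⟩⟩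
    · simpa using he 1
    · have := he (-1)
      have e1 : (-1 : ℝ) • x + y = y - x := by rw [neg_one_smul]; abel
      rw [e1] at this
      convert this using 1
      · simp
      · ring
  have hle : ∀ x y, I (y + x) + I (y - x) ≤ 2 * I y + 2 * I x := by
    intro x y
    refine le_of_forall_pos_le_add fun ε hε => ?_
    obtain ⟨c, hc, -, hc2⟩ := (hglb x).exists_between (lt_add_of_pos_right _ (by positivity : 0 < ε / 4))
    obtain ⟨d, hd, -, hd2⟩ := (hglb y).exists_between (lt_add_of_pos_right _ (by positivity : 0 < ε / 4))
    obtain ⟨e, h1, h2⟩ := hcomb hc hd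
    have h3 := (hglb _).1 h1
    have h4 := (hglb _).1 h2
    rw [add_comm x y] at h3
    linarith
  have hscale : ∀ x, 4 * I x ≤ I ((2 : ℝ) • x) := by
    intro x
    refine (hglb _).2 ?_
    rintro c ⟨M, hc⟩
    have h1 := hc.smul (1 / 2 : ℝ)
    rw [smul_smul, smul_zero] at h1
    norm_num at h1
    have := (hglb x).1 ⟨M, h1⟩
    linarith
  have hpar : ∀ x y, I (x + y) + I (x - y) = 2 * I x + 2 * I y := by
    intro x y
    refine le_antisymm (hle y x) ?_
    have h := hle (x - y) (x + y)
    have e1 : x + y + (x - y) = (2 : ℝ) • x := by rw [two_smul]; abel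
    have e2 : x + y - (x - y) = (2 : ℝ) • y := by rw [two_smul]; abel
    rw [e1, e2] at h
    linarith [hscale x, hscale y]
  have hbound : ∀ x y, ∃ K : ℝ, ∀ t : ℝ, |t| ≤ 1 → |I (t • x + y)| ≤ K := by
    intro x y
    obtain ⟨c, hc⟩ := hst x 0
    obtain ⟨d, hd⟩ := hst y 0
    obtain ⟨e, he⟩ := hc.comb hd
    obtain ⟨c', hc'⟩ := hst 0 x
    obtain ⟨d', hd'⟩ := hst 0 y
    obtain ⟨e', he'⟩ := hc'.comb hd'
    have key : ∀ (a b g t : ℝ), |t| ≤ 1 → t ^ 2 * a + t * b + g ≤ |a| + |b| + |g| := by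
      intro a b g t ht
      have h1 : t ^ 2 * a ≤ |a| := by
        refine (le_abs_self _).trans ?_
        rw [abs_mul, abs_pow]
        exact mul_le_of_le_one_left (abs_nonneg _) (pow_le_one₀ (abs_nonneg _) ht)
      have h2 : t * b ≤ |b| := by
        refine (le_abs_self _).trans ?_
        rw [abs_mul]
        exact mul_le_of_le_one_left (abs_nonneg _) ht
      linarith [le_abs_self g]
    refine ⟨max (|c| + |e| + |d|) (|c'| + |e'| + |d'|), fun t ht => abs_le'.2 ⟨?_, ?_⟩⟩
    · refine le_max_of_le_left (le_trans ((hglb _).1 ⟨N, ?_⟩) (key c e d t ht))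
      simpa using he t
    · refine le_max_of_le_right (le_trans ?_ (key c' e' d' t ht))
      have h1 : Steer A B C D N 0 (t • x + y) (t ^ 2 * c' + t * e' + d') := by
        simpa using he' t
      have h2 := (hglb (t • x + y)).2 (fun z hz => hlow h1 hz)
      linarith
  obtain ⟨Q, hQ, hQI⟩ := exists_matrix_of_parallelogram I hpar hbound
  have hval : ∀ x, x ⬝ᵥ (-Q) *ᵥ x = - I x := fun x => by
    rw [neg_mulVec, dotProduct_neg, hQI]
  refine ⟨-Q, by rw [transpose_neg, hQ], ?_, fun x => ?_⟩
  · intro s v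
    have hQ' : (-Q)ᵀ = -Q := by rw [transpose_neg, hQ]
    -- The midpoint step with `x' + x = s` and `x' - x = As + Bv` exists for every pair `(s, v)`, so
    -- the principle of optimality along it is the dissipation inequality at `(s, v)`.
    set d := A *ᵥ s + B *ᵥ v with hd
    set x' : Fin n → ℝ := (1 / 2 : ℝ) • (s + d) with hx'
    set x : Fin n → ℝ := (1 / 2 : ℝ) • (s - d) with hx
    have e1 : x' + x = s := by ext i; simp [hx, hx']; ring
    have e2 : x' - x = d := by ext i; simp [hx, hx']; ring
    have hstep : Steer A B C D 1 x x' (v ⬝ᵥ (C *ᵥ (x' + x) + D *ᵥ v)) :=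
      Steer.step (by rw [e1, e2])
    rw [e1] at hstep
    have h1 : I x - v ⬝ᵥ (C *ᵥ s + D *ᵥ v) ≤ I x' := by
      refine (hglb x').2 ?_
      rintro c ⟨M, hc⟩
      have := (hglb x).1 ⟨_, hstep.trans hc⟩
      linarith
    have h2 := hval x
    have h3 := hval x'
    have h4 : s ⬝ᵥ (-Q) *ᵥ d = x' ⬝ᵥ (-Q) *ᵥ x' - x ⬝ᵥ (-Q) *ᵥ x := by
      rw [← e1, ← e2]
      simp only [mulVec_sub, dotProduct_sub, add_dotProduct]
      rw [sym_dot hQ' x x']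
      ring
    rw [h4]
    linarith
  · rw [hval, neg_neg]
    exact hglb x

end Quadratic

/-! ### The Cayley transform and reachability -/

section Reachability

variable {n m : ℕ} {A : Matrix (Fin n) (Fin n) ℝ} {B : Matrix (Fin n) (Fin m) ℝ}
  {C : Matrix (Fin m) (Fin n) ℝ} {D : Matrix (Fin m) (Fin m) ℝ}

/-- The Cayley transform `(1 - A)⁻¹(1 + A)`, the state map of one midpoint step when `1 - A` is
invertible. -/
noncomputable def cayleyA (A : Matrix (Fin n) (Fin n) ℝ) : Matrix (Fin n) (Fin n) ℝ :=
  (1 - A)⁻¹ * (1 + A)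

/-- The input map `(1 - A)⁻¹B` of one midpoint step. -/
noncomputable def cayleyB (A : Matrix (Fin n) (Fin n) ℝ) (B : Matrix (Fin n) (Fin m) ℝ) :
    Matrix (Fin n) (Fin m) ℝ :=
  (1 - A)⁻¹ * B

lemma cayley_step (hA : IsUnit (1 - A).det) (x z : Fin n → ℝ) (v : Fin m → ℝ) :
    z - x = A *ᵥ (z + x) + B *ᵥ v ↔ z = cayleyA A *ᵥ x + cayleyB A B *ᵥ v := by
  have h1 : (1 - A) *ᵥ (cayleyA A *ᵥ x + cayleyB A B *ᵥ v) = x + A *ᵥ x + B *ᵥ v := by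
    rw [mulVec_add, mulVec_mulVec, mulVec_mulVec, cayleyA, cayleyB, mul_nonsing_inv_cancel_left _ _ hA,
      mul_nonsing_inv_cancel_left _ _ hA, add_mulVec, one_mulVec]
  have h2 : z - x = A *ᵥ (z + x) + B *ᵥ v ↔ (1 - A) *ᵥ z = x + A *ᵥ x + B *ᵥ v := by
    rw [sub_mulVec, one_mulVec, mulVec_add]
    constructor
    · intro h; linear_combination h
    · intro h; linear_combination h
  rw [h2, ← h1]
  exact (mulVec_injective_iff_isUnit.2 ((isUnit_iff_isUnit_det _).2 hA)).eq_iff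

lemma steer_explicit (hA : IsUnit (1 - A).det) (x : Fin n → ℝ) (N : ℕ) :
    ∀ w : ℕ → Fin m → ℝ, ∃ c, Steer A B C D N x
      (cayleyA A ^ N *ᵥ x + ∑ k ∈ Finset.range N, (cayleyA A ^ k * cayleyB A B) *ᵥ w k) c := by
  induction N with
  | zero => intro w; exact ⟨0, by simp [Steer]⟩
  | succ N ih =>
    intro w
    obtain ⟨c, hc⟩ := ih (fun k => w (k + 1))
    refine ⟨_, hc.trans (Steer.step (v := w 0) ?_)⟩
    rw [cayley_step hA, Finset.sum_range_succ', mulVec_add, mulVec_mulVec, ← pow_succ',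
      mulVec_sum]
    simp only [pow_zero, Matrix.one_mul, mulVec_mulVec, ← Matrix.mul_assoc, ← pow_succ']
    abel

/-- Controllability passes from `(A, B)` to its Cayley transform. -/
lemma cayley_controllable (hA : IsUnit (1 - A).det)
    (hctrb : ∀ v : Fin n → ℝ, (∀ k : ℕ, k < n → vecMul v (A ^ k * B) = 0) → v = 0)
    (v : Fin n → ℝ) (hv : ∀ k : ℕ, k < n → vecMul v (cayleyA A ^ k * cayleyB A B) = 0) :
    v = 0 := by
  rcases Nat.eq_zero_or_pos n with rfl | hn
  · exact Subsingleton.elim _ _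
  -- By Cayley–Hamilton the vanishing for exponents below `n` extends to all exponents.
  have hall : ∀ k, v ᵥ* (cayleyA A ^ k * cayleyB A B) = 0 := by
    intro k
    rw [pow_eq_aeval_mod_charpoly, Polynomial.aeval_eq_sum_range' (n := n)]
    · rw [Matrix.sum_mul, vecMul_sum]
      refine Finset.sum_eq_zero fun i hi => ?_
      rw [Matrix.smul_mul, vecMul_smul, hv i (Finset.mem_range.1 hi), smul_zero]
    · have hdeg : (cayleyA A).charpoly.natDegree = n := by
        rw [charpoly_natDegree_eq_dim, Fintype.card_fin]
      have := Polynomial.natDegree_modByMonic_lt (Polynomial.X ^ k)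
        (charpoly_monic (cayleyA A)) (fun h => by rw [h] at hdeg; simp at hdeg; omega)
      rwa [hdeg] at this
  -- `K` is stable under `(1 - A)⁻¹ = (cayleyA A + 1) / 2`; an injective endomorphism of a
  -- finite-dimensional space is onto, so `K` is also stable under `1 - A`, hence under `A`.
  let K : Submodule ℝ (Fin n → ℝ) :=
    { carrier := {v | ∀ k, v ᵥ* (cayleyA A ^ k * cayleyB A B) = 0}
      add_mem' := fun ha hb k => by rw [add_vecMul, ha k, hb k, add_zero]
      zero_mem' := fun k => zero_vecMul _
      smul_mem' := fun t a ha k => by rw [smul_vecMul, ha k, smul_zero] }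
  have hR : cayleyA A = (2 : ℝ) • (1 - A)⁻¹ - 1 := by
    rw [cayleyA, show (1 : Matrix (Fin n) (Fin n) ℝ) + A = (2 : ℝ) • 1 - (1 - A) by
      rw [two_smul]; abel, mul_sub, nonsing_inv_mul _ hA, mul_smul_comm, mul_one]
  have hKA : ∀ u ∈ K, u ᵥ* cayleyA A ∈ K := fun u hu k => by
    rw [vecMul_vecMul, ← Matrix.mul_assoc, ← pow_succ']
    exact hu (k + 1)
  have hKR : ∀ u ∈ K, u ᵥ* (1 - A)⁻¹ ∈ K := fun u hu => by
    have h1 : u ᵥ* (1 - A)⁻¹ = (1 / 2 : ℝ) • (u ᵥ* cayleyA A + u) := by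
      rw [hR, vecMul_sub, vecMul_one, vecMul_smul, sub_add_cancel, smul_smul]
      norm_num
    rw [h1]
    exact K.smul_mem _ (K.add_mem (hKA u hu) hu)
  let T : K →ₗ[ℝ] K := ((1 - A)⁻¹.vecMulLinear).restrict hKR
  have hTi : Function.Injective T := by
    intro a b hab
    have h1 : (a : Fin n → ℝ) ᵥ* (1 - A)⁻¹ = b ᵥ* (1 - A)⁻¹ := congrArg Subtype.val hab
    have h2 := congrArg (fun u => u ᵥ* (1 - A)) h1
    simp only [vecMul_vecMul, nonsing_inv_mul _ hA, vecMul_one] at h2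
    exact Subtype.ext h2
  have hTs : Function.Surjective T := LinearMap.surjective_of_injective hTi
  have hK1 : ∀ u ∈ K, u ᵥ* (1 - A) ∈ K ∧ u ᵥ* B = 0 := fun u hu => by
    obtain ⟨⟨a, ha⟩, hau⟩ := hTs ⟨u, hu⟩
    have h1 : a ᵥ* (1 - A)⁻¹ = u := congrArg Subtype.val hau
    rw [← h1, vecMul_vecMul, nonsing_inv_mul _ hA, vecMul_one]
    refine ⟨ha, ?_⟩
    have := ha 0
    rwa [pow_zero, Matrix.one_mul, cayleyB, ← vecMul_vecMul] at this
  have hKA' : ∀ k : ℕ, ∀ u ∈ K, u ᵥ* (A ^ k * B) = 0 := by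
    intro k
    induction k with
    | zero => intro u hu; rw [pow_zero, Matrix.one_mul]; exact (hK1 u hu).2
    | succ k ih =>
      intro u hu
      rw [pow_succ', Matrix.mul_assoc, ← vecMul_vecMul]
      refine ih _ ?_
      have := K.sub_mem hu (hK1 u hu).1
      rwa [vecMul_sub, vecMul_one, sub_sub_cancel] at this
  exact hctrb v fun k _ => hKA' k v hall

/-- For a controllable pair, any state reaches any other in `n` midpoint steps. -/
lemma steer_total (hA : IsUnit (1 - A).det)
    (hctrb : ∀ v : Fin n → ℝ, (∀ k : ℕ, k < n → vecMul v (A ^ k * B) = 0) → v = 0)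
    (x z : Fin n → ℝ) : ∃ c, Steer A B C D n x z c := by
  let Φ : (Fin n → Fin m → ℝ) →ₗ[ℝ] (Fin n → ℝ) :=
    ∑ k : Fin n, (cayleyA A ^ (k : ℕ) * cayleyB A B).mulVecLin ∘ₗ LinearMap.proj k
  have hΦ : LinearMap.range Φ = ⊤ := by
    by_contra hne
    obtain ⟨f, hf0, hf⟩ := Submodule.exists_le_ker_of_lt_top _ (lt_top_iff_ne_top.2 hne)
    apply hf0
    obtain ⟨v, rfl⟩ := (dotProductEquiv ℝ (Fin n)).surjective f
    rw [map_eq_zero_iff _ (dotProductEquiv ℝ (Fin n)).injective]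
    refine cayley_controllable hA hctrb v fun k hk => ?_
    ext i
    have := hf ⟨Pi.single (⟨k, hk⟩ : Fin n) (Pi.single i 1), rfl⟩
    simp only [LinearMap.mem_ker, dotProductEquiv_apply_apply, Φ, LinearMap.sum_apply,
      LinearMap.comp_apply, LinearMap.proj_apply, mulVecLin_apply] at this
    rw [Finset.sum_eq_single (⟨k, hk⟩ : Fin n)
      (fun b _ hb => by rw [Pi.single_eq_of_ne hb, mulVec_zero]) (by simp),
      Pi.single_eq_same, dotProduct_mulVec, dotProduct_single, mul_one] at this
    exact this
  have : z - cayleyA A ^ n *ᵥ x ∈ LinearMap.range Φ := hΦ ▸ Submodule.mem_top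
  obtain ⟨w, hw⟩ := this
  obtain ⟨c, hc⟩ := steer_explicit (C := C) (D := D) (B := B) hA x n
    (fun k => if h : k < n then w ⟨k, h⟩ else 0)
  rw [Finset.sum_range] at hc
  simp only [Fin.is_lt, dite_true, Fin.eta] at hc
  have hw' : ∑ k : Fin n, (cayleyA A ^ (k : ℕ) * cayleyB A B) *ᵥ w k
      = z - cayleyA A ^ n *ᵥ x := by
    rw [← hw]; simp [Φ]
  rw [hw', add_sub_cancel] at hc
  exact ⟨c, hc⟩

end Reachability

/-! ### Definiteness of solutions from observability -/

section Positivity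

variable {n m : ℕ} {A : Matrix (Fin n) (Fin n) ℝ} {B : Matrix (Fin n) (Fin m) ℝ}
  {C : Matrix (Fin m) (Fin n) ℝ} {D : Matrix (Fin m) (Fin m) ℝ}

/-- The kernel of a solution is `A`-invariant and contained in the kernel of `C`. In the
dissipation inequality at `(t • x + s, v)` with `Px = 0` only the terms linear in `t` vary, so
their coefficient vanishes. -/
lemma Diss.mulVec_eq_zero {P : Matrix (Fin n) (Fin n) ℝ} (hP : Pᵀ = P) (hd : Diss A B C D P)
    {x : Fin n → ℝ} (hx : P *ᵥ x = 0) : P *ᵥ (A *ᵥ x) = 0 ∧ C *ᵥ x = 0 := by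
  have key : ∀ (s : Fin n → ℝ) (v : Fin m → ℝ), s ⬝ᵥ P *ᵥ (A *ᵥ x) = v ⬝ᵥ C *ᵥ x := by
    intro s v
    have hlin : ∀ t : ℝ, t * (s ⬝ᵥ P *ᵥ (A *ᵥ x) - v ⬝ᵥ C *ᵥ x) ≤
        v ⬝ᵥ (C *ᵥ s + D *ᵥ v) - s ⬝ᵥ P *ᵥ (A *ᵥ s + B *ᵥ v) := by
      intro t
      have h1 := hd (t • x + s) v
      rw [add_dotProduct, sym_dot hP (t • x), mulVec_smul P, hx, smul_zero, dotProduct_zero,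
        zero_add] at h1
      simp only [mulVec_add, mulVec_smul, dotProduct_add, dotProduct_smul, smul_eq_mul] at h1 ⊢
      linarith
    by_contra hne
    have hne' := sub_ne_zero.2 hne
    have h1 := hlin ((v ⬝ᵥ (C *ᵥ s + D *ᵥ v) - s ⬝ᵥ P *ᵥ (A *ᵥ s + B *ᵥ v) + 1) /
      (s ⬝ᵥ P *ᵥ (A *ᵥ x) - v ⬝ᵥ C *ᵥ x))
    rw [div_mul_cancel₀ _ hne'] at h1
    linarith
  constructor
  · have := key (P *ᵥ (A *ᵥ x)) 0
    rw [zero_dotProduct] at this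
    exact dotProduct_self_eq_zero.1 this
  · have := key 0 (C *ᵥ x)
    rw [zero_dotProduct] at this
    exact dotProduct_self_eq_zero.1 this.symm

/-- Under observability every symmetric solution is nonsingular. -/
lemma Diss.ker_trivial {P : Matrix (Fin n) (Fin n) ℝ} (hP : Pᵀ = P) (hd : Diss A B C D P)
    (hobsv : ∀ x : Fin n → ℝ, (∀ k : ℕ, k < n → (C * A ^ k).mulVec x = 0) → x = 0)
    {x : Fin n → ℝ} (hx : P *ᵥ x = 0) : x = 0 := by
  have h : ∀ k : ℕ, P *ᵥ (A ^ k *ᵥ x) = 0 := by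
    intro k
    induction k with
    | zero => simpa using hx
    | succ k ih =>
      have := (hd.mulVec_eq_zero hP ih).1
      rwa [mulVec_mulVec _ A, ← pow_succ'] at this
  refine hobsv x fun k _ => ?_
  rw [← mulVec_mulVec]
  exact (hd.mulVec_eq_zero hP (h k)).2

lemma psd_mulVec_eq_zero {P : Matrix (Fin n) (Fin n) ℝ} (hP : P.PosSemidef)
    {x : Fin n → ℝ} (hx : x ⬝ᵥ P *ᵥ x = 0) : P *ᵥ x = 0 :=
  (hP.dotProduct_mulVec_zero_iff x).1 (by simpa using hx)

lemma transpose_of_isHermitian {P : Matrix (Fin n) (Fin n) ℝ} (hP : P.IsHermitian) : Pᵀ = P := by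
  rwa [IsHermitian, conjTranspose_eq_transpose_of_trivial] at hP

lemma posDef_iff_real {P : Matrix (Fin n) (Fin n) ℝ} (hP : Pᵀ = P) :
    P.PosDef ↔ ∀ x, x ≠ 0 → 0 < x ⬝ᵥ P *ᵥ x := by
  have : P.IsHermitian := by rw [IsHermitian, conjTranspose_eq_transpose_of_trivial, hP]
  rw [posDef_iff_dotProduct_mulVec]
  simp only [this, true_and, star_trivial]

lemma Diss.posDef_of_posSemidef {P : Matrix (Fin n) (Fin n) ℝ} (hd : Diss A B C D P)
    (hobsv : ∀ x : Fin n → ℝ, (∀ k : ℕ, k < n → (C * A ^ k).mulVec x = 0) → x = 0)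
    (hP : P.PosSemidef) : P.PosDef := by
  have hs := transpose_of_isHermitian hP.isHermitian
  rw [posDef_iff_real hs]
  intro x hx
  refine lt_of_le_of_ne ((psd_iff hs).1 hP x) fun h0 => hx ?_
  exact hd.ker_trivial hs hobsv (psd_mulVec_eq_zero hP h0.symm)

/-- If one solution is positive definite, every symmetric solution is. Let `ρ` be the minimum of the
generalized Rayleigh quotient `xᵀPx / xᵀP₀x`. If `ρ ≤ 0`, the convex combination
`(P - ρP₀) / (1 - ρ)` is a positive semidefinite solution with nontrivial kernel, contradicting
observability. -/
lemma Diss.posDef_of_posDef {P P₀ : Matrix (Fin n) (Fin n) ℝ} (hP : Pᵀ = P)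
    (hd : Diss A B C D P) (hP₀ : P₀.PosDef) (hd₀ : Diss A B C D P₀)
    (hobsv : ∀ x : Fin n → ℝ, (∀ k : ℕ, k < n → (C * A ^ k).mulVec x = 0) → x = 0) :
    P.PosDef := by
  have hs₀ := transpose_of_isHermitian hP₀.isHermitian
  have hpos₀ := (posDef_iff_real hs₀).1 hP₀
  rcases Nat.eq_zero_or_pos n with rfl | hn
  · rw [posDef_iff_real hP]
    intro x hx
    exact absurd (Subsingleton.elim _ _) hx
  have : Nonempty (Fin n) := ⟨⟨0, hn⟩⟩
  have hne : (Metric.sphere (0 : Fin n → ℝ) 1).Nonempty := NormedSpace.sphere_nonempty.2 zero_le_one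
  have hnz : ∀ x ∈ Metric.sphere (0 : Fin n → ℝ) 1, x ≠ 0 := by
    rintro x hx rfl
    simp at hx
  obtain ⟨x₀, hx₀, hmin⟩ := (isCompact_sphere (0 : Fin n → ℝ) 1).exists_isMinOn hne
    (f := fun x => (x ⬝ᵥ P *ᵥ x) / (x ⬝ᵥ P₀ *ᵥ x)) (by
      refine ContinuousOn.div (by fun_prop) (by fun_prop) fun x hx => ?_
      exact (hpos₀ x (hnz x hx)).ne')
  set ρ := (x₀ ⬝ᵥ P *ᵥ x₀) / (x₀ ⬝ᵥ P₀ *ᵥ x₀) with hρ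
  have hge : ∀ x, ρ * (x ⬝ᵥ P₀ *ᵥ x) ≤ x ⬝ᵥ P *ᵥ x := by
    intro x
    by_cases hx : x = 0
    · simp [hx]
    have hx' : 0 < ‖x‖ := norm_pos_iff.2 hx
    have hmem : ‖x‖⁻¹ • x ∈ Metric.sphere (0 : Fin n → ℝ) 1 := by
      simp [norm_smul, hx'.ne']
    have h1 : ρ ≤ _ := hmin hmem
    simp only [mulVec_smul, dotProduct_smul, smul_dotProduct, smul_eq_mul] at h1
    rw [mul_div_mul_left _ _ (by positivity), mul_div_mul_left _ _ (by positivity),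
      le_div_iff₀ (hpos₀ x hx)] at h1
    exact h1
  have hρpos : 0 < ρ := by
    by_contra hle
    push Not at hle
    have h1ρ : 0 < 1 - ρ := by linarith
    set Q := (1 - ρ)⁻¹ • (P - ρ • P₀) with hQ
    have hQval : ∀ s y, s ⬝ᵥ Q *ᵥ y = (1 - ρ)⁻¹ * (s ⬝ᵥ P *ᵥ y - ρ * (s ⬝ᵥ P₀ *ᵥ y)) := by
      intro s y
      simp only [hQ, smul_mulVec, sub_mulVec, dotProduct_smul, dotProduct_sub, smul_eq_mul]
    have hQs : Qᵀ = Q := by simp [hQ, hP, hs₀]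
    have hQd : Diss A B C D Q := by
      intro s v
      rw [hQval, inv_mul_le_iff₀ h1ρ]
      nlinarith [hd s v, hd₀ s v]
    have hQp : Q.PosSemidef := by
      rw [psd_iff hQs]
      intro x
      rw [hQval]
      exact mul_nonneg (by positivity) (by linarith [hge x])
    refine hnz x₀ hx₀ (hQd.ker_trivial hQs hobsv (psd_mulVec_eq_zero hQp ?_))
    rw [hQval, hρ, div_mul_cancel₀ _ (hpos₀ x₀ (hnz x₀ hx₀)).ne', sub_self, mul_zero]
  rw [posDef_iff_real hP]
  intro x hx
  exact lt_of_lt_of_le (mul_pos hρpos (hpos₀ x hx)) (hge x)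

end Positivity

/-! ### Complex vectors: solutions of the KYP inequality give positive realness -/

section Complexification

variable {n m : ℕ} {A : Matrix (Fin n) (Fin n) ℝ} {B : Matrix (Fin n) (Fin m) ℝ}
  {C : Matrix (Fin m) (Fin n) ℝ} {D : Matrix (Fin m) (Fin m) ℝ}

lemma re_star_dotProduct {ι : Type*} [Fintype ι] (s w : ι → ℂ) :
    (star s ⬝ᵥ w).re =
      (fun i => (s i).re) ⬝ᵥ (fun i => (w i).re) + (fun i => (s i).im) ⬝ᵥ (fun i => (w i).im) := by
  simp [dotProduct, Complex.mul_re, Finset.sum_add_distrib]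

lemma re_map_mulVec {ι κ : Type*} [Fintype κ] (M : Matrix ι κ ℝ) (w : κ → ℂ) :
    (fun i => ((M.map Complex.ofReal *ᵥ w) i).re) = M *ᵥ fun i => (w i).re := by
  ext i
  simp [mulVec, dotProduct, Complex.mul_re]

lemma im_map_mulVec {ι κ : Type*} [Fintype κ] (M : Matrix ι κ ℝ) (w : κ → ℂ) :
    (fun i => ((M.map Complex.ofReal *ᵥ w) i).im) = M *ᵥ fun i => (w i).im := by
  ext i
  simp [mulVec, dotProduct, Complex.mul_im]

lemma Diss.complex {P : Matrix (Fin n) (Fin n) ℝ} (hd : Diss A B C D P)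
    (s : Fin n → ℂ) (u : Fin m → ℂ) :
    (star s ⬝ᵥ P.map Complex.ofReal *ᵥ
      (A.map Complex.ofReal *ᵥ s + B.map Complex.ofReal *ᵥ u)).re ≤
    (star u ⬝ᵥ (C.map Complex.ofReal *ᵥ s + D.map Complex.ofReal *ᵥ u)).re := by
  have h1 := hd (fun i => (s i).re) (fun i => (u i).re)
  have h2 := hd (fun i => (s i).im) (fun i => (u i).im)
  rw [re_star_dotProduct, re_star_dotProduct, re_map_mulVec, im_map_mulVec]
  simp only [Pi.add_apply, Complex.add_re, Complex.add_im]
  simp only [← re_map_mulVec, ← im_map_mulVec] at h1 h2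
  exact add_le_add h1 h2

lemma posDef_complex {P : Matrix (Fin n) (Fin n) ℝ} (hP : P.PosDef) {s : Fin n → ℂ} (hs : s ≠ 0) :
    0 < (star s ⬝ᵥ P.map Complex.ofReal *ᵥ s).re := by
  have hpos := (posDef_iff_real (transpose_of_isHermitian hP.isHermitian)).1 hP
  have hnn : ∀ x, 0 ≤ x ⬝ᵥ P *ᵥ x := fun x => by
    by_cases hx : x = 0
    · simp [hx]
    · exact (hpos x hx).le
  rw [re_star_dotProduct, re_map_mulVec, im_map_mulVec]
  by_cases h : (fun i => (s i).re) = 0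
  · have h' : (fun i => (s i).im) ≠ 0 := fun h' => hs <| by
      ext i
      exact Complex.ext (congrFun h i) (congrFun h' i)
    exact add_pos_of_nonneg_of_pos (hnn _) (hpos _ h')
  · exact add_pos_of_pos_of_nonneg (hpos _ h) (hnn _)

lemma im_star_dotProduct_map {P : Matrix (Fin n) (Fin n) ℝ} (hP : P.PosDef) (s : Fin n → ℂ) :
    (star s ⬝ᵥ P.map Complex.ofReal *ᵥ s).im = 0 :=
  (hP.isHermitian.map Complex.ofReal (fun x => by simp)).im_star_dotProduct_mulVec_self s

lemma add_conjTranspose_posSemidef_iff (G : Matrix (Fin m) (Fin m) ℂ) :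
    (G + Gᴴ).PosSemidef ↔ ∀ u : Fin m → ℂ, 0 ≤ (star u ⬝ᵥ G *ᵥ u).re := by
  have hH : (G + Gᴴ).IsHermitian := isHermitian_add_transpose_self G
  have hval : ∀ u : Fin m → ℂ, star u ⬝ᵥ (G + Gᴴ) *ᵥ u = ((2 * (star u ⬝ᵥ G *ᵥ u).re : ℝ) : ℂ) := by
    intro u
    have h1 : star u ⬝ᵥ Gᴴ *ᵥ u = star (star u ⬝ᵥ G *ᵥ u) := by
      rw [dotProduct_mulVec, ← star_mulVec, star_dotProduct]
    rw [add_mulVec, dotProduct_add, h1]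
    apply Complex.ext
    · simp; ring
    · simp
  rw [posSemidef_iff_dotProduct_mulVec]
  simp only [hH, true_and, hval, Complex.zero_le_real]
  exact forall_congr' fun u => ⟨fun h => by linarith, fun h => by linarith⟩

/-- Every complex eigenvalue of the real matrix `A` has nonpositive real part. -/
def Stable (A : Matrix (Fin n) (Fin n) ℝ) : Prop :=
  ∀ lam : ℂ, (∃ v : Fin n → ℂ, v ≠ 0 ∧ (A.map Complex.ofReal).mulVec v = lam • v) → lam.re ≤ 0

lemma Stable.isUnit_resolvent (hA : Stable A) {lam : ℂ} (hl : 0 < lam.re) :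
    IsUnit (lam • (1 : Matrix (Fin n) (Fin n) ℂ) - A.map Complex.ofReal).det := by
  rw [isUnit_iff_ne_zero]
  intro h0
  obtain ⟨v, hv, hv0⟩ := exists_mulVec_eq_zero_iff.2 h0
  rw [sub_mulVec, smul_mulVec, one_mulVec, sub_eq_zero] at hv0
  exact absurd (hA lam ⟨v, hv, hv0.symm⟩) (not_le.2 hl)

lemma Stable.isUnit_one_sub (hA : Stable A) : IsUnit (1 - A).det := by
  have h := hA.isUnit_resolvent (lam := 1) (by simp)
  have e : (1 : ℂ) • (1 : Matrix (Fin n) (Fin n) ℂ) - A.map Complex.ofReal =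
      (1 - A).map Complex.ofReal := by
    rw [one_smul, Matrix.map_sub _ Complex.ofReal_sub, Matrix.map_one _ Complex.ofReal_zero Complex.ofReal_one]
  rw [e, isUnit_iff_ne_zero] at h
  rw [isUnit_iff_ne_zero]
  intro h0
  apply h
  have := (Complex.ofRealHom.map_det (1 - A)).symm
  rw [h0, map_zero] at this
  exact this

/-- The transfer function maps the amplitude `u` of an exponential input `e^{λt}u` to the amplitude
of the output, where `s` is the amplitude of the state. -/
lemma transferFn_mulVec {lam : ℂ}
    (hl : IsUnit (lam • (1 : Matrix (Fin n) (Fin n) ℂ) - A.map Complex.ofReal).det)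
    {s : Fin n → ℂ} {u : Fin m → ℂ}
    (h : lam • s = A.map Complex.ofReal *ᵥ s + B.map Complex.ofReal *ᵥ u) :
    transferFn A B C D lam *ᵥ u = C.map Complex.ofReal *ᵥ s + D.map Complex.ofReal *ᵥ u := by
  have h1 : B.map Complex.ofReal *ᵥ u =
      (lam • (1 : Matrix (Fin n) (Fin n) ℂ) - A.map Complex.ofReal) *ᵥ s := by
    rw [sub_mulVec, smul_mulVec, one_mulVec, h, add_sub_cancel_left]
  rw [transferFn, add_mulVec, ← mulVec_mulVec, h1, mulVec_mulVec, Matrix.mul_assoc,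
    nonsing_inv_mul _ hl, Matrix.mul_one]

lemma Diss.stable {P : Matrix (Fin n) (Fin n) ℝ} (hP : P.PosDef) (hd : Diss A B C D P) :
    Stable A := by
  rintro lam ⟨v, hv, hlam⟩
  have h1 := hd.complex v 0
  have h2 := posDef_complex hP hv
  have him : (star v ⬝ᵥ P.map Complex.ofReal *ᵥ v).im = 0 :=
    im_star_dotProduct_map hP _
  simp only [mulVec_zero, add_zero, hlam, star_zero, zero_dotProduct, Complex.zero_re,
    mulVec_smul, dotProduct_smul, smul_eq_mul, Complex.mul_re, him, mul_zero, sub_zero] at h1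
  by_contra hlt
  push Not at hlt
  have := mul_pos hlt h2
  linarith

lemma Diss.positive_real {P : Matrix (Fin n) (Fin n) ℝ} (hP : P.PosDef) (hd : Diss A B C D P)
    {lam : ℂ} (hl : 0 < lam.re) :
    (transferFn A B C D lam + (transferFn A B C D lam)ᴴ).PosSemidef := by
  rw [add_conjTranspose_posSemidef_iff]
  intro u
  have hu := (hd.stable hP).isUnit_resolvent hl
  set s := (lam • (1 : Matrix (Fin n) (Fin n) ℂ) - A.map Complex.ofReal)⁻¹ *ᵥ
    (B.map Complex.ofReal *ᵥ u) with hs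
  have h : lam • s = A.map Complex.ofReal *ᵥ s + B.map Complex.ofReal *ᵥ u := by
    have : (lam • (1 : Matrix (Fin n) (Fin n) ℂ) - A.map Complex.ofReal) *ᵥ s
        = B.map Complex.ofReal *ᵥ u := by
      rw [hs, mulVec_mulVec, mul_nonsing_inv _ hu, one_mulVec]
    rw [← this, sub_mulVec, smul_mulVec, one_mulVec, add_sub_cancel]
  rw [transferFn_mulVec hu h]
  refine le_trans ?_ (hd.complex s u)
  have him : (star s ⬝ᵥ P.map Complex.ofReal *ᵥ s).im = 0 :=
    im_star_dotProduct_map hP _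
  rw [← h, mulVec_smul, dotProduct_smul, smul_eq_mul, Complex.mul_re, him, mul_zero, sub_zero]
  refine mul_nonneg hl.le ?_
  by_cases hs0 : s = 0
  · simp [hs0]
  · exact (posDef_complex hP hs0).le

end Complexification

/-! ### Decay of weighted powers of the Cayley transform -/

section Decay

open Filter Topology

variable {n m : ℕ} {A : Matrix (Fin n) (Fin n) ℝ} {B : Matrix (Fin n) (Fin m) ℝ}
  {C : Matrix (Fin m) (Fin n) ℝ} {D : Matrix (Fin m) (Fin m) ℝ}

/-- The Cayley transform sends the closed left half-plane into the closed unit disc: an eigenvector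
of `cayleyA A` for `μ ≠ -1` is one of `A` for `(μ - 1)/(1 + μ)`, whose real part is
`(|μ|² - 1)/|1 + μ|²`. -/
lemma Stable.norm_le_one (hA : Stable A) {μ : ℂ} {v : Fin n → ℂ} (hv : v ≠ 0)
    (h : (cayleyA A).map Complex.ofReal *ᵥ v = μ • v) : ‖μ‖ ≤ 1 := by
  have hu := hA.isUnit_one_sub
  have h1 : (1 - A) * cayleyA A = 1 + A := by
    rw [cayleyA, mul_nonsing_inv_cancel_left _ _ hu]
  have h2 : (1 - A.map Complex.ofReal) * (cayleyA A).map Complex.ofReal =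
      1 + A.map Complex.ofReal := by
    have := congrArg (Complex.ofRealHom.mapMatrix) h1
    rw [map_mul, map_sub, map_add, map_one] at this
    exact this
  have h3 := congrArg (· *ᵥ v) h2
  simp only [← mulVec_mulVec, h, mulVec_smul, sub_mulVec, add_mulVec, one_mulVec] at h3
  have h4 : (1 + μ) • (A.map Complex.ofReal *ᵥ v) = (μ - 1) • v := by
    rw [add_smul, sub_smul, one_smul, one_smul]
    rw [smul_sub] at h3
    linear_combination -h3
  by_cases hμ : 1 + μ = 0
  · have : μ = -1 := by linear_combination hμ
    simp [this]
  have h5 : A.map Complex.ofReal *ᵥ v = ((μ - 1) / (1 + μ)) • v := by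
    rw [div_eq_inv_mul, mul_smul, ← h4, inv_smul_smul₀ hμ]
  have h6 := hA _ ⟨v, hv, h5⟩
  have h7 : ((μ - 1) / (1 + μ)).re = (Complex.normSq μ - 1) / Complex.normSq (1 + μ) := by
    rw [Complex.div_re, ← add_div]
    congr 1
    simp [Complex.normSq_apply]
    ring
  rw [h7] at h6
  have h8 : 0 < Complex.normSq (1 + μ) := Complex.normSq_pos.2 hμ
  have h9 : Complex.normSq μ ≤ 1 := by
    by_contra hlt
    push Not at hlt
    have := div_pos (sub_pos.2 hlt) h8
    linarith
  rw [Complex.normSq_eq_norm_sq] at h9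
  exact (sq_le_one_iff₀ (norm_nonneg _)).1 h9

section Gelfand

attribute [local instance] Matrix.linftyOpNormedRing Matrix.linftyOpNormedAlgebra

/-- Gelfand's formula for the operator norm of the sup norm: spectral radius at most `1` makes
`r ^ k * M ^ k` decay for `r < 1`. -/
lemma tendsto_pow_of_spectrum {M : Matrix (Fin n) (Fin n) ℂ} (hM : ∀ μ ∈ spectrum ℂ M, ‖μ‖ ≤ 1)
    {r : ℝ} (hr0 : 0 < r) (hr1 : r < 1) (i j : Fin n) :
    Tendsto (fun k : ℕ => r ^ k * ‖(M ^ k) i j‖) atTop (𝓝 0) := by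
  have hrad : spectralRadius ℂ M ≤ 1 := by
    refine iSup₂_le fun μ hμ => ?_
    have := hM μ hμ
    exact_mod_cast this
  obtain ⟨ρ, hρ1, hρr⟩ := exists_between ((one_lt_inv₀ hr0).2 hr1)
  have hρ0 : 0 < ρ := by linarith
  have hev := (spectrum.pow_norm_pow_one_div_tendsto_nhds_spectralRadius M).eventually
    (gt_mem_nhds (lt_of_le_of_lt hrad (by simpa using hρ1 : (1 : ENNReal) < ENNReal.ofReal ρ)))
  have hle : ∀ᶠ k : ℕ in atTop, r ^ k * ‖(M ^ k) i j‖ ≤ (r * ρ) ^ k := by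
    filter_upwards [hev, eventually_gt_atTop 0] with k hk hk0
    rw [ENNReal.ofReal_lt_ofReal_iff hρ0] at hk
    have h1 : ‖M ^ k‖ ≤ ρ ^ k := by
      have h2 := pow_le_pow_left₀ (by positivity) hk.le k
      rwa [← Real.rpow_natCast, ← Real.rpow_mul (norm_nonneg _), one_div,
        inv_mul_cancel₀ (by positivity), Real.rpow_one] at h2
    have h3 : ‖(M ^ k) i j‖ ≤ ‖M ^ k‖ := by
      have h4 := linfty_opNorm_mulVec (M ^ k) (Pi.single j 1)
      rw [mulVec_single_one, Pi.norm_single, norm_one, mul_one] at h4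
      exact (norm_le_pi_norm ((M ^ k).col j) i).trans h4
    rw [mul_pow]
    exact mul_le_mul_of_nonneg_left (h3.trans h1) (by positivity)
  refine squeeze_zero' (Eventually.of_forall fun k => by positivity) hle ?_
  refine tendsto_pow_atTop_nhds_zero_of_lt_one (by positivity) ?_
  rwa [← lt_inv_mul_iff₀ hr0, mul_one]

end Gelfand

lemma Stable.tendsto_pow (hA : Stable A) {r : ℝ} (hr0 : 0 < r) (hr1 : r < 1) :
    Tendsto (fun k : ℕ => r ^ k • cayleyA A ^ k) atTop (𝓝 0) := by
  have hM : ∀ μ ∈ spectrum ℂ ((cayleyA A).map Complex.ofReal), ‖μ‖ ≤ 1 := by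
    intro μ hμ
    rw [spectrum.mem_iff, isUnit_iff_isUnit_det, isUnit_iff_ne_zero, not_not] at hμ
    obtain ⟨v, hv, hv0⟩ := exists_mulVec_eq_zero_iff.2 hμ
    refine hA.norm_le_one hv ?_
    rw [sub_mulVec, Algebra.algebraMap_eq_smul_one, smul_mulVec, one_mulVec, sub_eq_zero] at hv0
    exact hv0.symm
  refine tendsto_pi_nhds.2 fun i => tendsto_pi_nhds.2 fun j => ?_
  change Tendsto (fun k : ℕ => r ^ k * (cayleyA A ^ k) i j) atTop (𝓝 0)
  rw [tendsto_zero_iff_norm_tendsto_zero]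
  refine (tendsto_pow_of_spectrum hM hr0 hr1 i j).congr fun k => ?_
  have : ((cayleyA A).map Complex.ofReal) ^ k = (cayleyA A ^ k).map Complex.ofReal :=
    (map_pow Complex.ofRealHom.mapMatrix (cayleyA A) k).symm
  rw [this]
  simp [abs_of_pos hr0]

end Decay

/-! ### Frequency-domain positivity for weighted periodic trajectories -/

section Frequency

open Finset

/-- Orthogonality of the characters of `ℤ/M`. -/
lemma sum_fourier {M : ℕ} {ω : ℂ} (hω : IsPrimitiveRoot ω M) {k l : ℕ}
    (hk : k < M) (hl : l < M) :
    ∑ j ∈ range M, (star (ω ^ k) * ω ^ l) ^ j = if k = l then (M : ℂ) else 0 := by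
  have hM : M ≠ 0 := by omega
  have hn : ‖ω‖ = 1 := Complex.norm_eq_one_of_pow_eq_one hω.pow_eq_one hM
  have hs : star ω * ω = 1 := by
    rw [Complex.star_def, ← Complex.normSq_eq_conj_mul_self, Complex.normSq_eq_norm_sq, hn]; simp
  split_ifs with h
  · subst h
    rw [star_pow, ← mul_pow, hs]
    simp
  · have hne : star (ω ^ k) * ω ^ l ≠ 1 := by
      intro he
      apply h
      refine hω.pow_inj hk hl ?_
      have h1 : star (ω ^ k) * ω ^ k = 1 := by rw [star_pow, ← mul_pow, hs, one_pow]
      have h2 : star (ω ^ k) ≠ 0 := left_ne_zero_of_mul_eq_one h1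
      exact mul_left_cancel₀ h2 (h1.trans he.symm)
    rw [geom_sum_eq hne, mul_pow, ← star_pow, ← pow_mul, ← pow_mul, mul_comm k, mul_comm l,
      pow_mul, pow_mul, hω.pow_eq_one]
    simp

/-- Parseval's identity for the finite generating functions `∑ a_k ζ^k` sampled at the `M` points
`r ω^j` of the circle of radius `r`. -/
lemma parseval {M : ℕ} {ω : ℂ} (hω : IsPrimitiveRoot ω M) (r : ℝ) (a b : ℕ → ℂ) :
    ∑ j ∈ range M, star (∑ k ∈ range M, ((r : ℂ) * ω ^ j) ^ k * a k) *
        ∑ l ∈ range M, ((r : ℂ) * ω ^ j) ^ l * b l =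
      M * ∑ k ∈ range M, (r : ℂ) ^ (2 * k) * (star (a k) * b k) := by
  have h1 : ∀ j k l : ℕ, star (((r : ℂ) * ω ^ j) ^ k * a k) * (((r : ℂ) * ω ^ j) ^ l * b l) =
      (r : ℂ) ^ (k + l) * (star (a k) * b l) * (star (ω ^ k) * ω ^ l) ^ j := by
    intro j k l
    have : star (r : ℂ) = r := by simp
    simp only [star_mul', star_pow, this, mul_pow, pow_add]
    ring
  simp only [star_sum, sum_mul_sum, h1]
  rw [sum_comm, mul_sum]
  refine sum_congr rfl fun k hk => ?_
  rw [sum_comm, sum_eq_single k]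
  · rw [← mul_sum, sum_fourier hω (mem_range.1 hk) (mem_range.1 hk), if_pos rfl, two_mul]
    ring
  · intro l hl hlk
    rw [← mul_sum, sum_fourier hω (mem_range.1 hk) (mem_range.1 hl), if_neg (Ne.symm hlk), mul_zero]
  · exact fun h => absurd hk h

variable {n m : ℕ} {A : Matrix (Fin n) (Fin n) ℝ} {B : Matrix (Fin n) (Fin m) ℝ}
  {C : Matrix (Fin m) (Fin n) ℝ} {D : Matrix (Fin m) (Fin m) ℝ}

/-- The truncated generating function `∑_{k<M} ζ^k x_k` of a sequence of real vectors. -/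
noncomputable def genFn {ι : Type*} (M : ℕ) (ζ : ℂ) (x : ℕ → ι → ℝ) : ι → ℂ :=
  fun i => ∑ k ∈ range M, ζ ^ k * (x k i : ℂ)

lemma genFn_add {ι : Type*} (M : ℕ) (ζ : ℂ) (x y : ℕ → ι → ℝ) :
    genFn M ζ (fun k => x k + y k) = genFn M ζ x + genFn M ζ y := by
  ext i
  simp [genFn, mul_add, sum_add_distrib]

lemma genFn_mulVec {ι κ : Type*} [Fintype κ] (M : ℕ) (ζ : ℂ) (T : Matrix ι κ ℝ)
    (x : ℕ → κ → ℝ) :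
    genFn M ζ (fun k => T *ᵥ x k) = T.map Complex.ofReal *ᵥ genFn M ζ x := by
  ext i
  simp only [genFn, mulVec, dotProduct, map_apply, Complex.ofReal_sum, Complex.ofReal_mul, mul_sum]
  rw [sum_comm]
  exact sum_congr rfl fun k _ => sum_congr rfl fun l _ => by ring

/-- If `ζ^M x_M = x_0`, no boundary term appears when the sequence is shifted. -/
lemma genFn_shift {ι : Type*} (M : ℕ) (ζ : ℂ) (x : ℕ → ι → ℝ)
    (hx : ∀ i, ζ ^ M * (x M i : ℂ) = x 0 i) :
    genFn M ζ x = ζ • genFn M ζ (fun k => x (k + 1)) := by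
  ext i
  have h1 := sum_range_succ (fun k => ζ ^ k * (x k i : ℂ)) M
  rw [sum_range_succ', hx i, pow_zero, one_mul] at h1
  simp only [genFn, Pi.smul_apply, smul_eq_mul, mul_sum]
  rw [← add_right_cancel h1]
  exact sum_congr rfl fun k _ => by ring

/-- Let the weighted sequence `r ^ k • x k` return at time `M` to its initial value. At each sample point `ζ = r ω^j` the generating
functions of the trajectory satisfy `λS = AS + BU` with `λ = (1 - ζ)/(1 + ζ)` in the open right
half-plane, because `|ζ| = r < 1`; hence positive realness gives `Re Uᴴ G(λ) U ≥ 0`, and Parseval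
turns the sum over `j` into the weighted cost. -/
lemma periodic_nonneg (hA : Stable A)
    (hpr : ∀ lam : ℂ, 0 < lam.re →
      (transferFn A B C D lam + (transferFn A B C D lam)ᴴ).PosSemidef)
    {r : ℝ} (hr0 : 0 < r) (hr1 : r < 1) {M : ℕ} (hM : M ≠ 0)
    (x : ℕ → Fin n → ℝ) (v : ℕ → Fin m → ℝ)
    (hstep : ∀ k, x (k + 1) - x k = A *ᵥ (x (k + 1) + x k) + B *ᵥ v k)
    (hper : r ^ M • x M = x 0) :
    0 ≤ ∑ k ∈ range M, r ^ (2 * k) * (v k ⬝ᵥ (C *ᵥ (x (k + 1) + x k) + D *ᵥ v k)) := by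
  set ω := Complex.exp (2 * Real.pi * Complex.I / M) with hωdef
  have hω : IsPrimitiveRoot ω M := Complex.isPrimitiveRoot_exp M hM
  have hn : ‖ω‖ = 1 := Complex.norm_eq_one_of_pow_eq_one hω.pow_eq_one hM
  set y : ℕ → Fin m → ℝ := fun k => C *ᵥ (x (k + 1) + x k) + D *ᵥ v k with hy
  have key : ∀ j : ℕ, 0 ≤ (star (genFn M ((r : ℂ) * ω ^ j) v) ⬝ᵥ
      genFn M ((r : ℂ) * ω ^ j) y).re := by
    intro j
    set ζ := (r : ℂ) * ω ^ j with hζ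
    have hζn : ‖ζ‖ = r := by
      rw [hζ, norm_mul, norm_pow, hn, one_pow, mul_one, Complex.norm_real, Real.norm_of_nonneg hr0.le]
    have hζM : ζ ^ M = (r : ℂ) ^ M := by
      rw [hζ, mul_pow, ← pow_mul, mul_comm j, pow_mul, hω.pow_eq_one, one_pow, mul_one]
    set s := genFn M ζ (fun k => x (k + 1)) with hs
    have hx0 : genFn M ζ x = ζ • s := by
      refine genFn_shift M ζ x fun i => ?_
      rw [hζM, ← hper]
      simp
    have hsum : genFn M ζ (fun k => x (k + 1) + x k) = (1 + ζ) • s := by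
      rw [genFn_add, hx0, add_smul, one_smul]
    have hY : genFn M ζ y = C.map Complex.ofReal *ᵥ ((1 + ζ) • s) +
        D.map Complex.ofReal *ᵥ genFn M ζ v := by
      rw [hy, genFn_add, genFn_mulVec, genFn_mulVec, hsum]
    have hdyn : (1 - ζ) • s = A.map Complex.ofReal *ᵥ ((1 + ζ) • s) +
        B.map Complex.ofReal *ᵥ genFn M ζ v := by
      rw [← hsum, ← genFn_mulVec, ← genFn_mulVec, ← genFn_add]
      have h1 : genFn M ζ (fun k => (x (k + 1) - x k) + x k) = s := by
        simp only [sub_add_cancel, hs]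
      rw [genFn_add, hx0] at h1
      simp only [← hstep]
      rw [sub_smul, one_smul]
      exact sub_eq_of_eq_add h1.symm
    have h1ζ : 1 + ζ ≠ 0 := by
      intro h0
      have : ζ = -1 := by linear_combination h0
      rw [this, norm_neg, norm_one] at hζn
      linarith
    have hre : 0 < ((1 - ζ) / (1 + ζ)).re := by
      have h7 : ((1 - ζ) / (1 + ζ)).re = (1 - Complex.normSq ζ) / Complex.normSq (1 + ζ) := by
        rw [Complex.div_re, ← add_div]
        congr 1
        simp [Complex.normSq_apply]
        ring
      rw [h7, Complex.normSq_eq_norm_sq, hζn]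
      refine div_pos ?_ (Complex.normSq_pos.2 h1ζ)
      nlinarith
    have hG := transferFn_mulVec (C := C) (D := D) (hA.isUnit_resolvent hre)
      (s := (1 + ζ) • s) (u := genFn M ζ v) (B := B)
      (by rw [smul_smul, div_mul_cancel₀ _ h1ζ, hdyn])
    rw [hY, ← hG]
    exact (add_conjTranspose_posSemidef_iff _).1 (hpr _ hre) _
  have hsumkey := sum_nonneg fun j (_ : j ∈ range M) => key j
  have hpars : ∑ j ∈ range M, star (genFn M ((r : ℂ) * ω ^ j) v) ⬝ᵥ genFn M ((r : ℂ) * ω ^ j) y =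
      ((M * ∑ k ∈ range M, r ^ (2 * k) * (v k ⬝ᵥ y k) : ℝ) : ℂ) := by
    simp only [dotProduct, Pi.star_apply]
    rw [sum_comm]
    simp only [genFn]
    simp only [parseval hω]
    rw [← mul_sum, sum_comm]
    push_cast
    simp only [mul_sum, Complex.star_def, Complex.conj_ofReal]
  rw [← Complex.re_sum, hpars, Complex.ofReal_re] at hsumkey
  exact nonneg_of_mul_nonneg_right hsumkey (by positivity)

end Frequency

/-! ### Nonnegative cost from the origin, and the maximal solution -/

section Cost

open Filter Topology Finset

variable {n m : ℕ} {A : Matrix (Fin n) (Fin n) ℝ} {B : Matrix (Fin n) (Fin m) ℝ}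
  {C : Matrix (Fin m) (Fin n) ℝ} {D : Matrix (Fin m) (Fin m) ℝ}

/-- A steering relation is realized by an infinite trajectory with input zero after time `N`. -/
lemma Steer.exists_trajectory (hA : IsUnit (1 - A).det) {N : ℕ} :
    ∀ {x z : Fin n → ℝ} {c : ℝ}, Steer A B C D N x z c →
    ∃ (ξ : ℕ → Fin n → ℝ) (v : ℕ → Fin m → ℝ), ξ 0 = x ∧ (∀ k, N ≤ k → v k = 0) ∧
      (∀ k, ξ (k + 1) = cayleyA A *ᵥ ξ k + cayleyB A B *ᵥ v k) ∧
      c = ∑ k ∈ range N, v k ⬝ᵥ (C *ᵥ (ξ (k + 1) + ξ k) + D *ᵥ v k) := by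
  induction N with
  | zero =>
    rintro x z c ⟨rfl, rfl⟩
    refine ⟨fun k => cayleyA A ^ k *ᵥ x, 0, by simp, fun _ _ => rfl, fun k => ?_, by simp⟩
    simp [pow_succ', ← mulVec_mulVec]
  | succ N ih =>
    rintro x z c ⟨x', v₀, c', hx, hs, rfl⟩
    obtain ⟨ξ, v, h0, hv, hξ, rfl⟩ := ih hs
    refine ⟨fun k => Nat.casesOn k x ξ, fun k => Nat.casesOn k v₀ v, rfl, ?_, ?_, ?_⟩
    · rintro (_ | k) hk
      · omega
      · exact hv k (by omega)
    · rintro (_ | k)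
      · exact h0.trans ((cayley_step hA _ _ _).1 hx)
      · exact hξ k
    · rw [sum_range_succ', add_comm]
      simp [h0]

/-- With `w` the state at time `N` of a trajectory that is free from then on, adding the free motion
started at `p j` makes the trajectory weighted-periodic with period `N + j`. The equation for `p j`
is `(1 - r^M T^M) p = r^M T^j w` with `T = cayleyA A` and `M = N + j`; as `r^k T^k → 0`, it is
eventually solvable and `p j → 0`. -/
lemma exists_periodic_correction (hA : Stable A) {r : ℝ} (hr0 : 0 < r) (hr1 : r < 1)
    (w : Fin n → ℝ) (N : ℕ) :
    ∃ p : ℕ → Fin n → ℝ, Tendsto p atTop (𝓝 0) ∧ ∀ᶠ j in atTop,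
      r ^ (N + j) • (cayleyA A ^ j *ᵥ w + cayleyA A ^ (N + j) *ᵥ p j) = p j := by
  have hE := hA.tendsto_pow hr0 hr1
  have hEN : Tendsto (fun j : ℕ => r ^ (N + j) • cayleyA A ^ (N + j)) atTop (𝓝 0) :=
    hE.comp (tendsto_atTop_mono (fun j => Nat.le_add_left j N) tendsto_id)
  have h1 : Tendsto (fun j : ℕ => 1 - r ^ (N + j) • cayleyA A ^ (N + j)) atTop (𝓝 1) := by
    simpa using tendsto_const_nhds.sub hEN
  have hdet : Tendsto (fun j : ℕ => (1 - r ^ (N + j) • cayleyA A ^ (N + j)).det) atTop (𝓝 1) := by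
    have := (Continuous.matrix_det continuous_id).tendsto (1 : Matrix (Fin n) (Fin n) ℝ) |>.comp h1
    simpa [Function.comp_def] using this
  have hinv : Tendsto (fun j : ℕ => (1 - r ^ (N + j) • cayleyA A ^ (N + j))⁻¹) atTop (𝓝 1) := by
    simp only [Matrix.inv_def, Ring.inverse_eq_inv']
    have hadj := (Continuous.matrix_adjugate continuous_id).tendsto
      (1 : Matrix (Fin n) (Fin n) ℝ) |>.comp h1
    have := (hdet.inv₀ one_ne_zero).smul hadj
    simpa [Function.comp_def] using this
  have hw : Tendsto (fun j : ℕ => r ^ (N + j) • (cayleyA A ^ j *ᵥ w)) atTop (𝓝 0) := by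
    have h2 : Continuous fun T : Matrix (Fin n) (Fin n) ℝ => r ^ N • (T *ᵥ w) := by fun_prop
    have h3 := (h2.tendsto 0).comp hE
    simp only [zero_mulVec, smul_zero] at h3
    refine h3.congr fun j => ?_
    simp only [Function.comp_apply, smul_mulVec, smul_smul, pow_add]
  refine ⟨fun j => (1 - r ^ (N + j) • cayleyA A ^ (N + j))⁻¹ *ᵥ
    (r ^ (N + j) • (cayleyA A ^ j *ᵥ w)), ?_, ?_⟩
  · have h2 : Continuous fun T : Matrix (Fin n) (Fin n) ℝ × (Fin n → ℝ) => T.1 *ᵥ T.2 := by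
      fun_prop
    have h3 := (h2.tendsto (1, 0)).comp (hinv.prodMk_nhds hw)
    simpa [Function.comp_def] using h3
  · filter_upwards [hdet.eventually_ne one_ne_zero] with j hj
    set E := r ^ (N + j) • cayleyA A ^ (N + j) with hEdef
    set u := r ^ (N + j) • (cayleyA A ^ j *ᵥ w) with hu
    have h4 : (1 - E) *ᵥ ((1 - E)⁻¹ *ᵥ u) = u := by
      rw [mulVec_mulVec, mul_nonsing_inv _ (isUnit_iff_ne_zero.2 hj), one_mulVec]
    rw [sub_mulVec, one_mulVec] at h4
    rw [smul_add, ← hu, ← smul_mulVec, ← hEdef]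
    linear_combination -h4

/-- Under the frequency condition, every trajectory starting at the origin has nonnegative cost. -/
lemma cost_nonneg (hA : Stable A)
    (hpr : ∀ lam : ℂ, 0 < lam.re →
      (transferFn A B C D lam + (transferFn A B C D lam)ᴴ).PosSemidef)
    {N : ℕ} {z : Fin n → ℝ} {c : ℝ} (h : Steer A B C D N 0 z c) : 0 ≤ c := by
  have hu := hA.isUnit_one_sub
  obtain ⟨ξ, v, h0, hv, hξ, rfl⟩ := h.exists_trajectory hu
  have hfree : ∀ j, ξ (N + 1 + j) = cayleyA A ^ j *ᵥ ξ (N + 1) := by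
    intro j
    induction j with
    | zero => simp
    | succ j ih =>
      rw [← add_assoc, hξ, hv _ (by omega), ih, mulVec_zero, add_zero, pow_succ', mulVec_mulVec]
  have hr : ∀ r : ℝ, 0 < r → r < 1 →
      0 ≤ ∑ k ∈ range N, r ^ (2 * k) * (v k ⬝ᵥ (C *ᵥ (ξ (k + 1) + ξ k) + D *ᵥ v k)) := by
    intro r hr0 hr1
    obtain ⟨p, hp0, hp⟩ := exists_periodic_correction hA hr0 hr1 (ξ (N + 1)) (N + 1)
    -- The weighted cost of the corrected trajectory, as a function of the correction; the input
    -- vanishes from time `N` on, so it does not depend on the period.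
    let F : (Fin n → ℝ) → ℝ := fun q => ∑ k ∈ range N, r ^ (2 * k) * (v k ⬝ᵥ
      (C *ᵥ ((ξ (k + 1) + cayleyA A ^ (k + 1) *ᵥ q) + (ξ k + cayleyA A ^ k *ᵥ q)) + D *ᵥ v k))
    have hF : Continuous F := by fun_prop
    have hlim : Tendsto (fun j => F (p j)) atTop (𝓝 (F 0)) := (hF.tendsto 0).comp hp0
    have hnn : 0 ≤ F 0 := by
      refine ge_of_tendsto hlim ?_
      filter_upwards [hp] with j hj
      have h1 := periodic_nonneg (M := N + 1 + j) hA hpr hr0 hr1 (by omega)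
        (fun k => ξ k + cayleyA A ^ k *ᵥ p j) v (fun k => ?_) ?_
      · refine h1.trans_eq ?_
        symm
        refine sum_subset (range_subset_range.2 (by omega)) fun k _ hk => ?_
        rw [hv k (by simpa using hk), zero_dotProduct, mul_zero]
      · rw [cayley_step hu, hξ, mulVec_add, pow_succ', mulVec_mulVec]
        abel
      · simp only [hfree, h0, pow_zero, one_mulVec, zero_add]
        exact hj
    simpa [F] using hnn
  let H : ℝ → ℝ := fun r =>
    ∑ k ∈ range N, r ^ (2 * k) * (v k ⬝ᵥ (C *ᵥ (ξ (k + 1) + ξ k) + D *ᵥ v k))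
  have hH : Continuous H := by fun_prop
  have hlim : Tendsto H (𝓝[<] 1) (𝓝 (H 1)) := (hH.tendsto 1).mono_left nhdsWithin_le_nhds
  have hnn : 0 ≤ H 1 := by
    refine ge_of_tendsto hlim ?_
    filter_upwards [Ioo_mem_nhdsLT (zero_lt_one (α := ℝ))] with r hr'
    exact hr r hr'.1 hr'.2
  simpa [H] using hnn

/-- Dual of `exists_minimal_storage`: the infimal cost of reaching `x` from `0` is `xᵀPx` for a
symmetric solution `P`, obtained from the time-reversed system `(-A, -B, C, D)`, whose solutions are
the negatives of those of `(A, B, C, D)`. -/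
lemma exists_maximal_storage {N : ℕ} (hst : ∀ x z, ∃ c, Steer A B C D N x z c)
    (hpos : ∀ N c, Steer A B C D N 0 0 c → 0 ≤ c) :
    ∃ P : Matrix (Fin n) (Fin n) ℝ, Pᵀ = P ∧ Diss A B C D P ∧
      ∀ x, IsGLB {c | ∃ M, Steer A B C D M 0 x c} (x ⬝ᵥ P *ᵥ x) := by
  have hrev : ∀ {M x z c}, Steer (-A) (-B) C D M z x c ↔ Steer A B C D M x z c :=
    ⟨fun h => by simpa using h.reverse, Steer.reverse⟩
  obtain ⟨Q, hQ, hd, hglb⟩ := exists_minimal_storage (A := -A) (B := -B) (C := C) (D := D)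
    (fun x z => (hst z x).imp fun c hc => hrev.2 hc) (fun M c hc => hpos M c (hrev.1 hc))
  refine ⟨-Q, by rw [transpose_neg, hQ], Diss.neg_iff.1 hd, fun x => ?_⟩
  have := hglb x
  simp only [hrev] at this
  simpa [neg_mulVec] using this

end Cost

/-- **Positive real lemma.** -/
theorem positive_real_lemma {n m : ℕ}
    (A : Matrix (Fin n) (Fin n) ℝ) (B : Matrix (Fin n) (Fin m) ℝ)
    (C : Matrix (Fin m) (Fin n) ℝ) (D : Matrix (Fin m) (Fin m) ℝ)
    -- minimality: the controllability matrix has rank n (trivial left kernel)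
    (hctrb : ∀ v : Fin n → ℝ, (∀ k : ℕ, k < n → vecMul v (A ^ k * B) = 0) → v = 0)
    -- and the observability matrix has rank n (trivial kernel)
    (hobsv : ∀ x : Fin n → ℝ, (∀ k : ℕ, k < n → (C * A ^ k).mulVec x = 0) → x = 0) :
    (((∀ lam : ℂ, (∃ v : Fin n → ℂ, v ≠ 0 ∧
          (A.map Complex.ofReal).mulVec v = lam • v) → lam.re ≤ 0) ∧
      (∀ lam : ℂ, 0 < lam.re →
        (transferFn A B C D lam + (transferFn A B C D lam)ᴴ).PosSemidef))
      ↔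
      (∃ P : Matrix (Fin n) (Fin n) ℝ, Pᵀ = P ∧ P.PosDef ∧ (-(KYP A B C D P)).PosSemidef))
    ∧
    ((∃ P : Matrix (Fin n) (Fin n) ℝ, Pᵀ = P ∧ P.PosDef ∧ (-(KYP A B C D P)).PosSemidef) →
      ∃ Pmin Pmax : Matrix (Fin n) (Fin n) ℝ,
        Pminᵀ = Pmin ∧ Pmin.PosDef ∧ (-(KYP A B C D Pmin)).PosSemidef ∧
        Pmaxᵀ = Pmax ∧ Pmax.PosDef ∧ (-(KYP A B C D Pmax)).PosSemidef ∧
        ∀ P : Matrix (Fin n) (Fin n) ℝ, Pᵀ = P → (-(KYP A B C D P)).PosSemidef →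
          (P - Pmin).PosSemidef ∧ (Pmax - P).PosSemidef) := by
  have hiff : ∀ P : Matrix (Fin n) (Fin n) ℝ, Pᵀ = P →
      ((-(KYP A B C D P)).PosSemidef ↔ Diss A B C D P) := fun P hP => kyp_iff hP
  refine ⟨⟨?_, ?_⟩, ?_⟩
  · rintro ⟨hA, hpr⟩
    replace hA : Stable A := hA
    obtain ⟨P, hP, hd, hglb⟩ := exists_maximal_storage
      (steer_total (C := C) (D := D) hA.isUnit_one_sub hctrb) fun N c hc => cost_nonneg hA hpr hc
    refine ⟨P, hP, hd.posDef_of_posSemidef hobsv ((psd_iff hP).2 fun x => ?_), (hiff P hP).2 hd⟩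
    refine (hglb x).2 ?_
    rintro c ⟨M, hc⟩
    exact cost_nonneg hA hpr hc
  · rintro ⟨P, hP, hpos, hk⟩
    have hd := (hiff P hP).1 hk
    exact ⟨hd.stable hpos, fun lam hl => hd.positive_real hpos hl⟩
  · rintro ⟨P₀, hP₀, hpos, hk⟩
    have hd₀ := (hiff P₀ hP₀).1 hk
    have hst := steer_total (C := C) (D := D) (hd₀.stable hpos).isUnit_one_sub hctrb
    have hloop : ∀ N c, Steer A B C D N 0 0 c → 0 ≤ c := fun N c hc => by
      simpa using hc.storage_le hP₀ hd₀
    obtain ⟨P, hP, hdP, hglbP⟩ := exists_minimal_storage hst hloop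
    obtain ⟨Q, hQ, hdQ, hglbQ⟩ := exists_maximal_storage hst hloop
    refine ⟨P, Q, hP, hdP.posDef_of_posDef hP hpos hd₀ hobsv, (hiff P hP).2 hdP,
      hQ, hdQ.posDef_of_posDef hQ hpos hd₀ hobsv, (hiff Q hQ).2 hdQ, fun R hR hkR => ?_⟩
    have hdR := (hiff R hR).1 hkR
    constructor
    · refine (psd_iff (by rw [transpose_sub, hR, hP])).2 fun x => ?_
      have : -(x ⬝ᵥ R *ᵥ x) ≤ -(x ⬝ᵥ P *ᵥ x) := (hglbP x).2 (by
        rintro c ⟨M, hc⟩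
        simpa using hc.storage_le hR hdR)
      rw [sub_mulVec, dotProduct_sub]
      linarith
    · refine (psd_iff (by rw [transpose_sub, hR, hQ])).2 fun x => ?_
      have : x ⬝ᵥ R *ᵥ x ≤ x ⬝ᵥ Q *ᵥ x := (hglbQ x).2 (by
        rintro c ⟨M, hc⟩
        simpa using hc.storage_le hR hdR)
      rw [sub_mulVec, dotProduct_sub]
      linarith
end

section
/- Duality of the KYP inequality under inversion: Let A ∈ ℝ^{n×n}, B ∈ ℝ^{n×m}, C ∈ ℝ^{m×n}, D ∈ ℝ^{m×m}, and let P ∈ ℝ^{n×n} be symmetric and positive definite. Then W_{[A,B,C,D]}(P) ≤ 0 if and only if W_{[Aᵀ,Cᵀ,Bᵀ,Dᵀ]}(P⁻¹) ≤ 0, i.e., P solves the KYP inequality for the system [A,B,C,D] if and only if P⁻¹ solves the KYP inequality for the dual system [Aᵀ,Cᵀ,Bᵀ,Dᵀ]. -/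
/-!
The dual KYP matrix at `P⁻¹` is congruent to the KYP matrix at `P` through the symmetric
block-diagonal matrix `T = diag(P⁻¹, -I)`: conjugating by `P⁻¹` turns `AᵀP + PA` into
`P⁻¹Aᵀ + AP⁻¹`, and the sign in the second block turns `B - P⁻¹Cᵀ` into `P⁻¹Cᵀ - B`.
Congruence preserves positive semidefiniteness, and the converse is the same implication
applied to the dual system, since dualizing twice gives back `[A,B,C,D]` and `P`.
-/

open Matrix

/-- Conjugation by `diag(Q, -I)`, with `Q = P⁻¹` symmetric, carries the KYP matrix at `P` to the
dual KYP matrix at `Q`. Definiteness of `P` plays no role. -/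
theorem KYP_dual_of_KYP {n m : ℕ}
    (A : Matrix (Fin n) (Fin n) ℝ) (B : Matrix (Fin n) (Fin m) ℝ)
    (C : Matrix (Fin m) (Fin n) ℝ) (D : Matrix (Fin m) (Fin m) ℝ)
    (P Q : Matrix (Fin n) (Fin n) ℝ) (hQsym : Qᵀ = Q) (hPQ : P * Q = 1) (hQP : Q * P = 1)
    (h : (-(KYP A B C D P)).PosSemidef) : (-(KYP Aᵀ Cᵀ Bᵀ Dᵀ Q)).PosSemidef := by
  have key := h.conjTranspose_mul_mul_same
    (fromBlocks Q 0 0 (-1) : Matrix (Fin n ⊕ Fin m) (Fin n ⊕ Fin m) ℝ)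
  have hQP' (X : Matrix (Fin n) (Fin n) ℝ) : Q * (P * X) = X := by
    rw [← Matrix.mul_assoc, hQP, Matrix.one_mul]
  have hQPB : Q * (P * B) = B := by rw [← Matrix.mul_assoc, hQP, Matrix.one_mul]
  convert key using 1
  rw [Matrix.mul_neg, Matrix.neg_mul, KYP, KYP, fromBlocks_conjTranspose,
    fromBlocks_multiply, fromBlocks_multiply]
  simp only [conjTranspose_eq_transpose_of_trivial, hQsym, transpose_transpose,
    transpose_zero, transpose_neg, transpose_one, Matrix.zero_mul, Matrix.mul_zero,
    add_zero, zero_add, Matrix.neg_mul, Matrix.mul_neg, Matrix.one_mul, Matrix.mul_one,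
    neg_neg, Matrix.mul_add, Matrix.add_mul, Matrix.mul_sub, Matrix.sub_mul,
    Matrix.mul_assoc, hPQ, hQP', hQPB]
  congr 2 <;> abel

/-- **Duality of the KYP inequality under inversion.** For symmetric positive definite `P`,
`P` solves the KYP inequality for `[A,B,C,D]` iff `P⁻¹` solves the KYP inequality for the
dual system `[Aᵀ,Cᵀ,Bᵀ,Dᵀ]`. -/
theorem KYP_duality {n m : ℕ}
    (A : Matrix (Fin n) (Fin n) ℝ) (B : Matrix (Fin n) (Fin m) ℝ)
    (C : Matrix (Fin m) (Fin n) ℝ) (D : Matrix (Fin m) (Fin m) ℝ)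
    (P : Matrix (Fin n) (Fin n) ℝ) (hPsym : Pᵀ = P) (hPpd : P.PosDef) :
    (-(KYP A B C D P)).PosSemidef ↔ (-(KYP Aᵀ Cᵀ Bᵀ Dᵀ P⁻¹)).PosSemidef := by
  have hdet : IsUnit P.det := (Matrix.isUnit_iff_isUnit_det P).mp hPpd.isUnit
  have h1 : P * P⁻¹ = 1 := Matrix.mul_nonsing_inv P hdet
  have h2 : P⁻¹ * P = 1 := Matrix.nonsing_inv_mul P hdet
  refine ⟨KYP_dual_of_KYP A B C D P P⁻¹ ?_ h1 h2, fun h => ?_⟩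
  · rw [Matrix.transpose_nonsing_inv, hPsym]
  · simpa only [transpose_transpose] using
      KYP_dual_of_KYP Aᵀ Cᵀ Bᵀ Dᵀ P⁻¹ P hPsym h2 h1 h
end

section
/- Kernel of KYP solutions and unobservability: Let A ∈ ℝ^{n×n}, B ∈ ℝ^{n×m}, C ∈ ℝ^{m×n}, D ∈ ℝ^{m×m}, and let P ∈ ℝ^{n×n} be symmetric positive semidefinite with W_{[A,B,C,D]}(P) ≤ 0. Then (1) the kernel of P is A-invariant, i.e., Px = 0 implies PAx = 0, and (2) ker P ⊆ ker C, i.e., Px = 0 implies Cx = 0. If moreover P is a minimal positive semidefinite solution, i.e., P ≤ Q (Loewner order) for every symmetric positive semidefinite Q with W_{[A,B,C,D]}(Q) ≤ 0, then ker P equals the unobservable subspace {x ∈ ℝ^n : C A^k x = 0 for all k ∈ ℕ}. -/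
/-!
Evaluating the negative semidefinite form `W(P)` at `(x, 0)` with `P x = 0` gives `0`, so `(x, 0)`
lies in the kernel of `W(P)`; its two block rows read `P A x = 0` and `C x = 0`. Iterating, `ker P`
is contained in the unobservable subspace `U`.

For the reverse inclusion it suffices to produce a positive semidefinite solution `Q` of the KYP
inequality whose quadratic form vanishes on `U`, since minimality then gives `xᵀ P x ≤ xᵀ Q x = 0`
on `U`. Such a `Q` is the Schur complement `xᵀ Q x = min_{u ∈ U} (x - u)ᵀ P (x - u)`
(`exists_schur_complement`): writing `P = Sᵀ S` and letting `R` be the orthogonal projection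
onto `(S U)ᗮ`, it is `Q = (R S)ᵀ (R S)`. If `u ∈ U` is a minimiser at `x`, then `Q x = P (x - u)`
is orthogonal to `U`. As `U` is `A`-invariant and contained in `ker C`, the form of `W(Q)` at
`(x, w)` equals the form of `W(P)` at `(x - u, w)`, which is nonpositive.
-/

open Matrix

/-- The matrix, in standard coordinates, of the orthogonal projection onto a subspace. -/
lemma exists_orthogonal_projection_matrix {n : ℕ} (V : Submodule ℝ (Fin n → ℝ)) :
    ∃ E : Matrix (Fin n) (Fin n) ℝ, (∀ y, E *ᵥ y ∈ V) ∧
      ∀ y, ∀ v ∈ V, v ⬝ᵥ (y - E *ᵥ y) = 0 := by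
  let e := WithLp.linearEquiv 2 ℝ (Fin n → ℝ)
  let K : Submodule ℝ (EuclideanSpace ℝ (Fin n)) := V.comap e.toLinearMap
  let L : (Fin n → ℝ) →ₗ[ℝ] (Fin n → ℝ) :=
    e.toLinearMap ∘ₗ K.starProjection.toLinearMap ∘ₗ e.symm.toLinearMap
  have hL : ∀ y, LinearMap.toMatrix' L *ᵥ y = e (K.starProjection (e.symm y)) := fun y => by
    rw [LinearMap.toMatrix'_mulVec]; rfl
  refine ⟨LinearMap.toMatrix' L, fun y => ?_, fun y v hv => ?_⟩
  · rw [hL]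
    exact K.starProjection_apply_mem (e.symm y)
  · have hK : e.symm v ∈ K := by simpa [K] using hv
    have h := K.starProjection_inner_eq_zero (e.symm y) (e.symm v) hK
    rw [EuclideanSpace.inner_eq_star_dotProduct] at h
    rw [hL]
    simpa [e] using h

/-- The Schur complement of a positive semidefinite `P` relative to a subspace `U`: in each coset
`x + U` there is a point `x - u` with `P (x - u)` orthogonal to `U`, and `Q x` is that vector. -/
lemma exists_schur_complement {n : ℕ} {P : Matrix (Fin n) (Fin n) ℝ} (hP : P.PosSemidef)
    (U : Submodule ℝ (Fin n → ℝ)) :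
    ∃ Q : Matrix (Fin n) (Fin n) ℝ, Qᵀ = Q ∧ Q.PosSemidef ∧
      (∀ x, ∃ u ∈ U, Q *ᵥ x = P *ᵥ (x - u)) ∧ ∀ x, ∀ u ∈ U, u ⬝ᵥ Q *ᵥ x = 0 := by
  obtain ⟨S, hS⟩ : ∃ S : Matrix (Fin n) (Fin n) ℝ, P = Sᵀ * S := by
    open scoped MatrixOrder ComplexOrder Matrix.Norms.L2Operator in
    obtain ⟨S, hS⟩ := CStarAlgebra.nonneg_iff_eq_star_mul_self.mp hP.nonneg
    exact ⟨S, by rw [hS, star_eq_conjTranspose, conjTranspose_eq_transpose_of_trivial]⟩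
  obtain ⟨E, hE, hE'⟩ := exists_orthogonal_projection_matrix (U.map S.mulVecLin)
  have hR : ∀ y, (1 - E)ᵀ *ᵥ ((1 - E) *ᵥ y) = (1 - E) *ᵥ y := by
    intro y
    refine dotProduct_eq _ _ fun z => ?_
    have h := hE' y _ (hE z)
    rw [dotProduct_comm, dotProduct_mulVec, vecMul_transpose, dotProduct_comm _ z]
    simp only [sub_mulVec, one_mulVec, sub_dotProduct]
    rw [h, sub_zero]
  have hQ : ∀ x, (((1 - E) * S)ᵀ * ((1 - E) * S)) *ᵥ x = Sᵀ *ᵥ (S *ᵥ x - E *ᵥ (S *ᵥ x)) := by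
    intro x
    rw [transpose_mul, ← mulVec_mulVec, ← mulVec_mulVec, ← mulVec_mulVec, hR, sub_mulVec,
      one_mulVec]
  refine ⟨((1 - E) * S)ᵀ * ((1 - E) * S), by simp [transpose_mul, Matrix.mul_assoc],
    ?_, fun x => ?_, fun x u hu => ?_⟩
  · rw [← conjTranspose_eq_transpose_of_trivial]
    exact posSemidef_conjTranspose_mul_self ((1 - E) * S)
  · obtain ⟨u, hu, hSu⟩ := hE (S *ᵥ x)
    rw [mulVecLin_apply] at hSu
    exact ⟨u, hu, by rw [hQ, hS, ← hSu, ← mulVec_mulVec, mulVec_sub S]⟩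
  · rw [hQ, dotProduct_mulVec, vecMul_transpose]
    exact hE' _ _ ⟨u, hu, rfl⟩

/-- The quadratic form of `-W(P)`: twice the supplied power `wᵀ (C x + D w)`, minus the rate of
change of the storage `xᵀ P x` along `x' = A x + B w`. -/
lemma neg_KYP_form {n m : ℕ} (A : Matrix (Fin n) (Fin n) ℝ) (B : Matrix (Fin n) (Fin m) ℝ)
    (C : Matrix (Fin m) (Fin n) ℝ) (D : Matrix (Fin m) (Fin m) ℝ)
    {P : Matrix (Fin n) (Fin n) ℝ} (hP : Pᵀ = P) (x : Fin n → ℝ) (w : Fin m → ℝ) :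
    Sum.elim x w ⬝ᵥ (-(KYP A B C D P)) *ᵥ Sum.elim x w =
      2 * (w ⬝ᵥ C *ᵥ x + w ⬝ᵥ D *ᵥ w - (P *ᵥ x) ⬝ᵥ (A *ᵥ x + B *ᵥ w)) := by
  have h1 : x ⬝ᵥ P *ᵥ (A *ᵥ x) = (P *ᵥ x) ⬝ᵥ (A *ᵥ x) := by
    rw [dotProduct_mulVec, ← mulVec_transpose, hP]
  have h2 : x ⬝ᵥ P *ᵥ (B *ᵥ w) = (P *ᵥ x) ⬝ᵥ (B *ᵥ w) := by
    rw [dotProduct_mulVec, ← mulVec_transpose, hP]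
  have h3 : x ⬝ᵥ Aᵀ *ᵥ (P *ᵥ x) = (P *ᵥ x) ⬝ᵥ (A *ᵥ x) := by
    rw [dotProduct_mulVec, vecMul_transpose, dotProduct_comm]
  have h4 : w ⬝ᵥ Bᵀ *ᵥ (P *ᵥ x) = (P *ᵥ x) ⬝ᵥ (B *ᵥ w) := by
    rw [dotProduct_mulVec, vecMul_transpose, dotProduct_comm]
  have h5 : x ⬝ᵥ Cᵀ *ᵥ w = w ⬝ᵥ C *ᵥ x := by
    rw [dotProduct_mulVec, vecMul_transpose, dotProduct_comm]
  have h6 : w ⬝ᵥ Dᵀ *ᵥ w = w ⬝ᵥ D *ᵥ w := by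
    rw [dotProduct_mulVec, vecMul_transpose, dotProduct_comm]
  rw [neg_mulVec, dotProduct_neg, KYP, fromBlocks_mulVec, sumElim_dotProduct_sumElim]
  simp only [Sum.elim_comp_inl, Sum.elim_comp_inr, add_mulVec, sub_mulVec, neg_mulVec,
    ← mulVec_mulVec, dotProduct_add, dotProduct_sub, dotProduct_neg, h1, h2, h3, h4, h5, h6]
  ring

lemma neg_KYP_isHermitian {n m : ℕ} (A : Matrix (Fin n) (Fin n) ℝ) (B : Matrix (Fin n) (Fin m) ℝ)
    (C : Matrix (Fin m) (Fin n) ℝ) (D : Matrix (Fin m) (Fin m) ℝ)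
    {P : Matrix (Fin n) (Fin n) ℝ} (hP : Pᵀ = P) : (-(KYP A B C D P)).IsHermitian := by
  refine IsHermitian.neg ?_
  rw [IsHermitian, conjTranspose_eq_transpose_of_trivial, KYP, fromBlocks_transpose]
  simp only [transpose_add, transpose_sub, transpose_mul, transpose_transpose, transpose_neg, hP]
  congr 1 <;> abel

/-- For `x ∈ ker P` the vector `(x, 0)` is isotropic for the semidefinite matrix `W(P)`, hence in
its kernel. -/
lemma KYP_mulVec_eq_zero {n m : ℕ} {A : Matrix (Fin n) (Fin n) ℝ} {B : Matrix (Fin n) (Fin m) ℝ}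
    {C : Matrix (Fin m) (Fin n) ℝ} {D : Matrix (Fin m) (Fin m) ℝ}
    {P : Matrix (Fin n) (Fin n) ℝ} (hP : Pᵀ = P) (hKYP : (-(KYP A B C D P)).PosSemidef)
    {x : Fin n → ℝ} (hx : P *ᵥ x = 0) : P *ᵥ (A *ᵥ x) = 0 ∧ C *ᵥ x = 0 := by
  have h0 := (hKYP.dotProduct_mulVec_zero_iff (Sum.elim x 0)).1 (by
    rw [star_trivial, neg_KYP_form A B C D hP, hx]
    simp)
  rw [neg_mulVec, neg_eq_zero, KYP, fromBlocks_mulVec] at h0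
  simp only [Sum.elim_comp_inl, Sum.elim_comp_inr, add_mulVec, sub_mulVec, ← mulVec_mulVec, hx,
    mulVec_zero, zero_add, add_zero, zero_sub] at h0
  refine ⟨funext fun i => ?_, funext fun i => ?_⟩
  · simpa using congrFun h0 (Sum.inl i)
  · simpa using congrFun h0 (Sum.inr i)

/-- The unobservable subspace of the pair `(C, A)`. -/
def unobservable {n m : ℕ} (A : Matrix (Fin n) (Fin n) ℝ) (C : Matrix (Fin m) (Fin n) ℝ) :
    Submodule ℝ (Fin n → ℝ) :=
  ⨅ k : ℕ, LinearMap.ker (C * A ^ k).mulVecLin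

lemma mem_unobservable {n m : ℕ} {A : Matrix (Fin n) (Fin n) ℝ} {C : Matrix (Fin m) (Fin n) ℝ}
    {x : Fin n → ℝ} : x ∈ unobservable A C ↔ ∀ k : ℕ, (C * A ^ k) *ᵥ x = 0 := by
  simp [unobservable]

/-- Passing to the Schur complement relative to the unobservable subspace preserves the KYP
inequality. -/
lemma exists_solution_vanishing {n m : ℕ}
    {A : Matrix (Fin n) (Fin n) ℝ} {B : Matrix (Fin n) (Fin m) ℝ}
    {C : Matrix (Fin m) (Fin n) ℝ} {D : Matrix (Fin m) (Fin m) ℝ}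
    {P : Matrix (Fin n) (Fin n) ℝ} (hPsym : Pᵀ = P) (hPpsd : P.PosSemidef)
    (hKYP : (-(KYP A B C D P)).PosSemidef) :
    ∃ Q : Matrix (Fin n) (Fin n) ℝ, Qᵀ = Q ∧ Q.PosSemidef ∧ (-(KYP A B C D Q)).PosSemidef ∧
      ∀ x ∈ unobservable A C, x ⬝ᵥ Q *ᵥ x = 0 := by
  obtain ⟨Q, hQsym, hQpsd, hQP, hQU⟩ := exists_schur_complement hPpsd (unobservable A C)
  refine ⟨Q, hQsym, hQpsd, ?_, fun x hx => hQU x x hx⟩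
  refine .of_dotProduct_mulVec_nonneg (neg_KYP_isHermitian A B C D hQsym) fun v => ?_
  obtain ⟨x, w, rfl⟩ : ∃ x w, v = Sum.elim x w :=
    ⟨v ∘ Sum.inl, v ∘ Sum.inr, (Sum.elim_comp_inl_inr v).symm⟩
  obtain ⟨u, hu, hxu⟩ := hQP x
  have hCu : C *ᵥ u = 0 := by simpa using mem_unobservable.1 hu 0
  have hAu : A *ᵥ u ∈ unobservable A C := mem_unobservable.2 fun k => by
    rw [mulVec_mulVec, Matrix.mul_assoc, ← pow_succ]
    exact mem_unobservable.1 hu (k + 1)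
  have hQAu : (Q *ᵥ x) ⬝ᵥ (A *ᵥ u) = 0 := by
    rw [dotProduct_comm]
    exact hQU x _ hAu
  have h := hKYP.dotProduct_mulVec_nonneg (Sum.elim (x - u) w)
  rw [star_trivial, neg_KYP_form A B C D hPsym, ← hxu, mulVec_sub, mulVec_sub, hCu, sub_zero,
    sub_add_eq_add_sub, dotProduct_sub, hQAu, sub_zero] at h
  rwa [star_trivial, neg_KYP_form A B C D hQsym]

/-- **Kernel of KYP solutions and unobservability.** If `P ⪰ 0` is symmetric and solves
the KYP inequality, then `ker P` is `A`-invariant and contained in `ker C`; if moreover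
`P` is a minimal positive semidefinite solution, then `ker P` is exactly the
unobservable subspace. -/
theorem KYP_kernel_unobservable {n m : ℕ}
    (A : Matrix (Fin n) (Fin n) ℝ) (B : Matrix (Fin n) (Fin m) ℝ)
    (C : Matrix (Fin m) (Fin n) ℝ) (D : Matrix (Fin m) (Fin m) ℝ)
    (P : Matrix (Fin n) (Fin n) ℝ) (hPsym : Pᵀ = P) (hPpsd : P.PosSemidef)
    (hKYP : (-(KYP A B C D P)).PosSemidef) :
    (∀ x : Fin n → ℝ, P.mulVec x = 0 → P.mulVec (A.mulVec x) = 0) ∧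
    (∀ x : Fin n → ℝ, P.mulVec x = 0 → C.mulVec x = 0) ∧
    ((∀ Q : Matrix (Fin n) (Fin n) ℝ, Qᵀ = Q → Q.PosSemidef →
        (-(KYP A B C D Q)).PosSemidef → (Q - P).PosSemidef) →
      ∀ x : Fin n → ℝ, P.mulVec x = 0 ↔ ∀ k : ℕ, (C * A ^ k).mulVec x = 0) := by
  refine ⟨fun x hx => (KYP_mulVec_eq_zero hPsym hKYP hx).1,
    fun x hx => (KYP_mulVec_eq_zero hPsym hKYP hx).2, fun hmin x => ⟨fun hx k => ?_, fun hx => ?_⟩⟩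
  · have hk : P *ᵥ (A ^ k *ᵥ x) = 0 := by
      induction k with
      | zero => simpa using hx
      | succ k ih =>
        rw [pow_succ', ← mulVec_mulVec]
        exact (KYP_mulVec_eq_zero hPsym hKYP ih).1
    rw [← mulVec_mulVec]
    exact (KYP_mulVec_eq_zero hPsym hKYP hk).2
  · obtain ⟨Q, hQsym, hQpsd, hQ, hQU⟩ := exists_solution_vanishing hPsym hPpsd hKYP
    have h := (hmin Q hQsym hQpsd hQ).dotProduct_mulVec_nonneg x
    have h' := hPpsd.dotProduct_mulVec_nonneg x
    rw [star_trivial, sub_mulVec, dotProduct_sub, hQU x (mem_unobservable.2 hx)] at h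
    refine (hPpsd.dotProduct_mulVec_zero_iff x).1 ?_
    rw [star_trivial] at h' ⊢
    linarith
end

section
/- Internal passivity and strict positive realness of second-order structured systems: Let A = [[0, Gᵀ],[−G, −D₀]] ∈ ℝ^{2n×2n}, B = [[0],[B₀]] ∈ ℝ^{2n×m}, C = Bᵀ, where G ∈ ℝ^{n×n} is invertible, D₀ ∈ ℝ^{n×n} is symmetric positive semidefinite, and B₀ ∈ ℝ^{n×m}. Then (1) W_{[A,B,C,0]}(I_{2n}) ≤ 0 (the system is internally passive); and (2) if additionally ker B₀ = {0}, then for every λ ∈ ℂ with Re λ > 0 the matrix λI_{2n} − A is invertible and G(λ) + G(λ)ᴴ is positive definite, where G(λ) := C(λI_{2n}−A)⁻¹B (real matrices regarded as complex); in particular the transfer function is strictly positive real. -/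
/-!
Everything follows from the dissipation identity `A + Aᵀ = -diag(0, 2 D₀)`.

For `P = 1` and `C = Bᵀ` the off-diagonal blocks of the KYP matrix vanish, so its negative is
`diag(diag(0, 2 D₀), 0)`, which is positive semidefinite.

For `Re λ > 0`, the matrix `M = λ I - A` has positive definite Hermitian part
`M + Mᴴ = 2 (Re λ) I - (A + Aᵀ)`. Hence `M` is injective, so invertible, and
`G(λ) + G(λ)ᴴ = (M⁻¹B)ᴴ (M + Mᴴ) (M⁻¹B)` is a congruence of a positive definite matrix by the
injective matrix `M⁻¹B`.
-/

open Matrix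
open scoped ComplexOrder

/-- The system matrix `A = [[0, Gᵀ],[−G, −D₀]]` of a second-order structured system. -/
def soA {n : ℕ} (G D₀ : Matrix (Fin n) (Fin n) ℝ) :
    Matrix (Fin n ⊕ Fin n) (Fin n ⊕ Fin n) ℝ :=
  fromBlocks 0 Gᵀ (-G) (-D₀)

/-- The input matrix `B = [[0],[B₀]]` of a second-order structured system. -/
def soB {n m : ℕ} (B₀ : Matrix (Fin n) (Fin m) ℝ) :
    Matrix (Fin n ⊕ Fin n) (Fin m) ℝ :=
  fromRows 0 B₀

/-- The transfer function `G(λ) = C (λ I − A)⁻¹ B` with `C = Bᵀ`, `D = 0`. -/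
noncomputable def soTransferFn {n m : ℕ} (G D₀ : Matrix (Fin n) (Fin n) ℝ)
    (B₀ : Matrix (Fin n) (Fin m) ℝ) (lam : ℂ) : Matrix (Fin m) (Fin m) ℂ :=
  ((soB B₀)ᵀ).map Complex.ofReal *
    (lam • (1 : Matrix (Fin n ⊕ Fin n) (Fin n ⊕ Fin n) ℂ) -
      (soA G D₀).map Complex.ofReal)⁻¹ *
    (soB B₀).map Complex.ofReal

lemma posSemidef_map_ofReal {N : Type*} [Fintype N] [DecidableEq N] {S : Matrix N N ℝ}
    (hS : S.PosSemidef) : (S.map Complex.ofReal).PosSemidef := by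
  obtain ⟨L, rfl⟩ : ∃ L : Matrix N N ℝ, S = Lᴴ * L := by
    open scoped MatrixOrder in
    exact CStarAlgebra.nonneg_iff_eq_star_mul_self.mp hS.nonneg
  have h : (Lᴴ * L).map Complex.ofReal = (L.map Complex.ofReal)ᴴ * L.map Complex.ofReal := by
    ext i j
    simp [Matrix.mul_apply]
  rw [h]
  exact posSemidef_conjTranspose_mul_self _

lemma posSemidef_fromBlocks_diag {N M : Type*} [Fintype N] [Fintype M]
    {S : Matrix N N ℝ} {T : Matrix M M ℝ} (hS : S.PosSemidef) (hT : T.PosSemidef) :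
    (fromBlocks S 0 0 T).PosSemidef := by
  refine .of_dotProduct_mulVec_nonneg (hS.1.fromBlocks (by simp) hT.1) fun x => ?_
  rw [← Sum.elim_comp_inl_inr x, fromBlocks_mulVec]
  have h1 := hS.dotProduct_mulVec_nonneg (x ∘ Sum.inl)
  have h2 := hT.dotProduct_mulVec_nonneg (x ∘ Sum.inr)
  simp only [dotProduct, Fintype.sum_sum_type] at h1 h2 ⊢
  simpa using add_nonneg h1 h2

/-- The dissipation inequality: `-(A + Aᵀ) = diag(0, 2 D₀)` is positive semidefinite. -/
lemma soA_dissipative {n : ℕ} (G D₀ : Matrix (Fin n) (Fin n) ℝ) (hD₀ : D₀.PosSemidef) :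
    (-((soA G D₀)ᵀ + soA G D₀)).PosSemidef := by
  have hsym : D₀ᵀ = D₀ := by simpa [conjTranspose_eq_transpose_of_trivial] using hD₀.1.eq
  have h : -((soA G D₀)ᵀ + soA G D₀) = fromBlocks 0 0 0 (D₀ + D₀) := by
    simp [soA, fromBlocks_transpose, fromBlocks_add, fromBlocks_neg, hsym]
  rw [h]
  exact posSemidef_fromBlocks_diag .zero (hD₀.add hD₀)

lemma isUnit_of_posDef_add_conjTranspose {N : Type*} [Fintype N] [DecidableEq N]
    {M : Matrix N N ℂ} (hM : (M + Mᴴ).PosDef) : IsUnit M := by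
  rw [← mulVec_injective_iff_isUnit]
  refine (injective_iff_map_eq_zero M.mulVecLin).2 fun v hv => ?_
  by_contra hne
  have hpos := hM.dotProduct_mulVec_pos hne
  rw [mulVecLin_apply] at hv
  rw [add_mulVec, hv, zero_add, dotProduct_mulVec, ← star_mulVec, hv] at hpos
  simp at hpos

/-- A real matrix with trivial kernel over `ℝ` has trivial kernel over `ℂ`: both the real and
the imaginary part of a complex kernel vector lie in the real kernel. -/
lemma mulVec_map_ofReal_injective {N M : Type*} [Fintype M] (B : Matrix N M ℝ)
    (hB : ∀ v : M → ℝ, B.mulVec v = 0 → v = 0) :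
    Function.Injective (B.map Complex.ofReal).mulVec := by
  refine (injective_iff_map_eq_zero (B.map Complex.ofReal).mulVecLin).2 fun v hv => ?_
  rw [mulVecLin_apply] at hv
  have hre := hB (fun j => (v j).re) <| by
    ext i
    simpa [mulVec, dotProduct] using congrArg Complex.re (congrFun hv i)
  have him := hB (fun j => (v j).im) <| by
    ext i
    simpa [mulVec, dotProduct] using congrArg Complex.im (congrFun hv i)
  ext j
  exact Complex.ext (congrFun hre j) (congrFun him j)

lemma posDef_resolvent_add_conjTranspose {n : ℕ} (G D₀ : Matrix (Fin n) (Fin n) ℝ)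
    (hD₀ : D₀.PosSemidef) {lam : ℂ} (hlam : 0 < lam.re) :
    ((lam • (1 : Matrix (Fin n ⊕ Fin n) (Fin n ⊕ Fin n) ℂ) - (soA G D₀).map Complex.ofReal) +
      (lam • (1 : Matrix (Fin n ⊕ Fin n) (Fin n ⊕ Fin n) ℂ) -
        (soA G D₀).map Complex.ofReal)ᴴ).PosDef := by
  have h : (lam • (1 : Matrix (Fin n ⊕ Fin n) (Fin n ⊕ Fin n) ℂ) -
        (soA G D₀).map Complex.ofReal) +
      (lam • (1 : Matrix (Fin n ⊕ Fin n) (Fin n ⊕ Fin n) ℂ) -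
        (soA G D₀).map Complex.ofReal)ᴴ =
      ((2 * lam.re : ℝ) : ℂ) • (1 : Matrix (Fin n ⊕ Fin n) (Fin n ⊕ Fin n) ℂ) +
        (-((soA G D₀)ᵀ + soA G D₀)).map Complex.ofReal := by
    have hl : lam + star lam = ((2 * lam.re : ℝ) : ℂ) := Complex.add_conj lam
    rw [← hl, conjTranspose_sub, conjTranspose_smul, conjTranspose_one, add_smul]
    ext i j
    simp
    ring
  rw [h]
  refine PosDef.add_posSemidef (PosDef.one.smul ?_)
    (posSemidef_map_ofReal (soA_dissipative G D₀ hD₀))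
  exact_mod_cast (by positivity : (0 : ℝ) < 2 * lam.re)

/-- The congruence `BᴴM⁻¹B + (BᴴM⁻¹B)ᴴ = (M⁻¹B)ᴴ (M + Mᴴ) (M⁻¹B)` transfers positive
definiteness of the Hermitian part from `M` to `BᴴM⁻¹B`. -/
lemma posDef_compressed_inv {N K : Type*} [Fintype N] [DecidableEq N] [Fintype K]
    {M : Matrix N N ℂ} (hM : (M + Mᴴ).PosDef) (B : Matrix N K ℂ)
    (hB : Function.Injective B.mulVec) :
    (Bᴴ * M⁻¹ * B + (Bᴴ * M⁻¹ * B)ᴴ).PosDef := by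
  have hU := isUnit_of_posDef_add_conjTranspose hM
  have hdet : IsUnit M.det := (isUnit_iff_isUnit_det M).1 hU
  have hinj : Function.Injective (M⁻¹ * B).mulVec := by
    have h1 : Function.Injective M⁻¹.mulVec :=
      mulVec_injective_iff_isUnit.2 ((isUnit_nonsing_inv_iff).2 hU)
    intro x y hxy
    simp only [← mulVec_mulVec] at hxy
    exact hB (h1 hxy)
  convert hM.conjTranspose_mul_mul_same hinj using 1
  have e1 : M * (M⁻¹ * B) = B := mul_nonsing_inv_cancel_left _ _ hdet
  have e2 : (M⁻¹ * B)ᴴ * Mᴴ = Bᴴ := by rw [← conjTranspose_mul, e1]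
  rw [Matrix.mul_add, Matrix.add_mul, e2, Matrix.mul_assoc _ M, e1, add_comm, Matrix.mul_assoc Bᴴ,
    conjTranspose_mul Bᴴ, conjTranspose_conjTranspose]

/-- **Internal passivity and strict positive realness of second-order structured systems.** -/
theorem so_internally_passive_strictly_positive_real {n m : ℕ}
    (G D₀ : Matrix (Fin n) (Fin n) ℝ) (B₀ : Matrix (Fin n) (Fin m) ℝ)
    (hG : IsUnit G) (hD₀sym : D₀ᵀ = D₀) (hD₀ : D₀.PosSemidef) :
    -- (1) internal passivity
    (-(KYP (soA G D₀) (soB B₀) (soB B₀)ᵀ 0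
        (1 : Matrix (Fin n ⊕ Fin n) (Fin n ⊕ Fin n) ℝ))).PosSemidef ∧
    -- (2) strict positive realness on the open right half-plane
    ((∀ v : Fin m → ℝ, B₀.mulVec v = 0 → v = 0) →
      ∀ lam : ℂ, 0 < lam.re →
        IsUnit (lam • (1 : Matrix (Fin n ⊕ Fin n) (Fin n ⊕ Fin n) ℂ) -
            (soA G D₀).map Complex.ofReal) ∧
        (soTransferFn G D₀ B₀ lam + (soTransferFn G D₀ B₀ lam)ᴴ).PosDef) := by
  refine ⟨?_, fun hB lam hlam => ?_⟩
  · have h : -(KYP (soA G D₀) (soB B₀) (soB B₀)ᵀ 0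
        (1 : Matrix (Fin n ⊕ Fin n) (Fin n ⊕ Fin n) ℝ)) =
        fromBlocks (-((soA G D₀)ᵀ + soA G D₀)) 0 0 0 := by
      simp [KYP, fromBlocks_neg]
    rw [h]
    exact posSemidef_fromBlocks_diag (soA_dissipative G D₀ hD₀) .zero
  · have hM := posDef_resolvent_add_conjTranspose G D₀ hD₀ hlam
    refine ⟨isUnit_of_posDef_add_conjTranspose hM, ?_⟩
    have hinj : Function.Injective ((soB B₀).map Complex.ofReal).mulVec := by
      refine mulVec_map_ofReal_injective _ fun v hv => hB v ?_
      ext i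
      simpa [soB, fromRows_mulVec] using congrFun hv (Sum.inr i)
    -- `B` is real, so `C = Bᵀ` is the conjugate transpose of the complexified `B`.
    have hC : ((soB B₀)ᵀ).map Complex.ofReal = ((soB B₀).map Complex.ofReal)ᴴ := by
      ext i j
      simp
    rw [soTransferFn, hC]
    exact posDef_compressed_inv hM _ hinj
end

section
/- Canonical form under congruence-similarity for diagonalizable self-adjoint pairs: Let S ∈ ℝ^{n×n} be symmetric and invertible and let A ∈ ℝ^{n×n} satisfy AᵀS = SA, and suppose the complexification of A is diagonalizable over ℂ. Then there exist T ∈ GL_n(ℝ), k, c ∈ ℕ with 2c + k = n, signs ε₁,…,ε_k ∈ {−1, 1}, reals λ₁,…,λ_k ∈ ℝ, σ₁,…,σ_c ∈ ℝ, and τ₁,…,τ_c > 0 such that Tᵀ S T = diag(ε₁, …, ε_k, J_c) and T⁻¹ A T = diag(λ₁, …, λ_k, P_{σ₁,τ₁}, …, P_{σ_c,τ_c}), where J_c is the block-diagonal matrix consisting of c copies of [[0,1],[1,0]] and P_{σ,τ} := [[σ, τ],[−τ, σ]]. -/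
/-!
Regard `S` as a nondegenerate symmetric bilinear form `B` on `ℝⁿ` and `A` as a `B`-self-adjoint
operator `f`. Diagonalizability over `ℂ` enters only through the following consequence, which is
inherited by invariant subspaces (`IsReducedEnd`): `p(f)² x = 0` implies `p(f) x = 0` for every real
polynomial `p`.

Consequently `V = ker p(f) ⊕ range p(f)`, and the sum is `B`-orthogonal because `p(f)` is
self-adjoint, so `B` is nondegenerate on `ker p(f)`. If this kernel is nonzero, polarization yields
some `x` in it with `B x x ≠ 0` (`exists_anisotropic`). A root of the minimal polynomial provides
either `p = X - λ`, and then a multiple of `x` is an eigenvector with `B x x = ±1`, or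
`p = (X - σ)² + τ²` with `τ > 0`, and then a complex rescaling of `x` produces a hyperbolic pair on
which `f` acts by `[[σ, τ], [-τ, σ]]` (`exists_hyperbolic_pair`). The orthogonal complement of the
resulting line or plane is again `f`-invariant and nondegenerate, and induction on the dimension
gives a full system of vectors (`hasCanonicalSystem`), which are the columns of `T`. Since their Gram
matrix `G` satisfies `G² = 1`, the inverse of `T` is `G Tᵀ S`.
-/

open Matrix

/-- A real square matrix is diagonalizable over `ℂ` if its complexification is similar to
a diagonal matrix. -/
def IsDiagonalizableOverC {N : Type*} [Fintype N] [DecidableEq N]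
    (A : Matrix N N ℝ) : Prop :=
  ∃ (P : Matrix N N ℂ) (d : N → ℂ),
    IsUnit P ∧ A.map Complex.ofReal = P * diagonal d * P⁻¹

section

open Polynomial Module

/-! ### Endomorphisms with reduced polynomial calculus -/

/-- The algebra `ℝ[f]` is reduced, expressed elementwise: every polynomial in `f` has the same kernel
as its square. -/
def IsReducedEnd {V : Type*} [AddCommGroup V] [Module ℝ V] (f : End ℝ V) : Prop :=
  ∀ (p : ℝ[X]) (x : V), aeval f p (aeval f p x) = 0 → aeval f p x = 0

lemma aeval_selfAdjoint {V : Type*} [AddCommGroup V] [Module ℝ V]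
    (B : V →ₗ[ℝ] V →ₗ[ℝ] ℝ) (f : End ℝ V) (hf : ∀ x y, B (f x) y = B x (f y)) (p : ℝ[X]) :
    ∀ x y, B (aeval f p x) y = B x (aeval f p y) := by
  induction p using Polynomial.induction_on' with
  | add p q hp hq => intro x y; simp [hp, hq]
  | monomial n a =>
    have key : ∀ x y, B ((f ^ n) x) y = B x ((f ^ n) y) := by
      induction n with
      | zero => simp
      | succ n ih =>
        intro x y
        rw [pow_succ, Module.End.mul_apply, ih, hf, ← Module.End.mul_apply, ← pow_succ', pow_succ]
    intro x y
    simp [aeval_monomial, key]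

lemma coe_aeval_restrict {V : Type*} [AddCommGroup V] [Module ℝ V] (f : End ℝ V)
    (W : Submodule ℝ V) (h : ∀ x ∈ W, f x ∈ W) (p : ℝ[X]) :
    ∀ x : W, ((aeval (f.restrict h) p x : W) : V) = aeval f p (x : V) := by
  induction p using Polynomial.induction_on' with
  | add p q hp hq => intro x; simp [hp, hq]
  | monomial n a =>
    have key : ∀ x : W, (((f.restrict h) ^ n) x : V) = (f ^ n) (x : V) := by
      induction n with
      | zero => simp
      | succ n ih => intro x; simp [pow_succ, ih]
    intro x
    simp [aeval_monomial, key]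

lemma IsReducedEnd.restrict {V : Type*} [AddCommGroup V] [Module ℝ V] {f : End ℝ V}
    (hf : IsReducedEnd f) (W : Submodule ℝ V) (h : ∀ x ∈ W, f x ∈ W) :
    IsReducedEnd (f.restrict h) := by
  intro p x hx
  have := congrArg (Subtype.val) hx
  rw [coe_aeval_restrict, coe_aeval_restrict] at this
  apply Subtype.ext
  rw [coe_aeval_restrict]
  exact hf p _ this

/-- Nondegeneracy of `B` on the nonzero kernel of `p(f)`, in quadratic form: as `ker p(f)` and
`range p(f)` are orthogonal and span `V`, the form `B` cannot vanish identically on the kernel. -/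
lemma exists_anisotropic {V : Type*} [AddCommGroup V] [Module ℝ V] [FiniteDimensional ℝ V]
    (B : V →ₗ[ℝ] V →ₗ[ℝ] ℝ) (hs : ∀ x y, B x y = B y x)
    (hn : ∀ x, (∀ y, B x y = 0) → x = 0)
    (f : End ℝ V) (hf : ∀ x y, B (f x) y = B x (f y)) (hr : IsReducedEnd f)
    (p : ℝ[X]) (hp : ∃ x, x ≠ 0 ∧ aeval f p x = 0) :
    ∃ x, aeval f p x = 0 ∧ B x x ≠ 0 := by
  by_contra! hcon
  obtain ⟨x, hx0, hx⟩ := hp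
  apply hx0
  apply hn
  set g := aeval f p with hg
  have hdisj : Disjoint (LinearMap.ker g) (LinearMap.range g) := by
    rw [Submodule.disjoint_def]
    rintro _ h1 ⟨z, rfl⟩
    exact hr p z h1
  have htop : LinearMap.ker g ⊔ LinearMap.range g = ⊤ := by
    apply Submodule.eq_top_of_disjoint _ _ _ hdisj
    rw [add_comm, LinearMap.finrank_range_add_finrank_ker]
  intro y
  obtain ⟨a, ha, b, ⟨c, rfl⟩, rfl⟩ := Submodule.mem_sup.1 (htop ▸ Submodule.mem_top : y ∈ _)
  have h1 : B x (g c) = 0 := by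
    rw [← aeval_selfAdjoint B f hf p, ← hg, hx]; simp
  have ha : g a = 0 := ha
  -- Polarization turns the vanishing of the quadratic form on `ker g` into that of `B`.
  have h2 := hcon (x + a) (by rw [map_add, hx, ha, add_zero])
  have h3 := hcon x hx
  have h4 := hcon a ha
  simp only [map_add, LinearMap.add_apply, h3, h4, hs a x] at h2
  rw [map_add, h1]
  linarith

lemma exists_ker_of_dvd_minpoly {V : Type*} [AddCommGroup V] [Module ℝ V] [FiniteDimensional ℝ V]
    (f : End ℝ V) (q : ℝ[X]) (hq : 0 < q.natDegree) (hd : q ∣ minpoly ℝ f) :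
    ∃ x, x ≠ 0 ∧ aeval f q x = 0 := by
  obtain ⟨r, hr⟩ := hd
  have hm : minpoly ℝ f ≠ 0 := minpoly.ne_zero (Algebra.IsIntegral.isIntegral f)
  have hq0 : q ≠ 0 := by rintro rfl; simp at hq
  have hr0 : r ≠ 0 := by rintro rfl; simp [hm] at hr
  have h1 : aeval f r ≠ 0 := by
    intro h
    have h2 := natDegree_le_of_dvd (minpoly.dvd ℝ f h) hr0
    rw [hr, natDegree_mul hq0 hr0] at h2
    omega
  obtain ⟨y, hy⟩ : ∃ y, aeval f r y ≠ 0 := by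
    by_contra! h
    exact h1 (LinearMap.ext h)
  refine ⟨aeval f r y, hy, ?_⟩
  rw [← Module.End.mul_apply, ← map_mul, ← hr, minpoly.aeval]
  rfl

/-- A real or complex root of the minimal polynomial gives a real linear or definite quadratic
polynomial in `f` with nonzero kernel. -/
lemma exists_spectral_kernel {V : Type*} [AddCommGroup V] [Module ℝ V] [FiniteDimensional ℝ V]
    [Nontrivial V] (f : End ℝ V) :
    (∃ l : ℝ, ∃ x, x ≠ 0 ∧ aeval f (X - C l) x = 0) ∨
    (∃ s t : ℝ, 0 < t ∧ ∃ x, x ≠ 0 ∧ aeval f ((X - C s) ^ 2 + C (t ^ 2)) x = 0) := by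
  have hdeg : 0 < (minpoly ℝ f).natDegree :=
    minpoly.natDegree_pos (Algebra.IsIntegral.isIntegral f)
  obtain ⟨z, hz⟩ := IsAlgClosed.exists_aeval_eq_zero ℂ (minpoly ℝ f)
    (natDegree_pos_iff_degree_pos.1 hdeg).ne'
  by_cases him : z.im = 0
  · left
    refine ⟨z.re, exists_ker_of_dvd_minpoly f _ (by simp) ?_⟩
    rw [dvd_iff_isRoot, IsRoot.def]
    have hz' : z = algebraMap ℝ ℂ z.re := Complex.ext rfl him
    rw [hz', aeval_algebraMap_apply] at hz
    rw [map_eq_zero, coe_aeval_eq_eval] at hz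
    exact hz
  · right
    refine ⟨z.re, |z.im|, abs_pos.2 him, exists_ker_of_dvd_minpoly f _ ?_ ?_⟩
    · have : ((X - C z.re) ^ 2 + C (|z.im| ^ 2) : ℝ[X]).natDegree = 2 := by
        rw [natDegree_add_C, natDegree_pow, natDegree_X_sub_C]
      omega
    · have := quadratic_dvd_of_aeval_eq_zero_im_ne_zero (p := minpoly ℝ f) hz him
      convert this using 1
      rw [sq_abs, ← Complex.normSq_eq_norm_sq, Complex.normSq_apply]
      simp only [map_mul, map_add, map_pow, C_ofNat]
      ring

/-! ### Canonical systems -/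

/-- A canonical system for the pair `(B, f)`: vectors `e i` and pairs `(u j, v j)`, `2c + k = dim V`
vectors in total, such that the `e i` are mutually orthogonal eigenvectors of norm `±1`, each
`(u j, v j)` is a hyperbolic pair spanning an `f`-invariant plane on which `f` acts by
`[[σ, τ], [-τ, σ]]` with `0 < τ`, and all these lines and planes are mutually orthogonal. -/
def HasCanonicalSystem {V : Type*} [AddCommGroup V] [Module ℝ V]
    (B : V →ₗ[ℝ] V →ₗ[ℝ] ℝ) (f : End ℝ V) : Prop :=
  ∃ k c : ℕ, 2 * c + k = finrank ℝ V ∧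
    ∃ (e : Fin k → V) (u v : Fin c → V) (ε lam : Fin k → ℝ) (σ τ : Fin c → ℝ),
      (∀ i, ε i = 1 ∨ ε i = -1) ∧ (∀ j, 0 < τ j) ∧
      (∀ i j, B (e i) (e j) = if i = j then ε i else 0) ∧
      (∀ i j, B (e i) (u j) = 0) ∧ (∀ i j, B (e i) (v j) = 0) ∧
      (∀ i j, B (u i) (u j) = 0) ∧ (∀ i j, B (v i) (v j) = 0) ∧
      (∀ i j, B (u i) (v j) = if i = j then 1 else 0) ∧
      (∀ i, f (e i) = lam i • e i) ∧
      (∀ j, f (u j) = σ j • u j - τ j • v j) ∧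
      (∀ j, f (v j) = τ j • u j + σ j • v j)

/-- A canonical system on the orthogonal complement of a unit eigenvector extends to `V`. -/
lemma HasCanonicalSystem.of_line {V : Type*} [AddCommGroup V] [Module ℝ V] [FiniteDimensional ℝ V]
    (B : V →ₗ[ℝ] V →ₗ[ℝ] ℝ) (hs : ∀ x y, B x y = B y x) (f : End ℝ V)
    (w : V) (l δ : ℝ) (hδ : δ = 1 ∨ δ = -1) (hw : B w w = δ) (hfw : f w = l • w)
    (h : ∀ x ∈ LinearMap.ker (B w), f x ∈ LinearMap.ker (B w))
    (hW : HasCanonicalSystem (B.domRestrict₁₂ (LinearMap.ker (B w)) (LinearMap.ker (B w)))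
      (f.restrict h)) :
    HasCanonicalSystem B f := by
  obtain ⟨k, c, hkc, e, u, v, ε, lam, σ, τ, hε, hτ, hee, heu, hev, huu, hvv, huv, hfe, hfu, hfv⟩ := hW
  have hperp : ∀ x : LinearMap.ker (B w), B w x = 0 := fun x => x.2
  have hperp' : ∀ x : LinearMap.ker (B w), B x w = 0 := fun x => by rw [hs]; exact x.2
  have hδ0 : δ ≠ 0 := by rcases hδ with rfl | rfl <;> norm_num
  have hsurj : LinearMap.range (B w) = ⊤ := by
    rw [LinearMap.range_eq_top]
    intro t
    refine ⟨(t / δ) • w, ?_⟩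
    simp [hw, hδ0]
  have hrank := LinearMap.finrank_range_add_finrank_ker (B w)
  rw [hsurj, finrank_top, finrank_self] at hrank
  refine ⟨k + 1, c, by omega, Fin.cons w (fun i => (e i : V)), fun j => u j, fun j => v j,
    Fin.cons δ ε, Fin.cons l lam, σ, τ, ?_, hτ, ?_, ?_, ?_, huu, hvv, huv, ?_,
    fun j => congrArg Subtype.val (hfu j), fun j => congrArg Subtype.val (hfv j)⟩
  · exact Fin.cases (by simpa using hδ) (by simpa using hε)
  · intro i j
    induction i using Fin.cases with
    | zero =>
      induction j using Fin.cases with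
      | zero => simp [hw]
      | succ j => simp [(Fin.succ_ne_zero j).symm]
    | succ i =>
      induction j using Fin.cases with
      | zero => simp [hperp']
      | succ j => simpa [Fin.succ_inj] using! hee i j
  · intro i j
    induction i using Fin.cases with
    | zero => simp
    | succ i => exact heu i j
  · intro i j
    induction i using Fin.cases with
    | zero => simp
    | succ i => exact hev i j
  · intro i
    induction i using Fin.cases with
    | zero => simpa using hfw
    | succ i => exact congrArg Subtype.val (hfe i)

/-- A canonical system on the orthogonal complement of an `f`-invariant hyperbolic plane extends to
`V`. -/
lemma HasCanonicalSystem.of_plane {V : Type*} [AddCommGroup V] [Module ℝ V]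
    [FiniteDimensional ℝ V]
    (B : V →ₗ[ℝ] V →ₗ[ℝ] ℝ) (hs : ∀ x y, B x y = B y x) (f : End ℝ V)
    (a b : V) (s t : ℝ) (ht : 0 < t) (haa : B a a = 0) (hbb : B b b = 0) (hab : B a b = 1)
    (hfa : f a = s • a - t • b) (hfb : f b = t • a + s • b)
    (W : Submodule ℝ V) (hWdef : W = LinearMap.ker ((B a).prod (B b)))
    (h : ∀ x ∈ W, f x ∈ W)
    (hW : HasCanonicalSystem (B.domRestrict₁₂ W W) (f.restrict h)) :
    HasCanonicalSystem B f := by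
  obtain ⟨k, c, hkc, e, u, v, ε, lam, σ, τ, hε, hτ, hee, heu, hev, huu, hvv, huv, hfe, hfu, hfv⟩ := hW
  have hmem : ∀ x : W, B a x = 0 ∧ B b x = 0 := fun x => by
    have := hWdef.le x.2
    simpa using this
  have ha : ∀ x : W, B a x = 0 := fun x => (hmem x).1
  have hb : ∀ x : W, B b x = 0 := fun x => (hmem x).2
  have ha' : ∀ x : W, B x a = 0 := fun x => by rw [hs, ha]
  have hb' : ∀ x : W, B x b = 0 := fun x => by rw [hs, hb]
  have hba : B b a = 1 := by rw [hs, hab]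
  have hsurj : LinearMap.range ((B a).prod (B b)) = ⊤ := by
    rw [LinearMap.range_eq_top]
    rintro ⟨y, z⟩
    refine ⟨z • a + y • b, ?_⟩
    simp [haa, hbb, hab, hba]
  have hrank := LinearMap.finrank_range_add_finrank_ker ((B a).prod (B b))
  rw [hsurj, finrank_top, finrank_prod, finrank_self, ← hWdef] at hrank
  refine ⟨k, c + 1, by omega, fun i => e i, Fin.cons a (fun j => (u j : V)),
    Fin.cons b (fun j => (v j : V)), ε, lam, Fin.cons s σ, Fin.cons t τ, hε,
    Fin.cases (by simpa using ht) (by simpa using hτ), hee, ?_, ?_, ?_, ?_, ?_,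
    fun i => congrArg Subtype.val (hfe i), ?_, ?_⟩
  · intro i j
    induction j using Fin.cases with
    | zero => simp [ha']
    | succ j => exact heu i j
  · intro i j
    induction j using Fin.cases with
    | zero => simp [hb']
    | succ j => exact hev i j
  · intro i j
    induction i using Fin.cases with
    | zero =>
      induction j using Fin.cases with
      | zero => simp [haa]
      | succ j => simp [ha]
    | succ i =>
      induction j using Fin.cases with
      | zero => simp [ha']
      | succ j => exact huu i j
  · intro i j
    induction i using Fin.cases with
    | zero =>
      induction j using Fin.cases with
      | zero => simp [hbb]
      | succ j => simp [hb]
    | succ i =>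
      induction j using Fin.cases with
      | zero => simp [hb']
      | succ j => exact hvv i j
  · intro i j
    induction i using Fin.cases with
    | zero =>
      induction j using Fin.cases with
      | zero => simp [hab]
      | succ j => simp [ha, (Fin.succ_ne_zero j).symm]
    | succ i =>
      induction j using Fin.cases with
      | zero => simp [hb']
      | succ j => simpa [Fin.succ_inj] using! huv i j
  · intro j
    induction j using Fin.cases with
    | zero => simpa using hfa
    | succ j => exact congrArg Subtype.val (hfu j)
  · intro j
    induction j using Fin.cases with
    | zero => simpa using hfb
    | succ j => exact congrArg Subtype.val (hfv j)

/-- In the kernel of `(f - s)² + t²`, the operator `J = (f - s) / t` is a complex structure, and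
`x ↦ B x x - i B x (J x)` is the quadratic form of a complex bilinear form. Multiplying an
anisotropic `x` by a complex square root of `i / (B x x - i B x (J x))` gives a vector `a` which,
with `b = -J a`, forms a hyperbolic pair. -/
lemma exists_hyperbolic_pair {V : Type*} [AddCommGroup V] [Module ℝ V]
    (B : V →ₗ[ℝ] V →ₗ[ℝ] ℝ) (hs : ∀ x y, B x y = B y x)
    (f : End ℝ V) (hf : ∀ x y, B (f x) y = B x (f y))
    (s t : ℝ) (ht : 0 < t) (x : V) (hx : aeval f ((X - C s) ^ 2 + C (t ^ 2)) x = 0)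
    (hxx : B x x ≠ 0) :
    ∃ a b : V, B a a = 0 ∧ B b b = 0 ∧ B a b = 1 ∧
      f a = s • a - t • b ∧ f b = t • a + s • b := by
  have htne := ht.ne'
  obtain ⟨y, hy⟩ : ∃ y, y = t⁻¹ • (f x - s • x) := ⟨_, rfl⟩
  have hfx : f x = s • x + t • y := by
    rw [hy, smul_smul, mul_inv_cancel₀ htne, one_smul]; abel
  have hfy : f y = s • y - t • x := by
    have h1 : f (f x) - s • f x - s • (f x - s • x) + (t ^ 2) • x = 0 := by
      simpa [pow_two, mul_smul, Algebra.algebraMap_eq_smul_one] using hx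
    have h2 : t • f y = t • (s • y - t • x) := by
      simp only [hfx, map_add, map_smul] at h1
      rw [← sub_eq_zero]
      rw [← h1]
      module
    exact smul_right_injective V htne h2
  have hyx : B y x = B x y := hs y x
  have hyy : B y y = - B x x := by
    have h1 := hf x y
    simp only [hfx, hfy, map_add, map_sub, map_smul, LinearMap.add_apply, LinearMap.smul_apply,
      smul_eq_mul] at h1
    have h2 : t * (B y y + B x x) = 0 := by linarith
    have := (mul_eq_zero.1 h2).resolve_left htne
    linarith
  obtain ⟨α, hα⟩ : ∃ α, α = B x x := ⟨_, rfl⟩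
  obtain ⟨β, hβ⟩ : ∃ β, β = B x y := ⟨_, rfl⟩
  have hne : (⟨α, -β⟩ : ℂ) ≠ 0 := by
    intro h
    exact hxx (hα ▸ congrArg Complex.re h)
  obtain ⟨z, hz⟩ := IsAlgClosed.exists_pow_nat_eq (Complex.I / ⟨α, -β⟩) (n := 2) (by norm_num)
  rw [eq_div_iff hne, pow_two] at hz
  have hre := congrArg Complex.re hz
  have him := congrArg Complex.im hz
  simp only [Complex.mul_re, Complex.mul_im, Complex.I_re, Complex.I_im] at hre him
  refine ⟨z.re • x + z.im • y, z.im • x - z.re • y, ?_, ?_, ?_, ?_, ?_⟩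
  · simp only [map_add, map_smul, LinearMap.add_apply, LinearMap.smul_apply, smul_eq_mul, hyx, hyy,
      ← hα, ← hβ]
    linear_combination hre
  · simp only [map_sub, map_smul, LinearMap.sub_apply, LinearMap.smul_apply, smul_eq_mul, hyx, hyy,
      ← hα, ← hβ]
    linear_combination -hre
  · simp only [map_add, map_sub, map_smul, LinearMap.add_apply, LinearMap.smul_apply, smul_eq_mul,
      hyx, hyy, ← hα, ← hβ]
    linear_combination him
  · simp only [map_add, map_smul, hfx, hfy]
    module
  · simp only [map_sub, map_smul, hfx, hfy]
    module

/-- Existence of canonical systems, by strong induction on the dimension `N`: split off an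
eigenvector or a hyperbolic pair and pass to the orthogonal complement. -/
theorem hasCanonicalSystem (N : ℕ) : ∀ {V : Type} [AddCommGroup V] [Module ℝ V]
    [FiniteDimensional ℝ V] (B : V →ₗ[ℝ] V →ₗ[ℝ] ℝ) (_ : ∀ x y, B x y = B y x)
    (_ : ∀ x, (∀ y, B x y = 0) → x = 0)
    (f : End ℝ V) (_ : ∀ x y, B (f x) y = B x (f y)) (_ : IsReducedEnd f)
    (_ : finrank ℝ V = N), HasCanonicalSystem B f := by
  induction N using Nat.strong_induction_on with
  | _ N ih =>
  intro V _ _ _ B hs hn f hf hr hN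
  rcases Nat.eq_zero_or_pos N with h0 | hpos
  · exact ⟨0, 0, by omega, Fin.elim0, Fin.elim0, Fin.elim0, Fin.elim0, Fin.elim0, Fin.elim0,
      Fin.elim0, by simp⟩
  have : Nontrivial V := Module.nontrivial_of_finrank_pos (R := ℝ) (by omega)
  rcases exists_spectral_kernel f with ⟨l, hl⟩ | ⟨s, t, ht, hst⟩
  · obtain ⟨x, hx, hxx⟩ := exists_anisotropic B hs hn f hf hr _ hl
    have hfx : f x = l • x := by
      simpa [Algebra.algebraMap_eq_smul_one, sub_eq_zero] using hx
    obtain ⟨r, hr0, hrδ⟩ : ∃ r : ℝ, r ≠ 0 ∧ (r * (r * B x x) = 1 ∨ r * (r * B x x) = -1) := by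
      have habs : 0 < |B x x| := abs_pos.2 hxx
      have hsq := Real.mul_self_sqrt habs.le
      have hsq0 := (Real.sqrt_pos.2 habs).ne'
      refine ⟨(√|B x x|)⁻¹, inv_ne_zero hsq0, ?_⟩
      rw [← mul_assoc, ← mul_inv, hsq]
      rcases abs_choice (B x x) with h | h <;> rw [h]
      · left; exact inv_mul_cancel₀ hxx
      · right; rw [inv_neg, neg_mul, inv_mul_cancel₀ hxx]
    obtain ⟨w, hw⟩ : ∃ w, w = r • x := ⟨_, rfl⟩
    have hww : B w w = 1 ∨ B w w = -1 := by simpa [hw] using hrδ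
    have hww0 : B w w ≠ 0 := by rcases hww with h | h <;> rw [h] <;> norm_num
    have hfw : f w = l • w := by rw [hw, map_smul, hfx, smul_comm]
    have hinv : ∀ x ∈ LinearMap.ker (B w), f x ∈ LinearMap.ker (B w) := by
      intro x hx
      rw [LinearMap.mem_ker] at hx ⊢
      simp [← hf, hfw, hx]
    refine HasCanonicalSystem.of_line B hs f w l _ hww rfl hfw hinv ?_
    have hlt : finrank ℝ (LinearMap.ker (B w)) < N := by
      rw [← hN]
      exact Submodule.finrank_lt
        (fun h => hww0 (LinearMap.mem_ker.1 (h ▸ Submodule.mem_top : w ∈ LinearMap.ker (B w))))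
    refine ih _ hlt (B.domRestrict₁₂ _ _) (fun x y => hs x y) ?_ (f.restrict hinv)
      (fun x y => hf x y) (hr.restrict _ hinv) rfl
    intro x hx
    apply Subtype.ext
    apply hn
    intro y
    have h1 : B w x = 0 := x.2
    -- Subtracting from `y` its projection to `w` does not change its product with `x`.
    have hy : y - (B w y / B w w) • w ∈ LinearMap.ker (B w) := by
      simp [hww0]
    have : B x (y - (B w y / B w w) • w) = 0 := hx ⟨_, hy⟩
    simpa [hs x w, h1] using this
  · obtain ⟨x, hx, hxx⟩ := exists_anisotropic B hs hn f hf hr _ hst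
    obtain ⟨a, b, haa, hbb, hab, hfa, hfb⟩ := exists_hyperbolic_pair B hs f hf s t ht x hx hxx
    have hba : B b a = 1 := by rw [hs, hab]
    obtain ⟨W, hW⟩ : ∃ W, W = LinearMap.ker ((B a).prod (B b)) := ⟨_, rfl⟩
    have hmem : ∀ x, x ∈ W ↔ B a x = 0 ∧ B b x = 0 := fun x => by simp [hW]
    have hinv : ∀ x ∈ W, f x ∈ W := by
      intro x hx
      rw [hmem] at hx ⊢
      simp [← hf, hfa, hfb, hx.1, hx.2]
    refine HasCanonicalSystem.of_plane B hs f a b s t ht haa hbb hab hfa hfb W hW hinv ?_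
    have ha0 : a ∉ W := by simp [hmem, hba]
    have hlt : finrank ℝ W < N := by
      rw [← hN]
      exact Submodule.finrank_lt (fun h => ha0 (h ▸ Submodule.mem_top))
    refine ih _ hlt (B.domRestrict₁₂ W W) (fun x y => hs x y) ?_ (f.restrict hinv)
      (fun x y => hf x y) (hr.restrict W hinv) rfl
    intro x hx
    apply Subtype.ext
    apply hn
    intro y
    obtain ⟨h1, h2⟩ := (hmem x).1 x.2
    -- Subtracting from `y` its projection to the plane does not change its product with `x`.
    have hy : y - B b y • a - B a y • b ∈ W := by
      simp [hmem, haa, hbb, hab, hba]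
    have : B x (y - B b y • a - B a y • b) = 0 := hx ⟨_, hy⟩
    simpa [hs x a, hs x b, h1, h2] using this

/-! ### Matrices diagonalizable over `ℂ` -/

lemma map_aeval_eq_conj {n : ℕ} (A : Matrix (Fin n) (Fin n) ℝ) (P : Matrix (Fin n) (Fin n) ℂ)
    (d : Fin n → ℂ) (hP : IsUnit P) (hA : A.map Complex.ofReal = P * diagonal d * P⁻¹)
    (p : ℝ[X]) :
    (aeval A p).map Complex.ofReal = P * diagonal (fun i => aeval (d i) p) * P⁻¹ := by
  have hPP : P * P⁻¹ = 1 := mul_nonsing_inv P ((isUnit_iff_isUnit_det P).1 hP)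
  have hPP' : P⁻¹ * P = 1 := nonsing_inv_mul P ((isUnit_iff_isUnit_det P).1 hP)
  induction p using Polynomial.induction_on' with
  | add p q hp hq =>
    simp only [map_add]
    rw [Matrix.map_add _ (by simp), hp, hq, ← diagonal_add, mul_add, add_mul]
  | monomial m a =>
    have key : (A ^ m).map Complex.ofReal = P * diagonal (fun i => d i ^ m) * P⁻¹ := by
      induction m with
      | zero =>
        simp only [pow_zero]
        rw [Matrix.map_one _ (by simp) (by simp)]
        simp [hPP]
      | succ m ih =>
        have : (A ^ m * A).map Complex.ofReal
            = (A ^ m).map Complex.ofReal * A.map Complex.ofReal :=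
          Matrix.map_mul (f := Complex.ofRealHom)
        rw [pow_succ, this, ih, hA]
        calc _ = P * diagonal (fun i => d i ^ m) * (P⁻¹ * P) * diagonal d * P⁻¹ := by
              simp only [mul_assoc]
          _ = _ := by
              rw [hPP', mul_one, mul_assoc P, diagonal_mul_diagonal]
              simp only [pow_succ]
    have h2 : (aeval A (monomial m a)).map Complex.ofReal
        = (a : ℂ) • (A ^ m).map Complex.ofReal := by
      ext i j
      simp [aeval_monomial, Algebra.algebraMap_eq_smul_one]
    have h3 : diagonal (fun i => aeval (d i) (monomial m a))
        = (a : ℂ) • diagonal (fun i => d i ^ m) := by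
      rw [← diagonal_smul]
      congr 1
      ext i
      simp [aeval_monomial]
    rw [h2, key, h3]
    simp

lemma isReducedEnd_of_diagonalizable {n : ℕ} (A : Matrix (Fin n) (Fin n) ℝ)
    (h : IsDiagonalizableOverC A) : IsReducedEnd (Matrix.toLin' A) := by
  obtain ⟨P, d, hP, hA⟩ := h
  have hPP' : P⁻¹ * P = 1 := nonsing_inv_mul P ((isUnit_iff_isUnit_det P).1 hP)
  intro p x hx
  have haev : aeval (Matrix.toLin' A) p = Matrix.toLin' (aeval A p) :=
    aeval_algHom_apply (Matrix.toLinAlgEquiv' (R := ℝ) (n := Fin n)).toAlgHom A p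
  rw [haev] at hx ⊢
  simp only [toLin'_apply] at hx ⊢
  have hM := map_aeval_eq_conj A P d hP hA p
  set M := aeval A p
  have hcast : ∀ y : Fin n → ℝ, (fun i => ((M *ᵥ y) i : ℂ))
      = M.map Complex.ofReal *ᵥ (fun i => (y i : ℂ)) := by
    intro y
    ext i
    simp [mulVec, dotProduct]
  have hx' : M.map Complex.ofReal *ᵥ (M.map Complex.ofReal *ᵥ (fun i => (x i : ℂ))) = 0 := by
    rw [← hcast, ← hcast, hx]
    ext i; simp
  set z : Fin n → ℂ := fun i => (x i : ℂ)
  set q : Fin n → ℂ := fun i => aeval (d i) p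
  have h1 : diagonal q *ᵥ (diagonal q *ᵥ (P⁻¹ *ᵥ z)) = 0 := by
    have := congrArg (fun y => P⁻¹ *ᵥ y) hx'
    simp only [hM, mulVec_mulVec, mulVec_zero] at this ⊢
    rw [← this]
    congr 1
    calc _ = (P⁻¹ * P) * diagonal q * (P⁻¹ * P) * diagonal q * P⁻¹ := by
          simp only [hPP', one_mul, mul_one, mul_assoc]
      _ = _ := by simp only [mul_assoc]
  have h2 : diagonal q *ᵥ (P⁻¹ *ᵥ z) = 0 := by
    ext i
    have := congrFun h1 i
    simp only [mulVec_diagonal, Pi.zero_apply, mul_eq_zero] at this ⊢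
    tauto
  have h3 : M.map Complex.ofReal *ᵥ z = 0 := by
    rw [hM, mul_assoc, ← mulVec_mulVec, ← mulVec_mulVec, h2, mulVec_zero]
  rw [← hcast] at h3
  ext i
  simpa using congrFun h3 i

end

/-- **Canonical form under congruence-similarity for diagonalizable self-adjoint pairs**
(Gohberg–Lancaster–Rodman). -/
theorem canonical_form_congruence_similarity {n : ℕ}
    (S A : Matrix (Fin n) (Fin n) ℝ)
    (hSsym : Sᵀ = S) (hSinv : IsUnit S)
    (hSA : Aᵀ * S = S * A)
    (hdiag : IsDiagonalizableOverC A) :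
    ∃ (k c : ℕ), 2 * c + k = n ∧
      ∃ (T : Matrix (Fin n) (Fin k ⊕ (Fin 2 × Fin c)) ℝ)
        (Tinv : Matrix (Fin k ⊕ (Fin 2 × Fin c)) (Fin n) ℝ)
        (ε lam : Fin k → ℝ) (σ τ : Fin c → ℝ),
        T * Tinv = 1 ∧ Tinv * T = 1 ∧
        (∀ i, ε i = 1 ∨ ε i = -1) ∧ (∀ j, 0 < τ j) ∧
        Tᵀ * S * T =
          fromBlocks (diagonal ε) 0 0
            (blockDiagonal fun _ : Fin c => !![(0:ℝ), 1; 1, 0]) ∧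
        Tinv * A * T =
          fromBlocks (diagonal lam) 0 0
            (blockDiagonal fun j : Fin c => !![σ j, τ j; -τ j, σ j]) := by
  obtain ⟨B, hB⟩ : ∃ B : (Fin n → ℝ) →ₗ[ℝ] (Fin n → ℝ) →ₗ[ℝ] ℝ, ∀ x y, B x y = x ⬝ᵥ S *ᵥ y :=
    ⟨Matrix.toLinearMap₂' ℝ S, fun x y => Matrix.toLinearMap₂'_apply' S x y⟩
  have hs : ∀ x y, B x y = B y x := by
    intro x y
    rw [hB, hB, dotProduct_mulVec, dotProduct_comm, ← mulVec_transpose, hSsym]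
  have hn : ∀ x, (∀ y, B x y = 0) → x = 0 := by
    intro x hx
    have h1 : S *ᵥ x = 0 := by
      apply dotProduct_eq_zero
      intro y
      rw [dotProduct_comm, ← hB, hs, hx]
    exact (mulVec_injective_iff_isUnit.2 hSinv) (by rw [h1, mulVec_zero])
  have hf : ∀ x y, B (toLin' A x) y = B x (toLin' A y) := by
    intro x y
    rw [hB, hB, toLin'_apply, toLin'_apply, mulVec_mulVec, ← hSA, ← mulVec_mulVec,
      dotProduct_mulVec x, vecMul_transpose]
  obtain ⟨k, c, hkc, e, u, v, ε, lam, σ, τ, hε, hτ, hee, heu, hev, huu, hvv, huv, hfe, hfu, hfv⟩ :=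
    hasCanonicalSystem n B hs hn (toLin' A) hf (isReducedEnd_of_diagonalizable A hdiag) (by simp)
  rw [Module.finrank_fin_fun] at hkc
  have hue : ∀ i j, B (u j) (e i) = 0 := fun i j => by rw [hs, heu]
  have hve : ∀ i j, B (v j) (e i) = 0 := fun i j => by rw [hs, hev]
  have hvu : ∀ i j, B (v i) (u j) = if i = j then 1 else 0 := fun i j => by
    rw [hs, huv]; simp only [eq_comm]
  -- The columns of `T` are the vectors of the canonical system.
  obtain ⟨F, hF⟩ : ∃ F : Fin k ⊕ (Fin 2 × Fin c) → Fin n → ℝ,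
      F = Sum.elim e (fun q => ![u q.2, v q.2] q.1) := ⟨_, rfl⟩
  obtain ⟨T, hT⟩ : ∃ T : Matrix (Fin n) (Fin k ⊕ (Fin 2 × Fin c)) ℝ, T = (of F)ᵀ := ⟨_, rfl⟩
  obtain ⟨G, hG⟩ : ∃ G : Matrix (Fin k ⊕ (Fin 2 × Fin c)) (Fin k ⊕ (Fin 2 × Fin c)) ℝ,
    G = fromBlocks (diagonal ε) 0 0
            (blockDiagonal fun _ : Fin c => !![(0:ℝ), 1; 1, 0]) := ⟨_, rfl⟩
  have hTST : Tᵀ * S * T = G := by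
    have hent : ∀ i j, (Tᵀ * S * T) i j = B (F i) (F j) := by
      intro i j
      rw [hB, hT, transpose_transpose, Matrix.mul_assoc]
      rfl
    ext i j
    rw [hent, hG, hF]
    rcases i with i | ⟨i, i'⟩ <;> rcases j with j | ⟨j, j'⟩
    · simp [hee, diagonal_apply]
    · fin_cases j <;> simp [heu, hev]
    · fin_cases i <;> simp [hue, hve]
    · fin_cases i <;> fin_cases j <;> simp [huu, huv, hvv, hvu, blockDiagonal_apply]
  have hGG : G * G = 1 := by
    have hJ : (!![(0:ℝ), 1; 1, 0] * !![(0:ℝ), 1; 1, 0]) = 1 := by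
      ext i j; fin_cases i <;> fin_cases j <;> simp
    have hεε : (fun i => ε i * ε i) = 1 := by
      ext i; rcases hε i with h | h <;> simp [h]
    rw [hG, fromBlocks_multiply, diagonal_mul_diagonal, ← blockDiagonal_mul, hJ, hεε]
    simp only [Matrix.mul_zero, Matrix.zero_mul, add_zero, zero_add, diagonal_one']
    rw [show (fun _ : Fin c => (1 : Matrix (Fin 2) (Fin 2) ℝ)) = 1 from rfl, blockDiagonal_one,
      fromBlocks_one]
  have hAT : A * T = T * fromBlocks (diagonal lam) 0 0
            (blockDiagonal fun j : Fin c => !![σ j, τ j; -τ j, σ j]) := by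
    ext r j
    have hl : (A * T) r j = (toLin' A (F j)) r := by
      rw [hT]; rfl
    rw [hl, mul_apply, Fintype.sum_sum_type, Fintype.sum_prod_type, Fin.sum_univ_two, hT, hF]
    rcases j with j | ⟨j, j'⟩
    · simp [-toLin'_apply, hfe, diagonal_apply, mul_comm]
    · fin_cases j
      · simp [-toLin'_apply, hfu, blockDiagonal_apply]; ring
      · simp [-toLin'_apply, hfv, blockDiagonal_apply]; ring
  have hleft : (G * Tᵀ * S) * T = 1 := by
    rw [Matrix.mul_assoc, Matrix.mul_assoc, ← Matrix.mul_assoc Tᵀ, hTST, hGG]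
  have hright : T * (G * Tᵀ * S) = 1 := by
    refine (mul_eq_one_comm_of_card_eq _ _ _ ?_).1 hleft
    simp; omega
  refine ⟨k, c, hkc, T, G * Tᵀ * S, ε, lam, σ, τ, hright, hleft, hε, hτ, hTST.trans hG, ?_⟩
  rw [Matrix.mul_assoc _ A T, hAT, ← Matrix.mul_assoc, hleft, Matrix.one_mul]
end

section
/- Eigenvector characterization of the sign characteristics: Let S ∈ ℝ^{n×n} be symmetric and invertible, let A ∈ ℝ^{n×n} satisfy AᵀS = SA with complexification diagonalizable over ℂ, and suppose T ∈ GL_n(ℝ) realizes the canonical form Tᵀ S T = diag(ε₁, …, ε_k, J_c) and T⁻¹ A T = diag(λ₁, …, λ_k, P_{σ₁,τ₁}, …, P_{σ_c,τ_c}) with ε_i ∈ {−1,1}, λ_i, σ_j ∈ ℝ, τ_j > 0. Then for a real number λ: there exists an index i with ε_i = 1 and λ_i = λ if and only if there exists v ∈ ℝ^n, v ≠ 0, with A v = λ v and vᵀ S v > 0; and likewise there exists i with ε_i = −1 and λ_i = λ if and only if there exists v ∈ ℝ^n, v ≠ 0, with A v = λ v and vᵀ S v < 0. -/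
/-!
In the coordinates `w = T⁻¹ v` the equation `A v = μ v` decouples into the blocks of the canonical
form. A block `P_{σ,τ}` with `τ ≠ 0` has no real eigenvalue, so the corresponding coordinates of
`w` vanish, while `w i ≠ 0` for a scalar block forces `λ i = μ` (`eigenvector_canonical`).
Hence `vᵀ S v = ∑ i, ε i * (w i)²`, the sum being supported on the indices with `λ i = μ`. If it is
positive (negative), some term is, which gives an index with `ε i = 1` (`ε i = -1`).
Conversely the column `T e_i` is an eigenvector at `λ i` whose quadratic value is `ε i`.
-/

open Matrix

/-- Canonical form of the symmetric form `S`. -/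
def canonicalForm {k c : ℕ} (ε : Fin k → ℝ) :
    Matrix (Fin k ⊕ (Fin 2 × Fin c)) (Fin k ⊕ (Fin 2 × Fin c)) ℝ :=
  fromBlocks (diagonal ε) 0 0 (blockDiagonal fun _ : Fin c => !![(0:ℝ), 1; 1, 0])

/-- Canonical form of the `S`-self-adjoint matrix `A`. -/
def canonicalOperator {k c : ℕ} (lam : Fin k → ℝ) (σ τ : Fin c → ℝ) :
    Matrix (Fin k ⊕ (Fin 2 × Fin c)) (Fin k ⊕ (Fin 2 × Fin c)) ℝ :=
  fromBlocks (diagonal lam) 0 0 (blockDiagonal fun j : Fin c => !![σ j, τ j; -τ j, σ j])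

lemma canonicalOperator_mulVec_inl {k c : ℕ} (lam : Fin k → ℝ) (σ τ : Fin c → ℝ)
    (w : Fin k ⊕ (Fin 2 × Fin c) → ℝ) (i : Fin k) :
    (canonicalOperator lam σ τ *ᵥ w) (Sum.inl i) = lam i * w (Sum.inl i) := by
  simp [canonicalOperator, mulVec, dotProduct, diagonal_apply]

lemma canonicalOperator_mulVec_inr {k c : ℕ} (lam : Fin k → ℝ) (σ τ : Fin c → ℝ)
    (w : Fin k ⊕ (Fin 2 × Fin c) → ℝ) (a : Fin 2) (j : Fin c) :
    (canonicalOperator lam σ τ *ᵥ w) (Sum.inr (a, j)) =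
      !![σ j, τ j; -τ j, σ j] a 0 * w (Sum.inr (0, j)) +
      !![σ j, τ j; -τ j, σ j] a 1 * w (Sum.inr (1, j)) := by
  simp [canonicalOperator, mulVec, dotProduct, blockDiagonal_apply, Fintype.sum_prod_type,
    Fin.sum_univ_two]

/-- Real eigenvectors of the canonical operator are supported on the scalar blocks
carrying the eigenvalue. -/
lemma eigenvector_canonical {k c : ℕ} {lam : Fin k → ℝ} {σ τ : Fin c → ℝ} (hτ : ∀ j, 0 < τ j)
    {μ : ℝ} {w : Fin k ⊕ (Fin 2 × Fin c) → ℝ} (h : canonicalOperator lam σ τ *ᵥ w = μ • w) :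
    (∀ i, w (Sum.inl i) ≠ 0 → lam i = μ) ∧ ∀ p, w (Sum.inr p) = 0 := by
  constructor
  · intro i hi
    have h1 := congrFun h (Sum.inl i)
    rw [canonicalOperator_mulVec_inl] at h1
    exact mul_right_cancel₀ hi (by simpa using h1)
  · have key : ∀ j, w (Sum.inr (0, j)) = 0 ∧ w (Sum.inr (1, j)) = 0 := by
      intro j
      have h0 := congrFun h (Sum.inr (0, j))
      have h1 := congrFun h (Sum.inr (1, j))
      rw [canonicalOperator_mulVec_inr] at h0 h1
      simp at h0 h1
      generalize w (Sum.inr (0, j)) = x at *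
      generalize w (Sum.inr (1, j)) = y at *
      -- Eliminating `μ - σ j` between the two rows leaves `τ j * (x² + y²) = 0`.
      have hs : τ j * (x ^ 2 + y ^ 2) = 0 := by linear_combination y * h0 - x * h1
      have hs' : x ^ 2 + y ^ 2 = 0 := (mul_eq_zero.mp hs).resolve_left (hτ j).ne'
      constructor <;> nlinarith [sq_nonneg x, sq_nonneg y]
    rintro ⟨a, j⟩
    fin_cases a
    · exact (key j).1
    · exact (key j).2

lemma canonicalForm_quadratic {k c : ℕ} (ε : Fin k → ℝ) (w : Fin k ⊕ (Fin 2 × Fin c) → ℝ)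
    (hw : ∀ p, w (Sum.inr p) = 0) :
    w ⬝ᵥ canonicalForm ε *ᵥ w = ∑ i, ε i * w (Sum.inl i) ^ 2 := by
  simp only [dotProduct, Fintype.sum_sum_type, hw, zero_mul, Finset.sum_const_zero, add_zero]
  refine Finset.sum_congr rfl fun i _ => ?_
  simp [canonicalForm, mulVec, dotProduct, diagonal_apply]
  ring

lemma quadratic_congr {n : ℕ} {m : Type*} [Fintype m] (S : Matrix (Fin n) (Fin n) ℝ)
    (T : Matrix (Fin n) m ℝ) (w : m → ℝ) :
    (T *ᵥ w) ⬝ᵥ S *ᵥ (T *ᵥ w) = w ⬝ᵥ (Tᵀ * S * T) *ᵥ w := by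
  rw [← mulVec_mulVec, ← mulVec_mulVec, dotProduct_mulVec w, vecMul_transpose]

/-- **Eigenvector characterization of the sign characteristics.** Given a transformation
`T` realizing the canonical form of the pair `(S, A)`, a real number `λ` occurs as an
eigenvalue of positive (negative) type precisely when there is a real eigenvector `v` of
`A` at `λ` with `vᵀ S v > 0` (`vᵀ S v < 0`). -/
theorem sign_characteristic_eigenvector_characterization {n k c : ℕ}
    (S A : Matrix (Fin n) (Fin n) ℝ)
    (hSsym : Sᵀ = S) (hSinv : IsUnit S)
    (hSA : Aᵀ * S = S * A)
    (hdiag : IsDiagonalizableOverC A)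
    (hn : 2 * c + k = n)
    (T : Matrix (Fin n) (Fin k ⊕ (Fin 2 × Fin c)) ℝ)
    (Tinv : Matrix (Fin k ⊕ (Fin 2 × Fin c)) (Fin n) ℝ)
    (ε lam : Fin k → ℝ) (σ τ : Fin c → ℝ)
    (hT : T * Tinv = 1) (hT' : Tinv * T = 1)
    (hε : ∀ i, ε i = 1 ∨ ε i = -1) (hτ : ∀ j, 0 < τ j)
    (hcanS : Tᵀ * S * T =
      fromBlocks (diagonal ε) 0 0
        (blockDiagonal fun _ : Fin c => !![(0:ℝ), 1; 1, 0]))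
    (hcanA : Tinv * A * T =
      fromBlocks (diagonal lam) 0 0
        (blockDiagonal fun j : Fin c => !![σ j, τ j; -τ j, σ j])) :
    ∀ lam₀ : ℝ,
      ((∃ i, ε i = 1 ∧ lam i = lam₀) ↔
        ∃ v : Fin n → ℝ, v ≠ 0 ∧ A.mulVec v = lam₀ • v ∧ 0 < v ⬝ᵥ S.mulVec v) ∧
      ((∃ i, ε i = -1 ∧ lam i = lam₀) ↔
        ∃ v : Fin n → ℝ, v ≠ 0 ∧ A.mulVec v = lam₀ • v ∧ v ⬝ᵥ S.mulVec v < 0) := by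
  intro lam₀
  change _ = canonicalForm ε at hcanS
  change _ = canonicalOperator lam σ τ at hcanA
  have hAT : A * T = T * canonicalOperator lam σ τ := by
    rw [← hcanA, ← Matrix.mul_assoc, ← Matrix.mul_assoc, hT, Matrix.one_mul]
  have hcol : ∀ i, ∃ v : Fin n → ℝ, v ≠ 0 ∧ A *ᵥ v = lam i • v ∧ v ⬝ᵥ S *ᵥ v = ε i := by
    intro i
    have hq : (T *ᵥ Pi.single (Sum.inl i) 1) ⬝ᵥ S *ᵥ (T *ᵥ Pi.single (Sum.inl i) 1) = ε i := by
      rw [quadratic_congr, hcanS, canonicalForm_quadratic _ _ (by simp)]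
      simp [Pi.single_apply]
    refine ⟨T *ᵥ Pi.single (Sum.inl i) 1, ?_, ?_, hq⟩
    · intro h0
      rw [h0] at hq
      rcases hε i with h | h <;> simp [h] at hq
    · rw [mulVec_mulVec, hAT, ← mulVec_mulVec, ← mulVec_smul]
      congr 1
      ext (i' | ⟨a, j⟩)
      · rw [canonicalOperator_mulVec_inl]
        by_cases h : i' = i
        · simp [h]
        · simp [h]
      · rw [canonicalOperator_mulVec_inr]
        simp
  have heig : ∀ v : Fin n → ℝ, A *ᵥ v = lam₀ • v → ∃ x : Fin k → ℝ,
      (∀ i, x i ≠ 0 → lam i = lam₀) ∧ v ⬝ᵥ S *ᵥ v = ∑ i, ε i * x i ^ 2 := by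
    intro v hv
    have hTv : T *ᵥ (Tinv *ᵥ v) = v := by rw [mulVec_mulVec, hT, one_mulVec]
    have hw : canonicalOperator lam σ τ *ᵥ (Tinv *ᵥ v) = lam₀ • (Tinv *ᵥ v) := by
      rw [← hcanA, ← mulVec_mulVec, hTv, ← mulVec_mulVec, hv, mulVec_smul]
    obtain ⟨h1, h2⟩ := eigenvector_canonical hτ hw
    refine ⟨fun i => (Tinv *ᵥ v) (Sum.inl i), h1, ?_⟩
    rw [← canonicalForm_quadratic ε _ h2, ← hcanS, ← quadratic_congr, hTv]
  refine ⟨⟨?_, ?_⟩, ⟨?_, ?_⟩⟩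
  · rintro ⟨i, hi, rfl⟩
    obtain ⟨v, hv, hA, hq⟩ := hcol i
    exact ⟨v, hv, hA, by rw [hq, hi]; norm_num⟩
  · rintro ⟨v, -, hA, hq⟩
    obtain ⟨x, hx, hS⟩ := heig v hA
    rw [hS] at hq
    obtain ⟨i, -, hi⟩ := Finset.exists_lt_of_sum_lt (s := Finset.univ) (f := fun _ => (0 : ℝ))
      (by simpa using hq)
    refine ⟨i, (hε i).resolve_right fun h => ?_, hx i fun h => ?_⟩
    · rw [h] at hi
      nlinarith [sq_nonneg (x i)]
    · simp [h] at hi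
  · rintro ⟨i, hi, rfl⟩
    obtain ⟨v, hv, hA, hq⟩ := hcol i
    exact ⟨v, hv, hA, by rw [hq, hi]; norm_num⟩
  · rintro ⟨v, -, hA, hq⟩
    obtain ⟨x, hx, hS⟩ := heig v hA
    rw [hS] at hq
    obtain ⟨i, -, hi⟩ := Finset.exists_lt_of_sum_lt (s := Finset.univ) (g := fun _ => (0 : ℝ))
      (by simpa using hq)
    refine ⟨i, (hε i).resolve_left fun h => ?_, hx i fun h => ?_⟩
    · rw [h] at hi
      nlinarith [sq_nonneg (x i)]
    · simp [h] at hi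
end

section
/- Hurwitz property of the structured block matrix: Let G ∈ ℝ^{n×n} be invertible and D ∈ ℝ^{n×n} symmetric positive semidefinite, and suppose that for every μ ∈ ℝ and every v ∈ ℂ^n with v ≠ 0 and G Gᵀ v = μ v one has D v ≠ 0 (no eigenvector of GGᵀ lies in the kernel of D). Then every eigenvalue λ ∈ ℂ of the block matrix [[0, Gᵀ],[−G, −D]] ∈ ℝ^{2n×2n} satisfies Re λ < 0. -/
open Matrix

/-!
Write an eigenvector as `(x, y)`, so that `Gᵀ y = λ x` and `-G x - D y = λ y`. Pairing with
`(x, y)` makes the skew part `(Gᵀ, -G)` contribute a purely imaginary number, hence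
`Re λ (|x|² + |y|²) = -y* D y ≤ 0`. If `Re λ ≥ 0`, then both sides vanish: `Re λ = 0` and `D y = 0`.
Eliminating `x` gives `G Gᵀ y = -λ² y` with `-λ²` real, and `y ≠ 0` because `G` is injective;
this is the eigenvector in the kernel of `D` that the hypothesis forbids.
-/

section ComplexOrdered

open scoped ComplexOrder

/-- A real positive semidefinite matrix stays so over `ℂ`: it is a Gram matrix `Bᴴ B`. -/
lemma posSemidef_map_ofReal_s12 {n : ℕ} {D : Matrix (Fin n) (Fin n) ℝ} (hD : D.PosSemidef) :
    (D.map Complex.ofReal).PosSemidef := by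
  obtain ⟨B, rfl⟩ : ∃ B : Matrix (Fin n) (Fin n) ℝ, D = Bᴴ * B := by
    open scoped MatrixOrder in
    exact CStarAlgebra.nonneg_iff_eq_star_mul_self.mp hD.nonneg
  have h : (Bᴴ * B).map Complex.ofReal = (B.map Complex.ofReal)ᴴ * B.map Complex.ofReal := by
    ext i j
    simp [Matrix.mul_apply]
  rw [h]
  exact posSemidef_conjTranspose_mul_self _

/-- The energy identity `Re λ (|x|² + |y|²) = -Re (y* E y)`. -/
lemma energy_identity {n : ℕ} (C E : Matrix (Fin n) (Fin n) ℂ) (x y : Fin n → ℂ) (lam : ℂ)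
    (h1 : Cᴴ *ᵥ y = lam • x) (h2 : -(C *ᵥ x) - E *ᵥ y = lam • y) :
    lam.re * ((star x ⬝ᵥ x).re + (star y ⬝ᵥ y).re) = -(star y ⬝ᵥ E *ᵥ y).re := by
  have him : ∀ z : Fin n → ℂ, (star z ⬝ᵥ z).im = 0 := fun z =>
    (Complex.nonneg_iff.mp (dotProduct_star_self_nonneg z)).2.symm
  have e1 : star x ⬝ᵥ Cᴴ *ᵥ y = lam * (star x ⬝ᵥ x) := by
    rw [h1, dotProduct_smul, smul_eq_mul]
  have e2 : -(star y ⬝ᵥ C *ᵥ x) - star y ⬝ᵥ E *ᵥ y = lam * (star y ⬝ᵥ y) := by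
    rw [← smul_eq_mul, ← dotProduct_smul, ← h2, dotProduct_sub, dotProduct_neg]
  have e3 : star x ⬝ᵥ Cᴴ *ᵥ y = star (star y ⬝ᵥ C *ᵥ x) := by
    rw [star_dotProduct, star_mulVec, conjTranspose_conjTranspose, dotProduct_mulVec]
  rw [e3] at e1
  have r1 := congrArg Complex.re e1
  have r2 := congrArg Complex.re e2
  simp [him] at r1 r2
  linarith

/-- An eigenvalue with nonnegative real part is purely imaginary, and its eigenvector `(x, y)`
has a nonzero second component that lies in the kernel of `E`. -/
lemma undamped_of_re_nonneg {n : ℕ} {C E : Matrix (Fin n) (Fin n) ℂ} {x y : Fin n → ℂ} {lam : ℂ}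
    (hCinj : Function.Injective C.mulVec) (hEpsd : E.PosSemidef) (hv : Sum.elim x y ≠ 0)
    (h1 : Cᴴ *ᵥ y = lam • x) (h2 : -(C *ᵥ x) - E *ᵥ y = lam • y) (hlam : 0 ≤ lam.re) :
    lam.re = 0 ∧ E *ᵥ y = 0 ∧ y ≠ 0 := by
  have hen := energy_identity C E x y lam h1 h2
  have hq : 0 ≤ (star y ⬝ᵥ E *ᵥ y).re ∧ 0 = (star y ⬝ᵥ E *ᵥ y).im :=
    Complex.nonneg_iff.mp (hEpsd.dotProduct_mulVec_nonneg y)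
  have hx0 := Complex.nonneg_iff.mp (dotProduct_star_self_nonneg x)
  have hy0 := Complex.nonneg_iff.mp (dotProduct_star_self_nonneg y)
  have hprod := mul_nonneg hlam (add_nonneg hx0.1 hy0.1)
  have hDy : E *ᵥ y = 0 := by
    rw [← hEpsd.dotProduct_mulVec_zero_iff]
    apply Complex.ext
    · simp only [Complex.zero_re]
      linarith
    · exact hq.2.symm
  have hy : y ≠ 0 := by
    rintro rfl
    have hCx : C *ᵥ x = C *ᵥ 0 := by simpa using h2
    apply hv
    rw [hCinj hCx]
    funext i
    cases i <;> rfl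
  have hypos : 0 < (star y ⬝ᵥ y).re := by
    refine lt_of_le_of_ne hy0.1 fun h => hy ?_
    exact dotProduct_star_self_eq_zero.mp (Complex.ext h.symm hy0.2.symm)
  have hre : lam.re = 0 := by
    have h0 : lam.re * ((star x ⬝ᵥ x).re + (star y ⬝ᵥ y).re) = 0 := by linarith
    exact (mul_eq_zero.mp h0).resolve_right (by linarith [hx0.1])
  exact ⟨hre, hDy, hy⟩

end ComplexOrdered

/-- **Hurwitz property of the structured block matrix.** If `G` is invertible, `D` is
symmetric positive semidefinite, and no eigenvector of `GGᵀ` lies in the kernel of `D`,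
then every eigenvalue of `[[0, Gᵀ],[−G, −D]]` has negative real part. -/
theorem structured_block_matrix_hurwitz {n : ℕ}
    (G D : Matrix (Fin n) (Fin n) ℝ)
    (hG : IsUnit G) (hDsym : Dᵀ = D) (hD : D.PosSemidef)
    (hker : ∀ (μ : ℝ) (v : Fin n → ℂ), v ≠ 0 →
      ((G * Gᵀ).map Complex.ofReal).mulVec v = (μ : ℂ) • v →
      (D.map Complex.ofReal).mulVec v ≠ 0) :
    ∀ lam : ℂ,
      (∃ v : Fin n ⊕ Fin n → ℂ, v ≠ 0 ∧
        ((fromBlocks 0 Gᵀ (-G) (-D)).map Complex.ofReal).mulVec v = lam • v) →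
      lam.re < 0 := by
  rintro lam ⟨v, hv, hev⟩
  obtain ⟨x, y, rfl⟩ : ∃ x y : Fin n → ℂ, v = Sum.elim x y :=
    ⟨v ∘ Sum.inl, v ∘ Sum.inr, (Sum.elim_comp_inl_inr v).symm⟩
  set C := G.map Complex.ofReal with hC
  set E := D.map Complex.ofReal with hE
  have hCH : Gᵀ.map Complex.ofReal = Cᴴ := by ext i j; simp [hC]
  have hnegG : (-G).map Complex.ofReal = -C := by ext i j; simp [hC]
  have hnegD : (-D).map Complex.ofReal = -E := by ext i j; simp [hE]
  have hzero : (0 : Matrix (Fin n) (Fin n) ℝ).map Complex.ofReal = 0 := by ext i j; simp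
  have hGG : (G * Gᵀ).map Complex.ofReal = C * Cᴴ := by
    ext i j; simp [hC, Matrix.mul_apply]
  rw [fromBlocks_map, hCH, hnegG, hnegD, hzero, fromBlocks_mulVec] at hev
  have h1 : Cᴴ *ᵥ y = lam • x := by
    funext i
    simpa using congrFun hev (Sum.inl i)
  have h2 : -(C *ᵥ x) - E *ᵥ y = lam • y := by
    funext i
    simpa [neg_mulVec, sub_eq_add_neg] using congrFun hev (Sum.inr i)
  have hCinj : Function.Injective C.mulVec := by
    apply mulVec_injective_of_isUnit
    exact hG.map (Complex.ofRealHom.mapMatrix)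
  by_contra hlam
  push Not at hlam
  obtain ⟨hre, hDy, hy⟩ :=
    undamped_of_re_nonneg hCinj (posSemidef_map_ofReal_s12 hD) hv h1 h2 hlam
  -- For purely imaginary `λ` the number `-λ²` equals `(Im λ)²`.
  refine hker (lam.im ^ 2) y hy ?_ hDy
  have hsq : ((lam.im ^ 2 : ℝ) : ℂ) = -(lam * lam) := by
    apply Complex.ext <;> simp [hre, pow_two]
  have hCx : C *ᵥ x = -(lam • y) := by
    rw [← h2, hDy]; simp
  rw [hGG, ← mulVec_mulVec, h1, mulVec_smul, hCx, hsq, smul_neg, smul_smul, neg_smul]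
end

section
/- Resolvent characterization of standard triples: Let M, D, K ∈ ℝ^{n×n} with M invertible and set L(s) := s²M + sD + K. Let X ∈ ℝ^{n×2n}, Z ∈ ℝ^{2n×2n}, Y ∈ ℝ^{2n×n}. Then (X,Z,Y) is a standard triple generating L(s) if and only if for every s ∈ ℝ such that sI_{2n} − Z is invertible, the matrix L(s) is invertible and L(s)⁻¹ = X (sI_{2n} − Z)⁻¹ Y. Moreover, in this case, if K is invertible then Z is invertible and K⁻¹ = −X Z⁻¹ Y. -/
/-!
Write `R = (s - Z)⁻¹`, so that `Z R = s R - 1`, and `W = M X Z² + D X Z + K X`. Iterating the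
identity for `Z R` gives, for every `s` outside the spectrum of `Z`,
`W R = L(s) X R - s M X - M X Z - D X` (`quad_mul_resolvent`).

If `(X, Z, Y)` is a standard triple generating `L`, then `W = 0`, `X Y = 0` and `X Z Y = M⁻¹`;
multiplying by `Y` on the right leaves `L(s) X R Y = 1`.

Conversely, suppose `L(s) X R Y = 1` off the spectrum. Since `R → 0` and `s⁻² L(s) → M` as `s → ∞`,
the expansions `s X R Y = X Y + X Z R Y` and `s² X R Y = s X Y + X Z Y + X Z² R Y` force
`X Y = 0` and then `M X Z Y = 1`. The identity above becomes `W R Y = 0`, whose expansion at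
infinity gives `W Y = 0` and `W Z Y = 0`. Finally `[X; XZ] [Y, ZY]` is block anti-triangular
with blocks `M⁻¹` on the antidiagonal, so both factors are invertible, and `W = 0` follows.

For the last claim, `K X = -(M X Z + D X) Z` shows that `[X; XZ]` is a left multiple of `Z`, hence `Z`
is invertible, and `s = 0` can be put into the resolvent formula.
-/

open Matrix

/-- `(X, Z, Y)` is a standard triple: the stacked matrix `[X; XZ]` is invertible and
`[X; XZ] · Y = [0; M₀⁻¹]` for some invertible `M₀`. -/
def IsStdTriple {n : ℕ}
    (X : Matrix (Fin n) (Fin n ⊕ Fin n) ℝ)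
    (Z : Matrix (Fin n ⊕ Fin n) (Fin n ⊕ Fin n) ℝ)
    (Y : Matrix (Fin n ⊕ Fin n) (Fin n) ℝ) : Prop :=
  IsUnit (fromRows X (X * Z)) ∧
    ∃ M₀ : Matrix (Fin n) (Fin n) ℝ, IsUnit M₀ ∧
      fromRows X (X * Z) * Y = fromRows 0 M₀⁻¹

/-- The standard triple `(X, Z, Y)` generates the quadratic matrix polynomial
`L(s) = s²M + sD + K`: `M = (XZY)⁻¹` and `M X Z² + D X Z + K X = 0`. -/
def GeneratesQuadPoly {n : ℕ}
    (M D K : Matrix (Fin n) (Fin n) ℝ)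
    (X : Matrix (Fin n) (Fin n ⊕ Fin n) ℝ)
    (Z : Matrix (Fin n ⊕ Fin n) (Fin n ⊕ Fin n) ℝ)
    (Y : Matrix (Fin n ⊕ Fin n) (Fin n) ℝ) : Prop :=
  M = (X * Z * Y)⁻¹ ∧ M * X * (Z * Z) + D * X * Z + K * X = 0

open Filter Topology

lemma tendsto_one_sub_inv_smul {m : Type*} [DecidableEq m] (Z : Matrix m m ℝ) :
    Tendsto (fun s : ℝ => 1 - s⁻¹ • Z) atTop (𝓝 (1 : Matrix m m ℝ)) := by
  simpa using tendsto_const_nhds.sub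
    ((tendsto_inv_atTop_zero (𝕜 := ℝ)).smul_const Z)

lemma tendsto_inv_sq_smul_quad {n : Type*} (M D K : Matrix n n ℝ) :
    Tendsto (fun s : ℝ => (s⁻¹ * s⁻¹) • (s ^ 2 • M + s • D + K)) atTop (𝓝 M) := by
  have hi := tendsto_inv_atTop_zero (𝕜 := ℝ)
  have h := ((tendsto_const_nhds (x := M)).add (hi.smul_const D)).add
    ((hi.mul hi).smul_const K)
  simp only [mul_zero, zero_smul, add_zero] at h
  refine h.congr' ?_
  filter_upwards [eventually_gt_atTop 0] with s hs
  have h1 : s⁻¹ * s⁻¹ * s ^ 2 = 1 := by field_simp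
  have h2 : s⁻¹ * s⁻¹ * s = s⁻¹ := by field_simp
  simp only [smul_add, smul_smul, h1, h2, one_smul]

section Resolvent

variable {m n : Type*} [Fintype m] [DecidableEq m] [Fintype n]

lemma mul_resolvent (Z : Matrix m m ℝ) {s : ℝ} (hs : IsUnit (s • (1 : Matrix m m ℝ) - Z)) :
    Z * (s • (1 : Matrix m m ℝ) - Z)⁻¹ = s • (s • (1 : Matrix m m ℝ) - Z)⁻¹ - 1 := by
  have h := Matrix.mul_nonsing_inv _ ((Matrix.isUnit_iff_isUnit_det _).1 hs)
  rw [Matrix.sub_mul, Matrix.smul_mul, Matrix.one_mul] at h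
  rw [eq_sub_iff_add_eq, add_comm, ← eq_sub_iff_add_eq]
  exact h.symm

lemma mul_mul_resolvent {p : Type*} (A : Matrix p m ℝ) (Z : Matrix m m ℝ) {s : ℝ}
    (hs : IsUnit (s • (1 : Matrix m m ℝ) - Z)) :
    A * Z * (s • (1 : Matrix m m ℝ) - Z)⁻¹ = s • (A * (s • (1 : Matrix m m ℝ) - Z)⁻¹) - A := by
  rw [Matrix.mul_assoc, mul_resolvent Z hs, Matrix.mul_sub, Matrix.mul_smul, Matrix.mul_one]

/-- Right division of `M X Z² + D X Z + K X` by `s - Z`, with the remainder `L(s) X`. -/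
lemma quad_mul_resolvent (M D K : Matrix n n ℝ) (X : Matrix n m ℝ) (Z : Matrix m m ℝ) {s : ℝ}
    (hs : IsUnit (s • (1 : Matrix m m ℝ) - Z)) :
    (M * X * (Z * Z) + D * X * Z + K * X) * (s • (1 : Matrix m m ℝ) - Z)⁻¹ =
      (s ^ 2 • M + s • D + K) * (X * (s • (1 : Matrix m m ℝ) - Z)⁻¹)
        - s • (M * X) - M * X * Z - D * X := by
  rw [Matrix.add_mul, Matrix.add_mul, ← Matrix.mul_assoc (M * X) Z Z,
    mul_mul_resolvent _ _ hs, mul_mul_resolvent _ _ hs, mul_mul_resolvent _ _ hs]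
  simp only [Matrix.add_mul, Matrix.smul_mul, Matrix.mul_assoc, smul_sub, smul_smul, pow_two]
  abel

lemma eventually_isUnit_smul_one_sub (Z : Matrix m m ℝ) :
    ∀ᶠ s : ℝ in atTop, IsUnit (s • (1 : Matrix m m ℝ) - Z) := by
  have hdet : Tendsto (fun s : ℝ => (1 - s⁻¹ • Z).det) atTop (𝓝 1) := by
    have := ((continuous_id (X := Matrix m m ℝ)).matrix_det.tendsto 1).comp
      (tendsto_one_sub_inv_smul Z)
    simpa [Function.comp_def] using this
  filter_upwards [hdet.eventually_ne one_ne_zero, eventually_gt_atTop 0] with s hs hs0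
  have e : s • (1 : Matrix m m ℝ) - Z = s • (1 - s⁻¹ • Z) := by
    rw [smul_sub, smul_smul, mul_inv_cancel₀ hs0.ne', one_smul]
  rw [Matrix.isUnit_iff_isUnit_det, e, Matrix.det_smul, isUnit_iff_ne_zero]
  exact mul_ne_zero (pow_ne_zero _ hs0.ne') hs

lemma tendsto_resolvent (Z : Matrix m m ℝ) :
    Tendsto (fun s : ℝ => (s • (1 : Matrix m m ℝ) - Z)⁻¹) atTop (𝓝 0) := by
  have hc : ContinuousAt (fun A : Matrix m m ℝ => A⁻¹) 1 := by
    apply continuousAt_matrix_inv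
    simp
  have h1 : Tendsto (fun s : ℝ => (1 - s⁻¹ • Z)⁻¹) atTop (𝓝 (1 : Matrix m m ℝ)) := by
    have := hc.tendsto.comp (tendsto_one_sub_inv_smul Z)
    simpa [Function.comp_def] using this
  have h2 := (tendsto_inv_atTop_zero (𝕜 := ℝ)).smul h1
  rw [zero_smul] at h2
  refine h2.congr' ?_
  filter_upwards [eventually_isUnit_smul_one_sub Z, eventually_gt_atTop 0] with s hs hs0
  have e : 1 - s⁻¹ • Z = s⁻¹ • (s • (1 : Matrix m m ℝ) - Z) := by
    rw [smul_sub, smul_smul, inv_mul_cancel₀ hs0.ne', one_smul]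
  symm
  apply Matrix.inv_eq_right_inv
  have hu : IsUnit (1 - s⁻¹ • Z).det := by
    rw [e, Matrix.det_smul]
    exact ((isUnit_iff_ne_zero.2 (inv_ne_zero hs0.ne')).pow _).mul
      ((Matrix.isUnit_iff_isUnit_det _).1 hs)
  rw [Matrix.mul_smul, ← Matrix.smul_mul, ← e, Matrix.mul_nonsing_inv _ hu]

lemma tendsto_mul_resolvent_mul {p q : Type*} (A : Matrix p m ℝ) (Z : Matrix m m ℝ)
    (B : Matrix m q ℝ) :
    Tendsto (fun s : ℝ => A * (s • (1 : Matrix m m ℝ) - Z)⁻¹ * B) atTop (𝓝 0) := by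
  have hc : Continuous (fun T : Matrix m m ℝ => A * T * B) :=
    (continuous_const.matrix_mul continuous_id).matrix_mul continuous_const
  simpa [Function.comp_def] using (hc.tendsto 0).comp (tendsto_resolvent Z)

/-- The leading coefficient at infinity of `A (s - Z)⁻¹ B` is `A B`. -/
lemma tendsto_smul_mul_resolvent_mul {p q : Type*} (A : Matrix p m ℝ) (Z : Matrix m m ℝ)
    (B : Matrix m q ℝ) :
    Tendsto (fun s : ℝ => s • (A * (s • (1 : Matrix m m ℝ) - Z)⁻¹ * B)) atTop (𝓝 (A * B)) := by
  have h := (tendsto_mul_resolvent_mul (A * Z) Z B).add_const (A * B)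
  rw [zero_add] at h
  refine h.congr' ?_
  filter_upwards [eventually_isUnit_smul_one_sub Z] with s hs
  rw [mul_mul_resolvent _ _ hs, Matrix.sub_mul, Matrix.smul_mul, sub_add_cancel]

lemma mul_eq_zero_of_eventually_resolvent {p q : Type*} (A : Matrix p m ℝ) (Z : Matrix m m ℝ)
    (B : Matrix m q ℝ)
    (h : ∀ᶠ s : ℝ in atTop, A * (s • (1 : Matrix m m ℝ) - Z)⁻¹ * B = 0) : A * B = 0 := by
  refine tendsto_nhds_unique (tendsto_smul_mul_resolvent_mul A Z B)
    ((tendsto_const_nhds (x := (0 : Matrix p q ℝ))).congr' ?_)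
  filter_upwards [h] with s hs
  rw [hs, smul_zero]

end Resolvent

section Triples

variable {n : ℕ} {M D K : Matrix (Fin n) (Fin n) ℝ} {X : Matrix (Fin n) (Fin n ⊕ Fin n) ℝ}
  {Z : Matrix (Fin n ⊕ Fin n) (Fin n ⊕ Fin n) ℝ} {Y : Matrix (Fin n ⊕ Fin n) (Fin n) ℝ}

/-- The easy direction, written as a right inverse of `L(s)`. -/
lemma quad_mul_resolvent_eq_one (hM : IsUnit M) (hT : IsStdTriple X Z Y)
    (hG : GeneratesQuadPoly M D K X Z Y) {s : ℝ}
    (hs : IsUnit (s • (1 : Matrix (Fin n ⊕ Fin n) (Fin n ⊕ Fin n) ℝ) - Z)) :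
    (s ^ 2 • M + s • D + K) *
      (X * (s • (1 : Matrix (Fin n ⊕ Fin n) (Fin n ⊕ Fin n) ℝ) - Z)⁻¹ * Y) = 1 := by
  obtain ⟨-, M₀, -, hY⟩ := hT
  obtain ⟨hMe, hW⟩ := hG
  rw [fromRows_mul, fromRows_inj.eq_iff] at hY
  have hXY : X * Y = 0 := hY.1
  have hMX : M * (X * Z * Y) = 1 := by
    have hu : IsUnit (X * Z * Y) := by
      rw [← Matrix.isUnit_nonsing_inv_iff, ← hMe]; exact hM
    rw [hMe, Matrix.nonsing_inv_mul _ ((Matrix.isUnit_iff_isUnit_det _).1 hu)]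
  have h := congrArg (· * Y) (quad_mul_resolvent M D K X Z hs)
  rw [hW] at h
  simp only [Matrix.zero_mul, Matrix.sub_mul, Matrix.smul_mul, Matrix.mul_assoc, hXY,
    Matrix.mul_zero, smul_zero, sub_zero] at h
  simp only [Matrix.mul_assoc] at hMX ⊢
  rw [hMX] at h
  exact (sub_eq_zero.1 h.symm)

lemma isUnit_of_isUnit_const (hT : IsStdTriple X Z Y)
    (hG : GeneratesQuadPoly M D K X Z Y) (hK : IsUnit K) : IsUnit Z := by
  have hKX : X = -(K⁻¹ * (M * X * Z + D * X)) * Z := by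
    have hW := hG.2
    have h : K * X = -((M * X * Z + D * X) * Z) := by
      rw [eq_neg_iff_add_eq_zero, ← hW, Matrix.add_mul, Matrix.mul_assoc (M * X) Z Z, add_comm]
    rw [Matrix.neg_mul, Matrix.mul_assoc, ← Matrix.mul_neg, ← h,
      Matrix.nonsing_inv_mul_cancel_left _ _ ((Matrix.isUnit_iff_isUnit_det _).1 hK)]
  have hV : fromRows X (X * Z) = fromRows (-(K⁻¹ * (M * X * Z + D * X))) X * Z := by
    rw [fromRows_mul, ← hKX]
  have hu := hT.1
  rw [hV, Matrix.isUnit_iff_isUnit_det, Matrix.det_mul] at hu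
  exact (Matrix.isUnit_iff_isUnit_det _).2 (isUnit_of_mul_isUnit_right hu)

/-- The moments `X Y = 0` and `X Z Y = M⁻¹`, read off from the behaviour of the resolvent at
infinity. -/
lemma moments_of_resolvent (hM : IsUnit M)
    (h : ∀ᶠ s : ℝ in atTop, (s ^ 2 • M + s • D + K) *
      (X * (s • (1 : Matrix (Fin n ⊕ Fin n) (Fin n ⊕ Fin n) ℝ) - Z)⁻¹ * Y) = 1) :
    X * Y = 0 ∧ M * (X * Z * Y) = 1 := by
  have hMd := (Matrix.isUnit_iff_isUnit_det _).1 hM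
  have hXY : X * Y = 0 := by
    have h1 := (tendsto_inv_sq_smul_quad M D K).mul (tendsto_smul_mul_resolvent_mul X Z Y)
    have h2 : Tendsto (fun s : ℝ => s⁻¹ • (1 : Matrix (Fin n) (Fin n) ℝ)) atTop (𝓝 0) := by
      simpa using (tendsto_inv_atTop_zero (𝕜 := ℝ)).smul_const (1 : Matrix (Fin n) (Fin n) ℝ)
    have h3 : M * (X * Y) = 0 := by
      refine tendsto_nhds_unique h1 (h2.congr' ?_)
      filter_upwards [h, eventually_gt_atTop 0] with s hs hs0
      rw [Matrix.smul_mul, Matrix.mul_smul, hs, smul_smul]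
      congr 1
      field_simp
    rw [← Matrix.nonsing_inv_mul_cancel_left M (X * Y) hMd, h3, Matrix.mul_zero]
  refine ⟨hXY, ?_⟩
  have h1 := (tendsto_inv_sq_smul_quad M D K).mul (tendsto_smul_mul_resolvent_mul (X * Z) Z Y)
  refine tendsto_nhds_unique h1
    ((tendsto_const_nhds (x := (1 : Matrix (Fin n) (Fin n) ℝ))).congr' ?_)
  filter_upwards [h, eventually_gt_atTop 0, eventually_isUnit_smul_one_sub Z] with s hs hs0 hsu
  -- As `X Y = 0`, the factor `s (X Z R Y)` equals `s² (X R Y)`.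
  rw [mul_mul_resolvent _ _ hsu, Matrix.sub_mul, hXY, sub_zero, Matrix.smul_mul (s : ℝ),
    Matrix.smul_mul, Matrix.mul_smul, Matrix.mul_smul, hs, smul_smul, smul_smul]
  have : s⁻¹ * s⁻¹ * (s * s) = 1 := by field_simp
  simp [← mul_assoc] at this ⊢
  rw [this, one_smul]

lemma quad_mul_eq_zero_of_resolvent (hXY : X * Y = 0) (hMX : M * (X * Z * Y) = 1)
    (h : ∀ᶠ s : ℝ in atTop, (s ^ 2 • M + s • D + K) *
      (X * (s • (1 : Matrix (Fin n ⊕ Fin n) (Fin n ⊕ Fin n) ℝ) - Z)⁻¹ * Y) = 1) :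
    (M * X * (Z * Z) + D * X * Z + K * X) * Y = 0 ∧
      (M * X * (Z * Z) + D * X * Z + K * X) * Z * Y = 0 := by
  have hR : ∀ᶠ s : ℝ in atTop, (M * X * (Z * Z) + D * X * Z + K * X) *
      (s • (1 : Matrix (Fin n ⊕ Fin n) (Fin n ⊕ Fin n) ℝ) - Z)⁻¹ * Y = 0 := by
    filter_upwards [h, eventually_isUnit_smul_one_sub Z] with s hs hsu
    rw [quad_mul_resolvent M D K X Z hsu]
    simp only [Matrix.sub_mul, Matrix.smul_mul]
    rw [Matrix.mul_assoc M X Y, Matrix.mul_assoc D X Y, hXY, Matrix.mul_assoc _ _ Y, hs,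
      Matrix.mul_assoc M X Z, Matrix.mul_assoc M _ Y, hMX]
    simp
  have h0 := mul_eq_zero_of_eventually_resolvent _ Z Y hR
  refine ⟨h0, mul_eq_zero_of_eventually_resolvent _ Z Y ?_⟩
  filter_upwards [hR, eventually_isUnit_smul_one_sub Z] with s hs hsu
  rw [mul_mul_resolvent _ _ hsu, Matrix.sub_mul, h0, Matrix.smul_mul, hs, smul_zero, sub_zero]

/-- The product `[X; XZ] [Y, ZY]` has blocks `0, M⁻¹, M⁻¹, X Z² Y`, hence is invertible. -/
lemma isUnit_fromRows_and_fromCols (hXY : X * Y = 0) (hMX : M * (X * Z * Y) = 1) :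
    IsUnit (fromRows X (X * Z)) ∧ IsUnit (fromCols Y (Z * Y)) := by
  have hu : IsUnit (fromRows X (X * Z) * fromCols Y (Z * Y)) := by
    have e : fromRows X (X * Z) * fromCols Y (Z * Y) =
        fromBlocks 0 (X * Z * Y) (X * Z * Y) (X * Z * (Z * Y)) := by
      rw [fromRows_mul_fromCols, hXY, Matrix.mul_assoc X Z Y]
    -- An explicit left inverse.
    have hl : fromBlocks (-(M * (X * Z * (Z * Y)) * M)) M M 0 *
        (fromRows X (X * Z) * fromCols Y (Z * Y)) = 1 := by
      rw [e, fromBlocks_multiply, ← fromBlocks_one]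
      have hc : M * (X * Z * (Z * Y)) * M * (X * Z * Y) = M * (X * Z * (Z * Y)) := by
        rw [Matrix.mul_assoc _ M, hMX, Matrix.mul_one]
      simp only [Matrix.neg_mul, hc, hMX, Matrix.mul_zero, Matrix.zero_mul, add_zero, zero_add,
        neg_add_cancel]
    exact (Matrix.isUnit_iff_isUnit_det _).2 (Matrix.isUnit_det_of_left_inverse hl)
  rw [Matrix.isUnit_iff_isUnit_det, Matrix.det_mul] at hu
  exact ⟨(Matrix.isUnit_iff_isUnit_det _).2 (isUnit_of_mul_isUnit_left hu),
    (Matrix.isUnit_iff_isUnit_det _).2 (isUnit_of_mul_isUnit_right hu)⟩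

lemma stdTriple_of_resolvent (hM : IsUnit M)
    (h : ∀ᶠ s : ℝ in atTop, (s ^ 2 • M + s • D + K) *
      (X * (s • (1 : Matrix (Fin n ⊕ Fin n) (Fin n ⊕ Fin n) ℝ) - Z)⁻¹ * Y) = 1) :
    IsStdTriple X Z Y ∧ GeneratesQuadPoly M D K X Z Y := by
  obtain ⟨hXY, hMX⟩ := moments_of_resolvent hM h
  obtain ⟨hW0, hW1⟩ := quad_mul_eq_zero_of_resolvent hXY hMX h
  obtain ⟨hV, hC⟩ := isUnit_fromRows_and_fromCols hXY hMX
  refine ⟨⟨hV, M, hM, ?_⟩, (Matrix.inv_eq_left_inv hMX).symm, ?_⟩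
  · rw [fromRows_mul, hXY, Matrix.inv_eq_right_inv hMX]
  · have hWC : (M * X * (Z * Z) + D * X * Z + K * X) * fromCols Y (Z * Y) = 0 := by
      rw [mul_fromCols, hW0, ← Matrix.mul_assoc, hW1, fromCols_zero]
    rw [← Matrix.mul_nonsing_inv_cancel_right (fromCols Y (Z * Y))
      (M * X * (Z * Z) + D * X * Z + K * X) ((Matrix.isUnit_iff_isUnit_det _).1 hC), hWC,
      Matrix.zero_mul]

end Triples

/-- **Resolvent characterization of standard triples.** -/
theorem std_triple_resolvent_characterization {n : ℕ}
    (M D K : Matrix (Fin n) (Fin n) ℝ) (hM : IsUnit M)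
    (X : Matrix (Fin n) (Fin n ⊕ Fin n) ℝ)
    (Z : Matrix (Fin n ⊕ Fin n) (Fin n ⊕ Fin n) ℝ)
    (Y : Matrix (Fin n ⊕ Fin n) (Fin n) ℝ) :
    ((IsStdTriple X Z Y ∧ GeneratesQuadPoly M D K X Z Y) ↔
      (∀ s : ℝ, IsUnit (s • (1 : Matrix (Fin n ⊕ Fin n) (Fin n ⊕ Fin n) ℝ) - Z) →
        IsUnit (s ^ 2 • M + s • D + K) ∧
        (s ^ 2 • M + s • D + K)⁻¹ =
          X * (s • (1 : Matrix (Fin n ⊕ Fin n) (Fin n ⊕ Fin n) ℝ) - Z)⁻¹ * Y)) ∧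
    (IsStdTriple X Z Y → GeneratesQuadPoly M D K X Z Y → IsUnit K →
      IsUnit Z ∧ K⁻¹ = -(X * Z⁻¹ * Y)) := by
  refine ⟨⟨?_, ?_⟩, ?_⟩
  · rintro ⟨hT, hG⟩ s hs
    have h := quad_mul_resolvent_eq_one hM hT hG hs
    exact ⟨(Matrix.isUnit_iff_isUnit_det _).2 (Matrix.isUnit_det_of_right_inverse h),
      Matrix.inv_eq_right_inv h⟩
  · intro h
    refine stdTriple_of_resolvent hM ?_
    filter_upwards [eventually_isUnit_smul_one_sub Z] with s hs
    obtain ⟨hu, he⟩ := h s hs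
    rw [← he, Matrix.mul_nonsing_inv _ ((Matrix.isUnit_iff_isUnit_det _).1 hu)]
  · intro hT hG hK
    have hZ := isUnit_of_isUnit_const hT hG hK
    refine ⟨hZ, ?_⟩
    have hs : IsUnit ((0 : ℝ) • (1 : Matrix (Fin n ⊕ Fin n) (Fin n ⊕ Fin n) ℝ) - Z) := by
      rw [zero_smul, zero_sub]; exact hZ.neg
    have h := quad_mul_resolvent_eq_one hM hT hG hs
    have hneg : (-Z)⁻¹ = -Z⁻¹ := by
      apply Matrix.inv_eq_right_inv
      rw [neg_mul_neg, Matrix.mul_nonsing_inv _ ((Matrix.isUnit_iff_isUnit_det _).1 hZ)]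
    rw [zero_smul ℝ (1 : Matrix (Fin n ⊕ Fin n) (Fin n ⊕ Fin n) ℝ), zero_sub, hneg] at h
    apply Matrix.inv_eq_right_inv
    simpa using h
end

section
/- Moment formulas for standard triples: Let (X,Z,Y) be a standard triple generating the quadratic matrix polynomial L(s) = s²M + sD + K with M, D, K ∈ ℝ^{n×n} and M invertible. Then, with the moments Γ_j := X Z^j Y, one has M = Γ₁⁻¹, D = −M Γ₂ M, and K = −M Γ₃ M + D Γ₁ D. -/
/-!
Multiplying the generating relation `M X Z² + D X Z + K X = 0` on the right by `Y` and by `Z Y`,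
and using `X Y = 0`, gives `M Γ₂ + D Γ₁ = 0` and `M Γ₃ + D Γ₂ + K Γ₁ = 0`. Right multiplication by
`M = Γ₁⁻¹` yields `D = -M Γ₂ M` and `K = -M Γ₃ M - D Γ₂ M`, and the formula for `D` turns
`-D Γ₂ M` into `D Γ₁ D`.
-/

open Matrix

/-- **Moment formulas for standard triples.** With `Γⱼ = X Zʲ Y` one has `M = Γ₁⁻¹`,
`D = −M Γ₂ M`, and `K = −M Γ₃ M + D Γ₁ D`. -/
theorem std_triple_moment_formulas {n : ℕ}
    (M D K : Matrix (Fin n) (Fin n) ℝ) (hM : IsUnit M)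
    (X : Matrix (Fin n) (Fin n ⊕ Fin n) ℝ)
    (Z : Matrix (Fin n ⊕ Fin n) (Fin n ⊕ Fin n) ℝ)
    (Y : Matrix (Fin n ⊕ Fin n) (Fin n) ℝ)
    (htriple : IsStdTriple X Z Y)
    (hgen : GeneratesQuadPoly M D K X Z Y) :
    M = (X * Z ^ 1 * Y)⁻¹ ∧
    D = -(M * (X * Z ^ 2 * Y) * M) ∧
    K = -(M * (X * Z ^ 3 * Y) * M) + D * (X * Z ^ 1 * Y) * D := by
  obtain ⟨-, M₀, -, hstack⟩ := htriple
  obtain ⟨hMΓ, hL⟩ := hgen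
  have hXY : X * Y = 0 := by
    rw [fromRows_mul] at hstack
    exact (fromRows_inj hstack).1
  -- The nonsingular inverse is `0` on singular matrices, so `Γ₁` is invertible because `M` is.
  have hΓM : X * Z * Y * M = 1 := by
    have hΓ : IsUnit (X * Z * Y) := by
      rw [hMΓ] at hM
      exact isUnit_nonsing_inv_iff.mp hM
    rw [hMΓ]
    exact mul_nonsing_inv _ ((isUnit_iff_isUnit_det _).mp hΓ)
  -- The generating relation multiplied on the right by `Y`; the `K` term vanishes as `X Y = 0`.
  have h2 : M * (X * Z ^ 2 * Y) + D * (X * Z * Y) = 0 := by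
    have h := congrArg (· * Y) hL
    simpa [Matrix.add_mul, Matrix.mul_assoc, pow_succ, hXY] using h
  -- The generating relation multiplied on the right by `Z Y`.
  have h3 : M * (X * Z ^ 3 * Y) + D * (X * Z ^ 2 * Y) + K * (X * Z * Y) = 0 := by
    have h := congrArg (· * (Z * Y)) hL
    simpa [Matrix.add_mul, Matrix.mul_assoc, pow_succ] using h
  rw [pow_one]
  generalize X * Z * Y = G1 at *
  generalize X * Z ^ 2 * Y = G2 at *
  generalize X * Z ^ 3 * Y = G3 at *
  have hD : D = -(M * G2 * M) := by
    have h : M * G2 * M + D * (G1 * M) = 0 := by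
      rw [← Matrix.mul_assoc, ← Matrix.add_mul, h2, Matrix.zero_mul]
    rw [hΓM, Matrix.mul_one] at h
    exact eq_neg_of_add_eq_zero_right h
  have hDGD : D * G1 * D = -(D * G2 * M) := by
    calc D * G1 * D = D * G1 * -(M * G2 * M) := by rw [← hD]
      _ = -(D * (G1 * M) * G2 * M) := by simp only [Matrix.mul_neg, Matrix.mul_assoc]
      _ = -(D * G2 * M) := by rw [hΓM, Matrix.mul_one]
  refine ⟨hMΓ, hD, ?_⟩
  have h : M * G3 * M + D * G2 * M + K * (G1 * M) = 0 := by
    rw [← Matrix.mul_assoc K, ← Matrix.add_mul, ← Matrix.add_mul, h3, Matrix.zero_mul]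
  rw [hΓM, Matrix.mul_one] at h
  rw [hDGD, ← neg_add]
  exact eq_neg_of_add_eq_zero_right h
end
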